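/- arXiv:1907.10563 — 2 statements merged into one kernel-verified Lean document; each statement's English description precedes it below -/
import Mathlib

section
/- Let 0 < p < ∞ and let ω be a radial weight. Then the following holds if and only if ω ∈ D = D̂ ∩ Ď: ω̃ is a weight and there exists a constant C ≥ 1 such that, for every analytic f on 𝔻 with Im f(0) = 0, the three quantities ‖f‖_{A^p_ω}^p, ∫_0^1 ( sup_{0<s<r} M_p^p(s, Re f) ) ω̃(r) dr, and ∫_0^1 ( sup_{0<s<r} M_p^p(s, Re f) ) ω(r) dr are pairwise comparable with constant C. -/
/-!
Sufficiency. For `ω ∈ D̂ ∩ Ď` all three quantities are comparable to the dyadic sum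
`S = ∑ₙ (sup_{s < 1 - 2⁻ⁿ} ∫ |Re f(s e^{iθ})|^p dθ) · ω̂(1 - 2⁻ⁿ)` (`discr`). The condition `D̂` allows
the dyadic index to be shifted, and `Ď` makes `ω̂` decay geometrically along the dyadic radii. The
Bergman norm is bounded by `S` by telescoping `f` along rays through the dyadic radii: each increment
is controlled by an area integral of `|Re f|^p` (`local_osc`), which needs a Hardy–Littlewood type
sub-mean-value inequality for `|Re f|^p` valid for every `p > 0` (`local_center`); the resulting
growth factor `lam ^ (N - n)` is absorbed by the decay of `ω̂` (`geometric_absorb`). The lower bounds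
come from `TailData.lower` together with the monotonicity of the circle means of `|f|^p`.
These estimates are made in `[0, ∞]`; since the quantities are then infinite simultaneously, they
pass to the Bochner integrals, which are all `0` in that case (`toReal_le_of_comparable`).

Necessity. Testing on `z ^ n` shows that the moments `W_x = ∫ r ^ x ω` and `V_x = ∫ r ^ x ω̃` are
comparable at the points `x = n p`. As `V_x - V_{x+a} ≤ (a / x) W_x`, this yields
`W_x ≤ 2 C² W_{(1+δ) x}`, and iterating gives `W_x ≲ ω̂(1 - 1/x)` (`moment_le_tail`), whence `D̂`.
The lower bound `V_x ≳ log L · ω̂(1 - 1/(x L))` (`log_le_moment`) then gives `Ď`.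
-/

open MeasureTheory Set

/-- Tail integral `ω̂(r) = ∫_r^1 ω(s) ds`. -/
noncomputable def tailInt (ω : ℝ → ℝ) (r : ℝ) : ℝ := ∫ s in r..1, ω s

/-- A radial weight: nonnegative, integrable on `[0,1)`, with positive tails. -/
def RadialWeight (ω : ℝ → ℝ) : Prop :=
  (∀ r ∈ Set.Ico (0:ℝ) 1, 0 ≤ ω r) ∧ MeasureTheory.IntegrableOn ω (Set.Ico 0 1) ∧
    ∀ r ∈ Set.Ico (0:ℝ) 1, 0 < tailInt ω r

/-- The class `D̂` of upper doubling weights. -/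
def Dhat (ω : ℝ → ℝ) : Prop :=
  ∃ C : ℝ, 1 ≤ C ∧ ∀ r ∈ Set.Ico (0:ℝ) 1, tailInt ω r ≤ C * tailInt ω ((1 + r) / 2)

/-- The class `Ď`. -/
def Dcheck (ω : ℝ → ℝ) : Prop :=
  ∃ K C : ℝ, 1 < K ∧ 1 < C ∧ ∀ r ∈ Set.Ico (0:ℝ) 1,
    C * tailInt ω (1 - (1 - r) / K) ≤ tailInt ω r

/-- The associated weight `ω̃(r) = ω̂(r)/(1-r)`. -/
noncomputable def assocW (ω : ℝ → ℝ) (r : ℝ) : ℝ := tailInt ω r / (1 - r)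

/-- `‖f‖_{A^p_ω}^p = ∫_𝔻 |f|^p ω dA`, with `dA` the normalized area measure. -/
noncomputable def ApNorm (p : ℝ) (ω : ℝ → ℝ) (f : ℂ → ℂ) : ℝ :=
  Real.pi⁻¹ * ∫ z in Metric.ball (0:ℂ) 1, ‖f z‖ ^ p * ω ‖z‖

/-- `‖Re f‖_{L^p_ω}^p = ∫_𝔻 |Re f|^p ω dA`. -/
noncomputable def LpReNorm (p : ℝ) (ω : ℝ → ℝ) (f : ℂ → ℂ) : ℝ :=
  Real.pi⁻¹ * ∫ z in Metric.ball (0:ℂ) 1, |(f z).re| ^ p * ω ‖z‖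

/-- `M_p^p(s, Re f)`, the `p`-th power of the `p`-mean of `Re f` on the circle of radius `s`. -/
noncomputable def Mpp (p : ℝ) (f : ℂ → ℂ) (s : ℝ) : ℝ :=
  (2 * Real.pi)⁻¹ * ∫ θ in (0:ℝ)..(2 * Real.pi),
    |(f ((s : ℂ) * Complex.exp ((θ : ℂ) * Complex.I))).re| ^ p

/-- `sup_{0<s<r} M_p^p(s, Re f)`. -/
noncomputable def supMpp (p : ℝ) (f : ℂ → ℂ) (r : ℝ) : ℝ :=
  sSup ((fun s => Mpp p f s) '' Set.Ioo (0:ℝ) r)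

/-! ### Subharmonicity of `|f|^p` -/

/-- Sub-mean-value property of `|f|^p`. Jensen's formula bounds `log |f c|` by the circle average of
`log |f|`; the tangent line to `exp` at `p log |f c|` turns this into a bound for `|f c|^p`. -/
theorem submean_rpow {p : ℝ} (hp : 0 < p) {f : ℂ → ℂ} {c : ℂ} {R : ℝ} (hR : 0 < R)
    (hf : AnalyticOnNhd ℂ f (Metric.closedBall c R)) :
    ‖f c‖ ^ p ≤ Real.circleAverage (fun z => ‖f z‖ ^ p) c R := by
  have habs : |R| = R := abs_of_pos hR
  by_cases hfc : f c = 0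
  · rw [hfc, norm_zero, Real.zero_rpow hp.ne']
    exact Real.circleAverage_nonneg_of_nonneg (fun z _ => by positivity)
  have hcont : ContinuousOn (fun z => ‖f z‖ ^ p) (Metric.sphere c R) := by
    refine ContinuousOn.rpow_const (hf.continuousOn.mono Metric.sphere_subset_closedBall).norm ?_
    intro x _; right; exact hp.le
  have hinteg : CircleIntegrable (fun z => ‖f z‖ ^ p) c R := hcont.circleIntegrable hR.le
  set L := Real.log ‖f c‖ with hL
  have hlogavg : L ≤ Real.circleAverage (fun z => Real.log ‖f z‖) c R := by
    rw [AnalyticOnNhd.circleAverage_log_norm hR.ne' (by rwa [habs]) hfc]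
    refine le_add_of_nonneg_left (finsum_nonneg fun u => ?_)
    by_cases hu : u ∈ Metric.closedBall c |R|
    · refine mul_nonneg ?_ ?_
      · have := MeromorphicOn.AnalyticOnNhd.divisor_nonneg (f := f)
            (U := Metric.closedBall c |R|) (by rwa [habs]) u
        exact_mod_cast this
      · by_cases huc : c = u
        · simp [huc]
        · apply Real.log_nonneg
          have h1 : 0 < ‖c - u‖ := norm_pos_iff.2 (sub_ne_zero.2 huc)
          rw [← div_eq_mul_inv, one_le_div h1]
          rw [habs, Metric.mem_closedBall, dist_comm, dist_eq_norm] at hu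
          exact hu
    · rw [Function.locallyFinsuppWithin.apply_eq_zero_of_notMem _ hu]; simp
  classical
  -- `log 0 = 0` is replaced at zeros of `f`, so that the tangent line bound holds everywhere
  set g : ℂ → ℝ := fun z => if f z = 0 then L - 1 / p else Real.log ‖f z‖ with hg
  have hcod : (fun z => Real.log ‖f z‖) =ᶠ[Filter.codiscreteWithin (Metric.sphere c |R|)] g := by
    have h1 : f ⁻¹' {0}ᶜ ∈ Filter.codiscreteWithin (Metric.closedBall c R) := by
      refine AnalyticOnNhd.preimage_zero_mem_codiscreteWithin hf hfc
        (Metric.mem_closedBall_self hR.le) ?_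
      exact Metric.isConnected_closedBall hR.le
    have h2 := Filter.codiscreteWithin_mono (Metric.sphere_subset_closedBall (x := c) (ε := R)) h1
    rw [habs]
    filter_upwards [h2] with z hz
    have : f z ≠ 0 := hz
    simp [hg, this]
  have hgint : CircleIntegrable g c R :=
    CircleIntegrable.congr_codiscreteWithin hcod
      (MeromorphicOn.circleIntegrable_log_norm
        (by rw [habs]; exact (hf.mono Metric.sphere_subset_closedBall).meromorphicOn))
  have hgavg : L ≤ Real.circleAverage g c R := by
    rwa [← Real.circleAverage_congr_codiscreteWithin hcod hR.ne']
  have hpt : ∀ z, ‖f c‖ ^ p * (1 - p * L) + (‖f c‖ ^ p * p) * g z ≤ ‖f z‖ ^ p := by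
    intro z
    have hcp : 0 < ‖f c‖ := norm_pos_iff.2 hfc
    by_cases hz : f z = 0
    · simp only [hg, hz, if_true, norm_zero, Real.zero_rpow hp.ne']
      apply le_of_eq; field_simp; ring
    · simp only [hg, hz, if_false]
      have hzp : 0 < ‖f z‖ := norm_pos_iff.2 hz
      rw [Real.rpow_def_of_pos hcp, Real.rpow_def_of_pos hzp, ← hL]
      have h3 := Real.add_one_le_exp (Real.log ‖f z‖ * p - L * p)
      rw [Real.exp_sub, le_div_iff₀ (Real.exp_pos _)] at h3
      nlinarith [h3]
  have h4 : Real.circleAverage (fun z => ‖f c‖ ^ p * (1 - p * L) + (‖f c‖ ^ p * p) * g z) c R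
      ≤ Real.circleAverage (fun z => ‖f z‖ ^ p) c R := by
    refine Real.circleAverage_mono ?_ hinteg (fun z _ => hpt z)
    exact (circleIntegrable_const _ _ _).add (hgint.const_smul (a := ‖f c‖ ^ p * p))
  have h5 : Real.circleAverage (fun z => ‖f c‖ ^ p * (1 - p * L) + (‖f c‖ ^ p * p) * g z) c R
      = ‖f c‖ ^ p * (1 - p * L) + (‖f c‖ ^ p * p) * Real.circleAverage g c R := by
    have := Real.circleAverage_fun_add (circleIntegrable_const (‖f c‖ ^ p * (1 - p * L)) c R)
      (hgint.const_smul (a := ‖f c‖ ^ p * p))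
    simp only [Pi.smul_apply, smul_eq_mul] at this
    rw [this, Real.circleAverage_const]
    congr 1
    exact Real.circleAverage_fun_smul (a := ‖f c‖ ^ p * p) (f := g)
  rw [h5] at h4
  have : 0 ≤ ‖f c‖ ^ p * p := by positivity
  nlinarith [mul_le_mul_of_nonneg_left hgavg this]

/-- The circle means of a continuous function with the sub-mean-value property increase with the
radius: the maximum principle is applied to the rotation average, a radial function with the same
property. -/
theorem circleAverage_mono_of_submean {v : ℂ → ℝ} (hv : Continuous v) {s r : ℝ} (hs : 0 ≤ s)
    (hsr : s ≤ r)
    (hsub : ∀ (c : ℂ) (ε : ℝ), 0 < ε → Metric.closedBall c ε ⊆ Metric.closedBall 0 r →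
      v c ≤ Real.circleAverage v c ε) :
    Real.circleAverage v 0 s ≤ Real.circleAverage v 0 r := by
  set g : ℝ → ℝ := fun t => Real.circleAverage v 0 t with hg
  have hgc : Continuous g := Real.Continuous.circleAverage hv
  have hrot : ∀ z : ℂ, (2 * Real.pi)⁻¹ • ∫ φ in (0:ℝ)..2 * Real.pi,
      v (z * Complex.exp (φ * Complex.I)) = g ‖z‖ := by
    intro z
    simp only [hg]
    rw [Real.circleAverage_eq_integral_add (z.arg)]
    congr 1
    apply intervalIntegral.integral_congr
    intro φ _
    simp only [circleMap, zero_add]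
    congr 1
    conv_lhs => rw [← Complex.norm_mul_exp_arg_mul_I z]
    rw [mul_assoc, ← Complex.exp_add]
    push_cast; ring_nf
  have hGsub : ∀ (c : ℂ) (ε : ℝ), 0 < ε → Metric.closedBall c ε ⊆ Metric.closedBall 0 r →
      g ‖c‖ ≤ (2 * Real.pi)⁻¹ • ∫ θ in (0:ℝ)..2 * Real.pi, g ‖circleMap c ε θ‖ := by
    intro c ε hε hsubset
    have hpi : (0:ℝ) ≤ (2 * Real.pi)⁻¹ := by positivity
    have key : ∀ φ : ℝ, v (c * Complex.exp (φ * Complex.I)) ≤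
        (2 * Real.pi)⁻¹ • ∫ θ in (0:ℝ)..2 * Real.pi,
          v (circleMap c ε θ * Complex.exp (φ * Complex.I)) := by
      intro φ
      have h1 := hsub (c * Complex.exp (φ * Complex.I)) ε hε (by
        intro w hw
        have : w * Complex.exp (-(φ * Complex.I)) ∈ Metric.closedBall c ε := by
          rw [Metric.mem_closedBall, dist_eq_norm] at hw ⊢
          have h2 : w * Complex.exp (-(φ * Complex.I)) - c =
              (w - c * Complex.exp (φ * Complex.I)) * Complex.exp (-(φ * Complex.I)) := by
            rw [sub_mul, mul_assoc, ← Complex.exp_add]; simp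
          rw [h2, norm_mul]
          have : ‖Complex.exp (-(φ * Complex.I))‖ = 1 := by
            rw [show -((φ:ℂ) * Complex.I) = ((-φ : ℝ) : ℂ) * Complex.I by push_cast; ring]
            exact Complex.norm_exp_ofReal_mul_I _
          rw [this, mul_one]; exact hw
        have h3 := hsubset this
        rw [Metric.mem_closedBall, dist_zero_right, norm_mul,
          show -((φ:ℂ) * Complex.I) = ((-φ : ℝ) : ℂ) * Complex.I by push_cast; ring,
          Complex.norm_exp_ofReal_mul_I, mul_one] at h3
        simpa using h3)
      rw [Real.circleAverage_eq_integral_add φ] at h1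
      refine h1.trans (le_of_eq ?_)
      congr 1
      apply intervalIntegral.integral_congr
      intro θ _
      simp only [circleMap]
      congr 1
      rw [add_mul, mul_assoc (ε:ℂ), ← Complex.exp_add]
      push_cast; ring_nf
    have hc1 : Continuous (fun q : ℝ × ℝ => v (circleMap c ε q.2 * Complex.exp (q.1 * Complex.I))) := by
      have : Continuous (fun q : ℝ × ℝ => circleMap c ε q.2) := (continuous_circleMap c ε).comp continuous_snd
      fun_prop
    calc g ‖c‖ = (2 * Real.pi)⁻¹ • ∫ φ in (0:ℝ)..2 * Real.pi,
          v (c * Complex.exp (φ * Complex.I)) := (hrot c).symm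
      _ ≤ (2 * Real.pi)⁻¹ • ∫ φ in (0:ℝ)..2 * Real.pi, (2 * Real.pi)⁻¹ •
            ∫ θ in (0:ℝ)..2 * Real.pi, v (circleMap c ε θ * Complex.exp (φ * Complex.I)) := by
          apply smul_le_smul_of_nonneg_left _ hpi
          apply intervalIntegral.integral_mono_on (by positivity)
          · apply Continuous.intervalIntegrable; fun_prop
          · apply Continuous.intervalIntegrable
            exact (intervalIntegral.continuous_parametric_intervalIntegral_of_continuous'
              hc1 _ _).const_smul (2 * Real.pi)⁻¹
          · intro φ _; exact key φ
      _ = (2 * Real.pi)⁻¹ • ∫ θ in (0:ℝ)..2 * Real.pi, (2 * Real.pi)⁻¹ •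
            ∫ φ in (0:ℝ)..2 * Real.pi, v (circleMap c ε θ * Complex.exp (φ * Complex.I)) := by
          simp only [intervalIntegral.integral_smul]
          congr 2
          simp only [intervalIntegral.integral_of_le (show (0:ℝ) ≤ 2 * Real.pi by positivity)]
          apply MeasureTheory.integral_integral_swap
          rw [Measure.prod_restrict]
          exact (hc1.continuousOn.integrableOn_compact (isCompact_Icc.prod isCompact_Icc)).mono_set
            (prod_mono Ioc_subset_Icc_self Ioc_subset_Icc_self)
      _ = _ := by
          congr 1
          apply intervalIntegral.integral_congr
          intro θ _
          exact hrot _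
  -- the largest radius at which `g` attains its maximum must be `r`
  have hr : 0 ≤ r := hs.trans hsr
  obtain ⟨t0, ht0, hmax⟩ := isCompact_Icc.exists_isMaxOn (nonempty_Icc.2 hr) hgc.continuousOn
  have hK : IsCompact (Icc 0 r ∩ g ⁻¹' {g t0}) :=
    isCompact_Icc.inter_right (isClosed_singleton.preimage hgc)
  obtain ⟨ρ, hρ⟩ := hK.exists_isGreatest ⟨t0, ht0, rfl⟩
  have hρ1 : ρ ∈ Icc 0 r := hρ.1.1
  have hρ2 : g ρ = g t0 := hρ.1.2
  have hρr : ρ = r := by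
    by_contra hne
    have hlt : ρ < r := lt_of_le_of_ne hρ1.2 hne
    have h1 := hGsub (ρ:ℂ) (r - ρ) (by linarith) (by
      intro w hw
      rw [Metric.mem_closedBall, dist_eq_norm] at hw
      rw [Metric.mem_closedBall, dist_zero_right]
      calc ‖w‖ = ‖(w - ρ) + ρ‖ := by ring_nf
        _ ≤ ‖w - ρ‖ + ‖(ρ:ℂ)‖ := norm_add_le _ _
        _ ≤ (r - ρ) + ρ := by
            gcongr
            rw [Complex.norm_real, Real.norm_of_nonneg hρ1.1]
        _ = r := by ring)
    have hcc : Continuous fun θ => g ‖circleMap (ρ:ℂ) (r - ρ) θ‖ :=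
      hgc.comp (continuous_circleMap _ _).norm
    have hb : ∀ θ, ‖circleMap (ρ:ℂ) (r - ρ) θ‖ ≤ r := by
      intro θ
      calc ‖circleMap (ρ:ℂ) (r - ρ) θ‖ ≤ ‖(ρ:ℂ)‖ + ‖((r - ρ : ℝ):ℂ) * Complex.exp (θ * Complex.I)‖ :=
            norm_add_le _ _
        _ = r := by
            rw [norm_mul, Complex.norm_exp_ofReal_mul_I, Complex.norm_real, Complex.norm_real,
              Real.norm_of_nonneg hρ1.1, Real.norm_of_nonneg (by linarith)]; ring
    have h2 : ∫ θ in (0:ℝ)..2 * Real.pi, g ‖circleMap (ρ:ℂ) (r - ρ) θ‖ <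
        ∫ θ in (0:ℝ)..2 * Real.pi, g t0 := by
      apply intervalIntegral.integral_lt_integral_of_continuousOn_of_le_of_exists_lt
        (by positivity) hcc.continuousOn continuousOn_const
      · intro θ _
        exact hmax ⟨norm_nonneg _, hb θ⟩
      · refine ⟨0, ⟨le_rfl, by positivity⟩, ?_⟩
        have : ‖circleMap (ρ:ℂ) (r - ρ) 0‖ = r := by
          simp [circleMap, abs_of_nonneg hr]
        rw [this]
        refine lt_of_le_of_ne (hmax ⟨hr, le_rfl⟩) fun h => ?_
        exact absurd (hρ.2 ⟨⟨hr, le_rfl⟩, h⟩) (not_le.2 hlt)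
    rw [Complex.norm_real, Real.norm_of_nonneg hρ1.1, hρ2] at h1
    have h3 : (2 * Real.pi)⁻¹ • ∫ θ in (0:ℝ)..2 * Real.pi, g t0 = g t0 := by
      simp only [intervalIntegral.integral_const, smul_eq_mul, sub_zero]
      field_simp
    have h4 := mul_lt_mul_of_pos_left h2 (show 0 < (2 * Real.pi)⁻¹ by positivity)
    simp only [smul_eq_mul] at h1 h3
    linarith
  rw [← hρr]
  exact (hmax ⟨hs, hsr⟩).trans hρ2.ge

/-! ### Circle integrals and polar coordinates -/

/-- The unnormalised circle integral `∫_0^{2π} F(r e^{iθ}) dθ`. -/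
noncomputable def circLInt (F : ℂ → ENNReal) (r : ℝ) : ENNReal :=
  ∫⁻ θ in Ioc 0 (2 * Real.pi), F (circleMap 0 r θ)

theorem lintegral_Ioc_periodic {F : ℝ → ENNReal} (hF : Function.Periodic F (2 * Real.pi)) (a : ℝ) :
    ∫⁻ θ in Ioc a (a + 2 * Real.pi), F θ = ∫⁻ θ in Ioc 0 (2 * Real.pi), F θ := by
  have hpos : 0 < 2 * Real.pi := by positivity
  have h0 := isAddFundamentalDomain_Ioc hpos 0
  have ha := isAddFundamentalDomain_Ioc hpos a
  rw [zero_add] at h0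
  refine ha.setLIntegral_eq h0 F ?_
  rintro ⟨g, hg⟩ x
  obtain ⟨n, rfl⟩ := AddSubgroup.mem_zmultiples_iff.1 hg
  show F (n • (2 * Real.pi) + x) = F x
  rw [add_comm]
  exact hF.zsmul n x

/-- Averaging over the rotations of a point `w` gives the circle integral at radius `‖w‖`. -/
theorem circLInt_rotate (F : ℂ → ENNReal) (w : ℂ) :
    ∫⁻ θ in Ioc 0 (2 * Real.pi), F (Complex.exp (θ * Complex.I) * w) = circLInt F ‖w‖ := by
  have h1 : ∀ θ : ℝ, F (Complex.exp (θ * Complex.I) * w) = F (circleMap 0 ‖w‖ (θ + w.arg)) := by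
    intro θ
    congr 1
    conv_lhs => rw [← Complex.norm_mul_exp_arg_mul_I w]
    rw [circleMap, mul_left_comm, ← Complex.exp_add]
    push_cast; ring_nf
  simp_rw [h1]
  have hper : Function.Periodic (fun θ => F (circleMap 0 ‖w‖ θ)) (2 * Real.pi) := by
    intro θ
    simp only [periodic_circleMap 0 ‖w‖ θ]
  have h2 := (measurePreserving_add_right volume w.arg).setLIntegral_comp_preimage_emb
    (measurableEmbedding_addRight w.arg) (fun θ => F (circleMap 0 ‖w‖ θ))
    (Ioc w.arg (w.arg + 2 * Real.pi))
  rw [lintegral_Ioc_periodic hper] at h2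
  rw [circLInt, ← h2]
  congr 2
  ext x
  simp

theorem lintegral_ball_polar {F : ℂ → ENNReal} (hF : Measurable F) (R : ℝ) :
    ∫⁻ z in Metric.ball 0 R, F z = ∫⁻ t in Ioo 0 R, ENNReal.ofReal t * circLInt F t := by
  have hmeas : Measurable (fun z => (Metric.ball (0:ℂ) R).indicator F z) :=
    hF.indicator Metric.isOpen_ball.measurableSet
  have h := Complex.lintegral_comp_polarCoord_symm (fun z => (Metric.ball (0:ℂ) R).indicator F z)
  rw [lintegral_indicator Metric.isOpen_ball.measurableSet] at h
  rw [← h, polarCoord_target, Measure.volume_eq_prod, ← Measure.prod_restrict,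
    lintegral_prod]
  · have h2 : ∀ t ∈ Ioi (0:ℝ), (∫⁻ θ in Ioo (-Real.pi) Real.pi, ENNReal.ofReal t •
        (Metric.ball (0:ℂ) R).indicator F (Complex.polarCoord.symm (t, θ))) =
        (Iio R).indicator (fun t => ENNReal.ofReal t * circLInt F t) t := by
      intro t ht
      have ht' : 0 < t := ht
      have hform : ∀ θ : ℝ, Complex.polarCoord.symm (t, θ) = circleMap 0 t θ := by
        intro θ
        rw [Complex.polarCoord_symm_apply, circleMap, Complex.exp_mul_I]
        simp
      simp_rw [hform]
      by_cases htR : t < R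
      · have hm : ∀ θ : ℝ, circleMap 0 t θ ∈ Metric.ball (0:ℂ) R := by
          intro θ; simpa [abs_of_pos ht'] using htR
        simp only [smul_eq_mul, indicator_of_mem (hm _), indicator_of_mem (show t ∈ Iio R from htR)]
        rw [lintegral_const_mul' _ _ ENNReal.ofReal_ne_top, Measure.restrict_congr_set Ioo_ae_eq_Ioc]
        congr 1
        have hper : Function.Periodic (fun θ => F (circleMap 0 t θ)) (2 * Real.pi) := by
          intro θ
          simp only [periodic_circleMap 0 t θ]
        have h3 := lintegral_Ioc_periodic hper (-Real.pi)
        rw [show -Real.pi + 2 * Real.pi = Real.pi by ring] at h3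
        exact h3
      · have hm : ∀ θ : ℝ, circleMap 0 t θ ∉ Metric.ball (0:ℂ) R := by
          intro θ; simpa [abs_of_pos ht'] using htR
        simp only [indicator_of_notMem (hm _), indicator_of_notMem (show t ∉ Iio R from htR)]
        simp
    rw [setLIntegral_congr_fun measurableSet_Ioi h2, setLIntegral_indicator measurableSet_Iio]
    congr 2
    ext x; simp [and_comm]
  · have : Measurable fun z : ℝ × ℝ => Complex.polarCoord.symm z := by
      have h : (fun z : ℝ × ℝ => Complex.polarCoord.symm z) =
          fun z => (z.1 : ℂ) * (Real.cos z.2 + Real.sin z.2 * Complex.I) := by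
        funext z; exact Complex.polarCoord_symm_apply z
      rw [h]; fun_prop
    exact ((ENNReal.measurable_ofReal.comp measurable_fst).mul (hmeas.comp this)).aemeasurable

theorem lintegral_ball_translate (F : ℂ → ENNReal) (c : ℂ) (R : ℝ) :
    ∫⁻ z in Metric.ball c R, F z = ∫⁻ z in Metric.ball 0 R, F (c + z) := by
  have h2 := (measurePreserving_add_left volume c).setLIntegral_comp_preimage_emb
    (measurableEmbedding_addLeft c) F (Metric.ball c R)
  rw [← h2]
  congr 2
  ext x; simp

theorem lintegral_id_Ioo {R : ℝ} (hR : 0 ≤ R) :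
    ∫⁻ t in Ioo 0 R, ENNReal.ofReal t = ENNReal.ofReal (R ^ 2 / 2) := by
  rw [Measure.restrict_congr_set Ioo_ae_eq_Ioc, ← ofReal_integral_eq_lintegral_ofReal,
    ← intervalIntegral.integral_of_le hR, integral_id]
  · simp
  · exact (continuous_id.integrableOn_Ioc)
  · filter_upwards [ae_restrict_mem measurableSet_Ioc] with t ht using ht.1.le

/-- The mean value property of `Re f`, integrated over concentric circles. -/
theorem area_submean {f : ℂ → ℂ} (hfm : Measurable f) {c : ℂ} {R : ℝ} (hR : 0 < R)
    (hf : DifferentiableOn ℂ f (Metric.ball c R)) :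
    ENNReal.ofReal (Real.pi * R ^ 2 * |(f c).re|) ≤
      ∫⁻ z in Metric.ball c R, ENNReal.ofReal |(f z).re| := by
  rw [lintegral_ball_translate, lintegral_ball_polar (by fun_prop)]
  have key : ∀ t ∈ Ioo 0 R, ENNReal.ofReal t * ENNReal.ofReal (2 * Real.pi * |(f c).re|) ≤
      ENNReal.ofReal t * circLInt (fun z => ENNReal.ofReal |(f (c + z)).re|) t := by
    intro t ht
    gcongr
    have hsub : Metric.closedBall c t ⊆ Metric.ball c R := Metric.closedBall_subset_ball ht.2
    have habs : |t| = t := abs_of_pos ht.1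
    have hmv : Real.circleAverage f c t = f c := by
      refine DiffContOnCl.circleAverage ?_
      rw [habs]
      refine DifferentiableOn.diffContOnCl ?_
      rw [closure_ball _ ht.1.ne']
      exact hf.mono hsub
    have hcont : ContinuousOn f (Metric.sphere c t) :=
      hf.continuousOn.mono (Metric.sphere_subset_closedBall.trans hsub)
    have hfi : CircleIntegrable f c t := hcont.circleIntegrable ht.1.le
    have hre : Real.circleAverage (fun z => (f z).re) c t = (f c).re := by
      have := Complex.reCLM.circleAverage_comp_comm hfi
      rw [hmv] at this
      exact this
    have hrei : ContinuousOn (fun z => |(f z).re|) (Metric.sphere c t) :=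
      (Complex.continuous_re.comp_continuousOn hcont).abs
    have hle : |(f c).re| ≤ Real.circleAverage (fun z => |(f z).re|) c t := by
      rw [← hre]
      exact Real.abs_circleAverage_le_circleAverage_abs
    have hinteg : IntervalIntegrable (fun θ => |(f (circleMap c t θ)).re|) volume 0 (2 * Real.pi) :=
      hrei.circleIntegrable ht.1.le
    rw [circLInt]
    have hshift : ∀ θ, c + circleMap 0 t θ = circleMap c t θ := by intro θ; simp [circleMap]
    simp_rw [hshift]
    rw [← ofReal_integral_eq_lintegral_ofReal hinteg.1 (ae_of_all _ fun _ => abs_nonneg _)]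
    apply ENNReal.ofReal_le_ofReal
    rw [Real.circleAverage, smul_eq_mul, intervalIntegral.integral_of_le (by positivity)] at hle
    rw [inv_mul_eq_div, le_div_iff₀ (by positivity)] at hle
    linarith
  refine le_trans ?_ (setLIntegral_mono' measurableSet_Ioo key)
  rw [lintegral_mul_const' _ _ ENNReal.ofReal_ne_top, lintegral_id_Ioo hR.le,
    ← ENNReal.ofReal_mul (by positivity)]
  apply ENNReal.ofReal_le_ofReal
  apply le_of_eq; ring

/-! ### Local estimates by the real part -/

/-- Trades the first power of a quantity `a ≤ κ M` for its `p`-th power, at the cost of a term `M / 2`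
which can be absorbed. -/
theorem scalar_interp {p κ M a : ℝ} (hp : 0 < p) (hM : 0 < M) (ha0 : 0 ≤ a)
    (haM : a ≤ κ * M) : a ≤ M / 2 + κ * 2 ^ p * M ^ (1 - p) * a ^ p := by
  have hκ : 0 ≤ κ := by
    by_contra h
    nlinarith [not_le.1 h]
  by_cases h : a ≤ M / 2
  · have : 0 ≤ κ * 2 ^ p * M ^ (1 - p) * a ^ p := by positivity
    linarith
  · have h1 : M / 2 ≤ a := (not_le.1 h).le
    have h2 : (M / 2) ^ p ≤ a ^ p := Real.rpow_le_rpow (by positivity) h1 hp.le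
    have h3 : κ * 2 ^ p * M ^ (1 - p) * (M / 2) ^ p = κ * M := by
      rw [Real.div_rpow hM.le (by norm_num), Real.rpow_sub hM, Real.rpow_one]
      have : (0:ℝ) < 2 ^ p := by positivity
      have : (0:ℝ) < M ^ p := by positivity
      field_simp
    have h4 : κ * 2 ^ p * M ^ (1 - p) * (M / 2) ^ p ≤ κ * 2 ^ p * M ^ (1 - p) * a ^ p := by
      gcongr
    linarith

/-- Area sub-mean-value inequality for `|Re f|^p`, up to a constant, for every `p > 0` (Hardy and
Littlewood). The function `(ϱ - |w - c|)^(2/p) |Re f w|` is maximised over the disc; near a maximiser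
`|Re f| ≤ κ M`, so `scalar_interp` reduces the claim to `area_submean`. -/
theorem local_center {p : ℝ} (hp : 0 < p) : ∃ K : ℝ, 0 < K ∧ ∀ (f : ℂ → ℂ), Measurable f →
    ∀ (c : ℂ) (R : ℝ), 0 < R → DifferentiableOn ℂ f (Metric.ball c R) →
    ENNReal.ofReal (R ^ 2 * |(f c).re| ^ p) ≤
      ENNReal.ofReal K * ∫⁻ z in Metric.ball c R, ENNReal.ofReal (|(f z).re| ^ p) := by
  set κ : ℝ := 2 ^ (2 / p) with hκ
  have hκ0 : 0 < κ := by positivity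
  refine ⟨32 * (κ * 2 ^ p), by positivity, ?_⟩
  intro f hfm c R hR hf
  set ϱ := R / 2 with hϱ
  have hϱ0 : 0 < ϱ := by positivity
  have hsub : Metric.closedBall c ϱ ⊆ Metric.ball c R :=
    Metric.closedBall_subset_ball (by linarith)
  have hcont : ContinuousOn (fun w => (ϱ - ‖w - c‖) ^ (2 / p) * |(f w).re|)
      (Metric.closedBall c ϱ) := by
    refine ContinuousOn.mul ?_ ?_
    · refine ContinuousOn.rpow_const (by fun_prop) ?_
      intro x _; right; positivity
    · exact (Complex.continuous_re.comp_continuousOn (hf.continuousOn.mono hsub)).abs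
  obtain ⟨w, hw, hmax⟩ := (isCompact_closedBall c ϱ).exists_isMaxOn
    ⟨c, Metric.mem_closedBall_self hϱ0.le⟩ hcont
  set d := ϱ - ‖w - c‖ with hd
  set M := |(f w).re| with hM
  have hd0 : 0 ≤ d := by
    rw [Metric.mem_closedBall, dist_eq_norm] at hw; simp only [hd]; linarith
  have hc : ϱ ^ (2 / p) * |(f c).re| ≤ d ^ (2 / p) * M := by
    have := hmax (Metric.mem_closedBall_self hϱ0.le)
    simpa using this
  have hpow : ∀ x y : ℝ, 0 ≤ x → 0 ≤ y → (x ^ (2 / p) * y) ^ p = x ^ 2 * y ^ p := by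
    intro x y hx hy
    rw [Real.mul_rpow (by positivity) hy, ← Real.rpow_mul hx, div_mul_cancel₀ _ hp.ne']
    norm_num
  have hcp : ϱ ^ 2 * |(f c).re| ^ p ≤ d ^ 2 * M ^ p := by
    rw [← hpow _ _ hϱ0.le (abs_nonneg _), ← hpow _ _ hd0 (abs_nonneg _)]
    exact Real.rpow_le_rpow (by positivity) hc hp.le
  by_cases hz : d ^ 2 * M ^ p = 0
  · have : R ^ 2 * |(f c).re| ^ p ≤ 0 := by
      rw [hz] at hcp
      have : R ^ 2 * |(f c).re| ^ p = 4 * (ϱ ^ 2 * |(f c).re| ^ p) := by rw [hϱ]; ring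
      linarith
    rw [ENNReal.ofReal_of_nonpos this]
    exact zero_le
  have hdpos : 0 < d := lt_of_le_of_ne hd0 (by rintro h; rw [← h] at hz; simp at hz)
  have hMpos : 0 < M := by
    refine lt_of_le_of_ne (abs_nonneg _) ?_
    intro h; rw [← h, Real.zero_rpow hp.ne'] at hz; simp at hz
  have hball : ∀ z ∈ Metric.ball w (d / 2), z ∈ Metric.closedBall c ϱ ∧ d / 2 ≤ ϱ - ‖z - c‖ := by
    intro z hz
    rw [Metric.mem_ball, dist_eq_norm] at hz
    have h1 : ‖z - c‖ ≤ ‖z - w‖ + ‖w - c‖ := norm_sub_le_norm_sub_add_norm_sub z w c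
    have h2 : d / 2 ≤ ϱ - ‖z - c‖ := by simp only [hd] at hz ⊢; linarith
    refine ⟨?_, h2⟩
    rw [Metric.mem_closedBall, dist_eq_norm]; linarith
  have hballR : Metric.ball w (d / 2) ⊆ Metric.ball c R := fun z hz => hsub (hball z hz).1
  have hbound : ∀ z ∈ Metric.ball w (d / 2), |(f z).re| ≤ κ * M := by
    intro z hz
    obtain ⟨hz1, hz2⟩ := hball z hz
    have h1 : (ϱ - ‖z - c‖) ^ (2 / p) * |(f z).re| ≤ d ^ (2 / p) * M := hmax hz1
    have h2 : (d / 2) ^ (2 / p) ≤ (ϱ - ‖z - c‖) ^ (2 / p) :=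
      Real.rpow_le_rpow (by positivity) hz2 (by positivity)
    have h3 : (d / 2) ^ (2 / p) * |(f z).re| ≤ d ^ (2 / p) * M :=
      (mul_le_mul_of_nonneg_right h2 (abs_nonneg _)).trans h1
    rw [Real.div_rpow hd0 (by norm_num), ← hκ, div_mul_eq_mul_div, div_le_iff₀ hκ0] at h3
    have h4 : 0 < d ^ (2 / p) := by positivity
    nlinarith
  have hpt : ∀ z ∈ Metric.ball w (d / 2), ENNReal.ofReal |(f z).re| ≤ ENNReal.ofReal (M / 2) +
      ENNReal.ofReal (κ * 2 ^ p * M ^ (1 - p)) * ENNReal.ofReal (|(f z).re| ^ p) := by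
    intro z hz
    rw [← ENNReal.ofReal_mul (by positivity), ← ENNReal.ofReal_add (by positivity) (by positivity)]
    exact ENNReal.ofReal_le_ofReal (scalar_interp hp hMpos (abs_nonneg _) (hbound z hz))
  have hI := (area_submean hfm (half_pos hdpos) (hf.mono hballR)).trans
    (setLIntegral_mono' Metric.isOpen_ball.measurableSet hpt)
  rw [lintegral_add_left measurable_const, setLIntegral_const,
    lintegral_const_mul' _ _ ENNReal.ofReal_ne_top] at hI
  set I := ∫⁻ z in Metric.ball w (d / 2), ENNReal.ofReal (|(f z).re| ^ p) with hIdef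
  have hIle : I ≤ ∫⁻ z in Metric.ball c R, ENNReal.ofReal (|(f z).re| ^ p) :=
    lintegral_mono_set hballR
  refine le_trans ?_ (mul_le_mul_right hIle _)
  by_cases hItop : I = ⊤
  · rw [hItop, ENNReal.mul_top]
    · exact le_top
    · simpa using (by positivity : 0 < κ * 2 ^ p)
  have hvol : volume (Metric.ball w (d / 2)) = ENNReal.ofReal (Real.pi * (d / 2) ^ 2) := by
    rw [Complex.volume_ball, ← ENNReal.ofReal_coe_nnreal, ← ENNReal.ofReal_pow (by positivity),
      ← ENNReal.ofReal_mul (by positivity)]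
    congr 1; rw [mul_comm]; rfl
  rw [hvol, ← ENNReal.ofReal_toReal hItop, ← ENNReal.ofReal_mul (by positivity),
    ← ENNReal.ofReal_mul (by positivity), ← ENNReal.ofReal_add (by positivity) (by positivity),
    ENNReal.ofReal_le_ofReal_iff (by positivity)] at hI
  rw [← ENNReal.ofReal_toReal hItop, ← ENNReal.ofReal_mul (by positivity)]
  apply ENNReal.ofReal_le_ofReal
  set i := I.toReal
  have hi : 0 ≤ i := ENNReal.toReal_nonneg
  have hMp : 0 < M ^ p := by positivity
  rw [Real.rpow_sub hMpos, Real.rpow_one] at hI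
  have h5 : Real.pi * (d / 2) ^ 2 * M / 2 ≤ κ * 2 ^ p * (M / M ^ p) * i := by
    nlinarith [hI]
  have h6 : Real.pi * d ^ 2 * M ^ p ≤ 8 * (κ * 2 ^ p) * i := by
    have h7 : κ * 2 ^ p * (M / M ^ p) * i = M * (κ * 2 ^ p * i / M ^ p) := by
      field_simp
    have h8 : Real.pi * (d / 2) ^ 2 * M / 2 = M * (Real.pi * d ^ 2 / 8) := by ring
    rw [h7, h8] at h5
    have h9 := le_of_mul_le_mul_left h5 hMpos
    rw [le_div_iff₀ hMp] at h9
    linarith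
  have h10 : d ^ 2 * M ^ p ≤ Real.pi * d ^ 2 * M ^ p := by
    have : 0 ≤ d ^ 2 * M ^ p := by positivity
    nlinarith [Real.pi_gt_three]
  have : R ^ 2 * |(f c).re| ^ p = 4 * (ϱ ^ 2 * |(f c).re| ^ p) := by rw [hϱ]; ring
  rw [this]
  linarith

/-- The oscillation of `f` is controlled by `|Re f|^p`: Borel–Carathéodory on a smaller disc, where
`local_center` bounds `Re f`. -/
theorem local_osc {p : ℝ} (hp : 0 < p) : ∃ K : ℝ, 0 < K ∧ ∀ (f : ℂ → ℂ), Measurable f →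
    ∀ (c : ℂ) (R : ℝ), 0 < R → DifferentiableOn ℂ f (Metric.ball c R) →
    ∀ z, ‖z - c‖ ≤ R / 2 →
    ENNReal.ofReal (R ^ 2 * ‖f z - f c‖ ^ p) ≤
      ENNReal.ofReal K * ∫⁻ z in Metric.ball c R, ENNReal.ofReal (|(f z).re| ^ p) := by
  obtain ⟨K, hK, hKf⟩ := local_center hp
  refine ⟨8 ^ p * (16 * K), by positivity, ?_⟩
  intro f hfm c R hR hf z hz
  set I := ∫⁻ z in Metric.ball c R, ENNReal.ofReal (|(f z).re| ^ p) with hIdef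
  by_cases hItop : I = ⊤
  · rw [hItop, ENNReal.mul_top]
    · exact le_top
    · simpa using (by positivity : 0 < 8 ^ p * (16 * K))
  set i := I.toReal
  have hi : 0 ≤ i := ENNReal.toReal_nonneg
  set S : ℝ := (16 * K * i / R ^ 2) ^ (1 / p) with hS
  have hSp : S ^ p = 16 * K * i / R ^ 2 := by
    rw [hS, ← Real.rpow_mul (by positivity), one_div_mul_cancel hp.ne', Real.rpow_one]
  have hS0 : 0 ≤ S := by positivity
  have hb : ∀ w ∈ Metric.ball c (3 * R / 4), |(f w).re| ≤ S := by
    intro w hw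
    rw [Metric.mem_ball] at hw
    have hsub : Metric.ball w (R / 4) ⊆ Metric.ball c R :=
      Metric.ball_subset_ball' (by linarith)
    have h1 := (hKf f hfm w (R / 4) (by positivity) (hf.mono hsub)).trans
      (mul_le_mul_right (lintegral_mono_set hsub) _)
    rw [← hIdef, ← ENNReal.ofReal_toReal hItop, ← ENNReal.ofReal_mul (by positivity),
      ENNReal.ofReal_le_ofReal_iff (by positivity)] at h1
    rw [← Real.rpow_le_rpow_iff (abs_nonneg _) hS0 hp, hSp, le_div_iff₀ (by positivity)]
    linarith
  have hosc : ‖f z - f c‖ ≤ 8 * S := by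
    refine le_of_forall_pos_le_add fun η hη => ?_
    have hBC := Complex.borelCaratheodory_zero (f := fun w => f (c + w) - f c)
      (M := 2 * S + η / 4) (R := 3 * R / 4) (z := z - c) (by positivity)
      (by
        refine DifferentiableOn.sub_const ?_ _
        refine (hf.mono (Metric.ball_subset_ball (by linarith : 3 * R / 4 ≤ R))).comp
          (by fun_prop) ?_
        intro w hw
        simpa using hw)
      (by
        intro w hw
        have h1 := hb (c + w) (by simpa using hw)
        have h2 := hb c (Metric.mem_ball_self (by positivity))
        rw [abs_le] at h1 h2
        simp only [Set.mem_ofPred_eq, Complex.sub_re]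
        linarith)
      (by positivity)
      (by rw [mem_ball_zero_iff]; linarith)
      (by simp)
    simp only [add_sub_cancel] at hBC
    refine hBC.trans ?_
    rw [div_le_iff₀ (by linarith)]
    have h3 : 0 ≤ 2 * S + η / 4 := by positivity
    nlinarith
  rw [← ENNReal.ofReal_toReal hItop, ← ENNReal.ofReal_mul (by positivity)]
  apply ENNReal.ofReal_le_ofReal
  have h1 : ‖f z - f c‖ ^ p ≤ 8 ^ p * (16 * K * i / R ^ 2) := by
    rw [← hSp, ← Real.mul_rpow (by norm_num) hS0]
    exact Real.rpow_le_rpow (norm_nonneg _) hosc hp.le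
  calc R ^ 2 * ‖f z - f c‖ ^ p ≤ R ^ 2 * (8 ^ p * (16 * K * i / R ^ 2)) := by gcongr
    _ = 8 ^ p * (16 * K) * i := by field_simp

/-! ### Dyadic radii and control of `f` by `Re f` -/

/-- `|Re f|^p`, with values in `[0, ∞]`. -/
noncomputable def rePow (p : ℝ) (f : ℂ → ℂ) (z : ℂ) : ENNReal := ENNReal.ofReal (|(f z).re| ^ p)

/-- `|f|^p`, with values in `[0, ∞]`. -/
noncomputable def normPow (p : ℝ) (f : ℂ → ℂ) (z : ℂ) : ENNReal := ENNReal.ofReal (‖f z‖ ^ p)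

/-- `sup_{0<s<r} ∫_0^{2π} |Re f(s e^{iθ})|^p dθ`, with values in `[0, ∞]`. -/
noncomputable def supCirc (p : ℝ) (f : ℂ → ℂ) (r : ℝ) : ENNReal :=
  ⨆ s ∈ Ioo (0:ℝ) r, circLInt (rePow p f) s

/-- The dyadic radii `1 - 2^{-n}`. -/
noncomputable def dyad (n : ℕ) : ℝ := 1 - (1 / 2) ^ n

theorem dyad_lt_one (n : ℕ) : dyad n < 1 := by
  have : (0:ℝ) < (1 / 2) ^ n := by positivity
  simp only [dyad]; linarith

theorem dyad_nonneg (n : ℕ) : 0 ≤ dyad n := by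
  have : ((1:ℝ) / 2) ^ n ≤ 1 := pow_le_one₀ (by norm_num) (by norm_num)
  simp only [dyad]; linarith

theorem dyad_mono : Monotone dyad := by
  intro m n h
  have : ((1:ℝ) / 2) ^ n ≤ (1 / 2) ^ m := pow_le_pow_of_le_one (by norm_num) (by norm_num) h
  simp only [dyad]; linarith

theorem supCirc_mono (p : ℝ) (f : ℂ → ℂ) : Monotone (supCirc p f) := by
  intro a b hab
  exact biSup_mono fun s hs => ⟨hs.1, hs.2.trans_le hab⟩

/-- Monotonicity of the means of `|f|^p`; `|f|^p` is extended continuously to the plane by Tietze so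
that `circleAverage_mono_of_submean` applies. -/
theorem circLInt_normPow_mono {p : ℝ} (hp : 0 < p) {f : ℂ → ℂ}
    (hf : DifferentiableOn ℂ f (Metric.ball 0 1)) {s r : ℝ} (hs : 0 ≤ s) (hsr : s ≤ r)
    (hr : r < 1) : circLInt (normPow p f) s ≤ circLInt (normPow p f) r := by
  have hsub : Metric.closedBall (0:ℂ) r ⊆ Metric.ball 0 1 := Metric.closedBall_subset_ball hr
  have hc : ContinuousOn (fun z => ‖f z‖ ^ p) (Metric.closedBall (0:ℂ) r) :=
    ContinuousOn.rpow_const (hf.continuousOn.mono hsub).norm fun x _ => Or.inr hp.le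
  obtain ⟨v, hv⟩ := ContinuousMap.exists_restrict_eq (Y := ℝ) Metric.isClosed_closedBall
    ⟨_, hc.domRestrict⟩
  have hveq : ∀ z ∈ Metric.closedBall (0:ℂ) r, v z = ‖f z‖ ^ p := by
    intro z hz
    exact congrArg (fun g => g ⟨z, hz⟩) hv
  have han : AnalyticOnNhd ℂ f (Metric.ball 0 1) := hf.analyticOnNhd Metric.isOpen_ball
  have hmono := circleAverage_mono_of_submean v.continuous hs hsr (by
    intro c ε hε hcε
    have h1 := submean_rpow hp hε (han.mono (hcε.trans hsub))
    rw [hveq c (hcε (Metric.mem_closedBall_self hε.le))]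
    refine h1.trans (le_of_eq (Real.circleAverage_congr_sphere ?_))
    intro z hz
    rw [abs_of_pos hε] at hz
    exact (hveq z (hcε (Metric.sphere_subset_closedBall hz))).symm)
  have hform : ∀ t, 0 ≤ t → t ≤ r → circLInt (normPow p f) t =
      ENNReal.ofReal (2 * Real.pi * Real.circleAverage v 0 t) := by
    intro t ht htr
    have h1 : circLInt (normPow p f) t =
        ∫⁻ θ in Ioc 0 (2 * Real.pi), ENNReal.ofReal (v (circleMap 0 t θ)) := by
      rw [circLInt]
      congr 1; funext θ
      rw [normPow, hveq]
      simpa [abs_of_nonneg ht] using htr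
    rw [h1, ← ofReal_integral_eq_lintegral_ofReal]
    · rw [Real.circleAverage, intervalIntegral.integral_of_le (by positivity), smul_eq_mul]
      congr 1
      field_simp
    · exact (v.continuous.comp (continuous_circleMap 0 t)).integrableOn_Ioc
    · refine ae_of_all _ fun θ => ?_
      show 0 ≤ v (circleMap 0 t θ)
      rw [hveq _ (by simpa [abs_of_nonneg ht] using htr)]
      positivity
  rw [hform s hs hsr, hform r (hs.trans hsr) le_rfl]
  apply ENNReal.ofReal_le_ofReal
  gcongr

theorem ofReal_add3_rpow_le {p : ℝ} (hp : 0 < p) {x y z : ℝ} (hx : 0 ≤ x) (hy : 0 ≤ y)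
    (hz : 0 ≤ z) {B : ENNReal} (hxB : ENNReal.ofReal (x ^ p) ≤ B)
    (hyB : ENNReal.ofReal (y ^ p) ≤ B) (hzB : ENNReal.ofReal (z ^ p) ≤ B) :
    ENNReal.ofReal ((x + y + z) ^ p) ≤ ENNReal.ofReal (3 ^ p) * B := by
  have key : ∀ m, 0 ≤ m → x ≤ m → y ≤ m → z ≤ m → ENNReal.ofReal (m ^ p) ≤ B →
      ENNReal.ofReal ((x + y + z) ^ p) ≤ ENNReal.ofReal (3 ^ p) * B := by
    intro m hm h1 h2 h3 hB
    refine le_trans ?_ (mul_le_mul_right hB _)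
    rw [← ENNReal.ofReal_mul (by positivity), ← Real.mul_rpow (by norm_num) hm]
    exact ENNReal.ofReal_le_ofReal (Real.rpow_le_rpow (by positivity) (by linarith) hp.le)
  rcases le_total x y with h | h <;> rcases le_total y z with h' | h' <;>
    rcases le_total x z with h'' | h''
  · exact key z hz (by linarith) (by linarith) le_rfl hzB
  · exact key z hz (by linarith) (by linarith) le_rfl hzB
  · exact key y hy (by linarith) le_rfl (by linarith) hyB
  · exact key y hy (by linarith) le_rfl (by linarith) hyB
  · exact key z hz (by linarith) (by linarith) le_rfl hzB
  · exact key x hx le_rfl (by linarith) (by linarith) hxB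
  · exact key x hx le_rfl (by linarith) (by linarith) hxB
  · exact key x hx le_rfl (by linarith) (by linarith) hxB

/-- The increment of `f` between consecutive dyadic radii on a ray; `f 0` is added to the first
one, so that the increments sum up to a bound for `f`. -/
noncomputable def dyadInc (f : ℂ → ℂ) (ζ : ℂ) (n : ℕ) : ℝ :=
  (if n = 0 then ‖f 0‖ else 0) + ‖f (ζ * (dyad (n + 1) : ℝ)) - f (ζ * (dyad n : ℝ))‖

theorem dyadInc_nonneg (f : ℂ → ℂ) (ζ : ℂ) (n : ℕ) : 0 ≤ dyadInc f ζ n := by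
  unfold dyadInc; positivity

theorem norm_le_sum_dyadInc (f : ℂ → ℂ) (ζ : ℂ) (N : ℕ) :
    ‖f (ζ * (dyad (N + 1) : ℝ))‖ ≤ ∑ n ∈ Finset.range (N + 1), dyadInc f ζ n := by
  induction N with
  | zero =>
    have h := norm_le_norm_add_norm_sub' (f (ζ * (dyad 1 : ℝ))) (f 0)
    simp only [zero_add, Finset.sum_range_one, dyadInc, if_true]
    have : ζ * ((dyad 0 : ℝ) : ℂ) = 0 := by simp [dyad]
    rw [this]
    exact h
  | succ N ih =>
    rw [Finset.sum_range_succ]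
    have h := norm_le_norm_add_norm_sub' (f (ζ * (dyad (N + 1 + 1) : ℝ))) (f (ζ * (dyad (N + 1) : ℝ)))
    have : dyadInc f ζ (N + 1) = ‖f (ζ * (dyad (N + 1 + 1) : ℝ)) - f (ζ * (dyad (N + 1) : ℝ))‖ := by
      simp [dyadInc]
    rw [this]
    linarith

/-- Centre of the disc used to compare `f` at the radii `dyad n` and `dyad (n + 1)`. -/
noncomputable def midC (n : ℕ) : ℝ := 1 - 3 / 4 * (1 / 2) ^ n

/-- Radius of the disc around `midC n`. -/
noncomputable def midR (n : ℕ) : ℝ := (1 / 2) ^ n / 2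

theorem norm_lt_of_mem_mid {n : ℕ} {v : ℂ} (hv : v ∈ Metric.ball (midC n : ℂ) (midR n)) :
    ‖v‖ < dyad (n + 2) := by
  have h1 : ((1:ℝ) / 2) ^ n ≤ 1 := pow_le_one₀ (by norm_num) (by norm_num)
  rw [Metric.mem_ball, dist_eq_norm] at hv
  have h2 := norm_le_norm_add_norm_sub' v (midC n : ℂ)
  have h3 : ‖(midC n : ℂ)‖ = midC n := by
    rw [Complex.norm_real, Real.norm_of_nonneg]; unfold midC; linarith
  rw [h3] at h2
  unfold midC midR at *
  unfold dyad
  rw [pow_add]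
  linarith

/-- Both radii lie in the concentric half of the disc with centre `midC n` and radius `midR n`, whose
reciprocal area is of order `4 ^ n`. For `n = 0` the condition `Im f 0 = 0` gives `‖f 0‖ = |Re f 0|`. -/
theorem dyadInc_bound {p : ℝ} (hp : 0 < p) : ∃ K : ℝ, 0 < K ∧ ∀ (f : ℂ → ℂ), Measurable f →
    DifferentiableOn ℂ f (Metric.ball 0 1) → (f 0).im = 0 → ∀ (ζ : ℂ), ‖ζ‖ = 1 → ∀ n : ℕ,
    ENNReal.ofReal (dyadInc f ζ n ^ p) ≤ ENNReal.ofReal (K * 4 ^ n) *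
      ∫⁻ v in Metric.ball (midC n : ℂ) (midR n), rePow p f (ζ * v) := by
  obtain ⟨K₁, hK₁, h₁⟩ := local_center hp
  obtain ⟨K₂, hK₂, h₂⟩ := local_osc hp
  refine ⟨3 ^ p * (16 * (K₁ + K₂)), by positivity, ?_⟩
  intro f hfm hf hf0 ζ hζ n
  have hn : (0:ℝ) < (1 / 2) ^ n := by positivity
  have hball : Metric.ball (midC n : ℂ) (midR n) ⊆ Metric.ball 0 1 := by
    intro v hv
    rw [mem_ball_zero_iff]
    exact (norm_lt_of_mem_mid hv).trans (dyad_lt_one _)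
  set g : ℂ → ℂ := fun v => f (ζ * v) with hg
  have hgm : Measurable g := hfm.comp (measurable_const_mul ζ)
  have hgd : DifferentiableOn ℂ g (Metric.ball 0 1) := by
    refine hf.comp (by fun_prop) ?_
    intro v hv
    rw [mem_ball_zero_iff] at hv ⊢
    rwa [norm_mul, hζ, one_mul]
  set I := ∫⁻ v in Metric.ball (midC n : ℂ) (midR n), rePow p f (ζ * v) with hI
  have hR0 : 0 < midR n := by unfold midR; positivity
  have h4 : (4:ℝ) ^ n * ((1 / 2) ^ n) ^ 2 = 1 := by
    rw [← pow_mul, mul_comm n 2, pow_mul, ← mul_pow]; norm_num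
  have hosc : ∀ x : ℝ, ‖(x:ℂ) - midC n‖ ≤ midR n / 2 →
      ENNReal.ofReal (‖g x - g (midC n)‖ ^ p) ≤
        ENNReal.ofReal (16 * (K₁ + K₂) * 4 ^ n) * I := by
    intro x hx
    have h3 := h₂ g hgm (midC n) (midR n) hR0 (hgd.mono hball) x hx
    calc ENNReal.ofReal (‖g x - g (midC n)‖ ^ p)
        = ENNReal.ofReal (4 * 4 ^ n) * ENNReal.ofReal (midR n ^ 2 * ‖g x - g (midC n)‖ ^ p) := by
          rw [← ENNReal.ofReal_mul (by positivity)]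
          congr 1
          have : 4 * 4 ^ n * (midR n ^ 2 * ‖g x - g (midC n)‖ ^ p) =
            (4 ^ n * ((1 / 2) ^ n) ^ 2) * ‖g x - g (midC n)‖ ^ p := by unfold midR; ring
          rw [this, h4, one_mul]
      _ ≤ ENNReal.ofReal (4 * 4 ^ n) * (ENNReal.ofReal K₂ * I) := by gcongr; exact h3
      _ = ENNReal.ofReal (4 * 4 ^ n * K₂) * I := by
          rw [← mul_assoc, ← ENNReal.ofReal_mul (by positivity)]
      _ ≤ _ := by
          refine mul_le_mul_left (ENNReal.ofReal_le_ofReal ?_) _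
          have h5 : (0:ℝ) < 4 ^ n := by positivity
          nlinarith [mul_pos h5 hK₁, mul_pos h5 hK₂]
  have hA := hosc (dyad (n + 1)) (by
    rw [← Complex.ofReal_sub, Complex.norm_real, Real.norm_eq_abs, abs_le]
    unfold dyad midC midR
    rw [pow_succ]
    constructor <;> linarith)
  have hB := hosc (dyad n) (by
    rw [← Complex.ofReal_sub, Complex.norm_real, Real.norm_eq_abs, abs_le]
    unfold dyad midC midR
    constructor <;> linarith)
  have hC : ENNReal.ofReal ((if n = 0 then ‖f 0‖ else 0) ^ p) ≤
      ENNReal.ofReal (16 * (K₁ + K₂) * 4 ^ n) * I := by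
    by_cases h0 : n = 0
    · subst h0
      have hsub : Metric.ball (0:ℂ) (1 / 4) ⊆ Metric.ball (midC 0 : ℂ) (midR 0) := by
        apply Metric.ball_subset_ball'
        rw [dist_zero_left, Complex.norm_real, Real.norm_eq_abs]
        unfold midC midR
        norm_num [abs_of_pos]
      have h5 := (h₁ g hgm 0 (1 / 4) (by norm_num) (hgd.mono (hsub.trans hball))).trans
        (mul_le_mul_right (lintegral_mono_set hsub) _)
      have hn0 : ‖f 0‖ = |(f 0).re| := by
        have : f 0 = ((f 0).re : ℂ) := Complex.ext (by simp) (by simp [hf0])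
        rw [this, Complex.norm_real]; simp
      have hg0 : g 0 = f 0 := by simp [hg]
      rw [hg0] at h5
      simp only [if_true, hn0, pow_zero, mul_one]
      calc ENNReal.ofReal (|(f 0).re| ^ p)
          = ENNReal.ofReal 16 * ENNReal.ofReal ((1 / 4) ^ 2 * |(f 0).re| ^ p) := by
            rw [← ENNReal.ofReal_mul (by positivity)]; congr 1; ring
        _ ≤ ENNReal.ofReal 16 * (ENNReal.ofReal K₁ * I) := by gcongr; exact h5
        _ = ENNReal.ofReal (16 * K₁) * I := by
            rw [← mul_assoc, ← ENNReal.ofReal_mul (by positivity)]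
        _ ≤ _ := by gcongr; linarith
    · simp [h0, Real.zero_rpow hp.ne']
  have hn0 : 0 ≤ (if n = 0 then ‖f 0‖ else 0) := by positivity
  have h6 := ofReal_add3_rpow_le hp hn0 (norm_nonneg _) (norm_nonneg _) hC hA hB
  calc ENNReal.ofReal (dyadInc f ζ n ^ p) ≤ _ := by
        refine le_trans ?_ h6
        apply ENNReal.ofReal_le_ofReal
        refine Real.rpow_le_rpow (dyadInc_nonneg _ _ _) ?_ hp.le
        unfold dyadInc
        rw [add_assoc]
        gcongr
        rw [norm_sub_rev (g (dyad n : ℝ))]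
        exact norm_sub_le_norm_sub_add_norm_sub _ _ _
    _ = _ := by
        rw [← mul_assoc, ← ENNReal.ofReal_mul (by positivity)]
        congr 2; ring

/-- `dyadInc_bound` averaged over rotations, with Tonelli's theorem. -/
theorem dyadInc_circ_bound {p : ℝ} (hp : 0 < p) : ∃ K : ℝ, 0 < K ∧ ∀ (f : ℂ → ℂ), Measurable f →
    DifferentiableOn ℂ f (Metric.ball 0 1) → (f 0).im = 0 → ∀ n : ℕ,
    ∫⁻ θ in Ioc 0 (2 * Real.pi),
      ENNReal.ofReal (dyadInc f (Complex.exp ((θ : ℝ) * Complex.I)) n ^ p) ≤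
      ENNReal.ofReal K * supCirc p f (dyad (n + 2)) := by
  obtain ⟨K, hK, hb⟩ := dyadInc_bound hp
  refine ⟨K * Real.pi / 4, by positivity, ?_⟩
  intro f hfm hf hf0 n
  have hrm : Measurable (rePow p f) := by unfold rePow; fun_prop
  calc _ ≤ ∫⁻ θ in Ioc 0 (2 * Real.pi), ENNReal.ofReal (K * 4 ^ n) *
          ∫⁻ v in Metric.ball (midC n : ℂ) (midR n),
            rePow p f (Complex.exp ((θ : ℝ) * Complex.I) * v) :=
        lintegral_mono fun θ => hb f hfm hf hf0 _ (Complex.norm_exp_ofReal_mul_I θ) n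
    _ = ENNReal.ofReal (K * 4 ^ n) * ∫⁻ v in Metric.ball (midC n : ℂ) (midR n),
          circLInt (rePow p f) ‖v‖ := by
        rw [lintegral_const_mul' _ _ ENNReal.ofReal_ne_top, lintegral_lintegral_swap]
        · simp_rw [circLInt_rotate]
        · apply Measurable.aemeasurable
          apply hrm.comp
          fun_prop
    _ ≤ ENNReal.ofReal (K * 4 ^ n) * ∫⁻ v in Metric.ball (midC n : ℂ) (midR n),
          supCirc p f (dyad (n + 2)) := by
        gcongr 1
        apply lintegral_mono_ae
        filter_upwards [ae_restrict_mem Metric.isOpen_ball.measurableSet,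
          ae_restrict_of_ae (Measure.ae_ne volume (0:ℂ))] with v hv hv0
        exact le_iSup₂_of_le ‖v‖ ⟨norm_pos_iff.2 hv0, norm_lt_of_mem_mid hv⟩ le_rfl
    _ = _ := by
        have hvol : volume (Metric.ball (midC n : ℂ) (midR n)) =
            ENNReal.ofReal (Real.pi * (midR n) ^ 2) := by
          have : 0 ≤ midR n := by unfold midR; positivity
          rw [Complex.volume_ball, ← ENNReal.ofReal_coe_nnreal, ← ENNReal.ofReal_pow this,
            ← ENNReal.ofReal_mul (by positivity)]
          congr 1; rw [mul_comm]; rfl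
        rw [setLIntegral_const, hvol, mul_comm (supCirc _ _ _), ← mul_assoc,
          ← ENNReal.ofReal_mul (by positivity)]
        congr 2
        have h4 : (4:ℝ) ^ n * ((1 / 2) ^ n) ^ 2 = 1 := by
          rw [← pow_mul, mul_comm n 2, pow_mul, ← mul_pow]; norm_num
        have : K * 4 ^ n * (Real.pi * midR n ^ 2) =
          K * Real.pi / 4 * (4 ^ n * ((1 / 2) ^ n) ^ 2) := by unfold midR; ring
        rw [this, h4, mul_one]

/-- A substitute for Minkowski's inequality valid for all `p > 0`, with a small geometric loss `lam`. -/
theorem rpow_sum_le {p lam : ℝ} (hp : 0 < p) (hl : 1 < lam) : ∃ C : ℝ, 0 < C ∧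
    ∀ (N : ℕ) (a : ℕ → ℝ), (∀ n, 0 ≤ a n) →
    (∑ n ∈ Finset.range (N + 1), a n) ^ p ≤
      C * ∑ n ∈ Finset.range (N + 1), lam ^ (N - n) * a n ^ p := by
  set μ : ℝ := lam ^ (1 / p) with hμ
  have hμ1 : 1 < μ := Real.one_lt_rpow hl (by positivity)
  have hμp : μ ^ p = lam := by
    rw [hμ, ← Real.rpow_mul (by linarith), one_div_mul_cancel hp.ne', Real.rpow_one]
  have hinv : μ⁻¹ < 1 := inv_lt_one_of_one_lt₀ hμ1
  have hμ0 : 0 < μ := by linarith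
  have hD : 0 < (1 - μ⁻¹)⁻¹ := inv_pos.2 (by linarith)
  refine ⟨((1 - μ⁻¹)⁻¹) ^ p, by positivity, ?_⟩
  intro N a ha
  obtain ⟨j, hj, hmax⟩ := Finset.exists_max_image (Finset.range (N + 1))
    (fun n => μ ^ (N - n) * a n) ⟨0, by simp⟩
  set X := μ ^ (N - j) * a j with hX
  have hX0 : 0 ≤ X := mul_nonneg (by positivity) (ha j)
  have h1 : ∑ n ∈ Finset.range (N + 1), a n ≤ (1 - μ⁻¹)⁻¹ * X := by
    calc ∑ n ∈ Finset.range (N + 1), a n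
        ≤ ∑ n ∈ Finset.range (N + 1), (μ⁻¹) ^ (N - n) * X := by
          apply Finset.sum_le_sum
          intro n hn
          have := hmax n hn
          rw [inv_pow, inv_mul_eq_div, le_div_iff₀ (by positivity), mul_comm]
          exact this
      _ = (∑ m ∈ Finset.range (N + 1), (μ⁻¹) ^ m) * X := by
          rw [← Finset.sum_mul]
          congr 1
          have := Finset.sum_range_reflect (fun m => (μ⁻¹) ^ m) (N + 1)
          rw [← this]
          apply Finset.sum_congr rfl
          intro n hn
          congr 1
      _ ≤ _ := by
          gcongr
          have h2 := hasSum_geometric_of_lt_one (by positivity) hinv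
          exact sum_le_hasSum _ (fun i _ => by positivity) h2
  calc (∑ n ∈ Finset.range (N + 1), a n) ^ p ≤ ((1 - μ⁻¹)⁻¹ * X) ^ p :=
        Real.rpow_le_rpow (Finset.sum_nonneg fun n _ => ha n) h1 hp.le
    _ = ((1 - μ⁻¹)⁻¹) ^ p * (lam ^ (N - j) * a j ^ p) := by
        rw [Real.mul_rpow hD.le hX0, hX, Real.mul_rpow (by positivity) (ha j), ← hμp,
          ← Real.rpow_natCast, ← Real.rpow_mul hμ0.le, ← Real.rpow_natCast,
          ← Real.rpow_mul hμ0.le, mul_comm p]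
    _ ≤ _ := by
        gcongr
        refine Finset.single_le_sum (f := fun n => lam ^ (N - n) * a n ^ p) ?_ hj
        intro n _
        have := Real.rpow_nonneg (ha n) p
        have : 0 < lam := by linarith
        positivity

/-- The means of `|f|^p` at dyadic radii are controlled by those of `|Re f|^p`, with geometric growth
`lam` as close to `1` as desired. -/
theorem circLInt_normPow_le {p lam : ℝ} (hp : 0 < p) (hl : 1 < lam) : ∃ K : ℝ, 0 < K ∧
    ∀ (f : ℂ → ℂ), Measurable f →
    DifferentiableOn ℂ f (Metric.ball 0 1) → (f 0).im = 0 → ∀ N : ℕ,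
    circLInt (normPow p f) (dyad (N + 1)) ≤ ENNReal.ofReal K *
      ∑ n ∈ Finset.range (N + 1), ENNReal.ofReal (lam ^ (N - n)) * supCirc p f (dyad (n + 2)) := by
  obtain ⟨C, hC, hsum⟩ := rpow_sum_le hp hl
  obtain ⟨K, hK, hb⟩ := dyadInc_circ_bound hp
  have hl0 : 0 < lam := by linarith
  refine ⟨C * K, by positivity, ?_⟩
  intro f hfm hf hf0 N
  have hmeas : ∀ n, Measurable fun θ : ℝ =>
      ENNReal.ofReal (dyadInc f (Complex.exp (θ * Complex.I)) n ^ p) := by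
    intro n
    unfold dyadInc
    have : ∀ x : ℝ, Measurable fun θ : ℝ => f (Complex.exp (θ * Complex.I) * x) :=
      fun x => hfm.comp (by fun_prop)
    have h1 := this (dyad (n + 1))
    have h2 := this (dyad n)
    fun_prop
  have hpt : ∀ θ : ℝ, normPow p f (circleMap 0 (dyad (N + 1)) θ) ≤ ENNReal.ofReal C *
      ∑ n ∈ Finset.range (N + 1), ENNReal.ofReal (lam ^ (N - n)) *
        ENNReal.ofReal (dyadInc f (Complex.exp (θ * Complex.I)) n ^ p) := by
    intro θ
    have h0 : circleMap 0 (dyad (N + 1)) θ = Complex.exp (θ * Complex.I) * (dyad (N + 1) : ℝ) := by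
      rw [circleMap, zero_add, mul_comm]
    have h1 := hsum N _ (dyadInc_nonneg f (Complex.exp (θ * Complex.I)))
    have h2 := norm_le_sum_dyadInc f (Complex.exp (θ * Complex.I)) N
    rw [normPow, h0]
    refine (ENNReal.ofReal_le_ofReal
      ((Real.rpow_le_rpow (norm_nonneg _) h2 hp.le).trans h1)).trans ?_
    rw [ENNReal.ofReal_mul hC.le, ENNReal.ofReal_sum_of_nonneg]
    · gcongr with n hn
      rw [ENNReal.ofReal_mul (by positivity)]
    · intro n _
      have := Real.rpow_nonneg (dyadInc_nonneg f (Complex.exp (θ * Complex.I)) n) p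
      positivity
  calc circLInt (normPow p f) (dyad (N + 1)) ≤ _ := lintegral_mono hpt
    _ = ENNReal.ofReal C * ∑ n ∈ Finset.range (N + 1), ENNReal.ofReal (lam ^ (N - n)) *
        ∫⁻ θ in Ioc 0 (2 * Real.pi),
          ENNReal.ofReal (dyadInc f (Complex.exp ((θ : ℝ) * Complex.I)) n ^ p) := by
        rw [lintegral_const_mul' _ _ ENNReal.ofReal_ne_top, lintegral_finsetSum]
        · congr 1
          apply Finset.sum_congr rfl
          intro n _
          rw [lintegral_const_mul' _ _ ENNReal.ofReal_ne_top]
        · intro n _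
          exact (hmeas n).const_mul _
    _ ≤ ENNReal.ofReal C * ∑ n ∈ Finset.range (N + 1), ENNReal.ofReal (lam ^ (N - n)) *
        (ENNReal.ofReal K * supCirc p f (dyad (n + 2))) := by
        gcongr with n hn
        exact hb f hfm hf hf0 n
    _ = _ := by
        rw [ENNReal.ofReal_mul hC.le, mul_assoc (ENNReal.ofReal C), Finset.mul_sum (a := ENNReal.ofReal K)]
        congr 1
        apply Finset.sum_congr rfl
        intro n _
        ring

/-! ### Discretisation for weights in `D` -/

theorem dyad_zero : dyad 0 = 0 := by simp [dyad]

theorem dyad_succ (n : ℕ) : (1 + dyad n) / 2 = dyad (n + 1) := by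
  simp only [dyad, pow_succ]; ring

theorem exists_dyad_gt {r : ℝ} (hr : r < 1) : ∃ n, r < dyad n := by
  obtain ⟨n, hn⟩ := exists_pow_lt_of_lt_one (sub_pos.2 hr) (by norm_num : (1 / 2 : ℝ) < 1)
  exact ⟨n, by simp only [dyad]; linarith⟩

theorem iUnion_dyad : Ico (0:ℝ) 1 = ⋃ n, Ico (dyad n) (dyad (n + 1)) := by
  ext r
  simp only [mem_iUnion]
  constructor
  · rintro ⟨h0, h1⟩
    classical
    have h := exists_dyad_gt h1
    have hm := Nat.find_spec h
    obtain ⟨n, hn⟩ : ∃ n, Nat.find h = n + 1 := by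
      refine Nat.exists_eq_succ_of_ne_zero fun h2 => ?_
      rw [h2, dyad_zero] at hm; linarith
    refine ⟨n, ?_, hn ▸ hm⟩
    by_contra! h3
    have := Nat.find_min' h h3
    omega
  · rintro ⟨n, h0, h1⟩
    exact ⟨(dyad_nonneg n).trans h0, h1.trans (dyad_lt_one _)⟩

theorem lintegral_dyad (F : ℝ → ENNReal) :
    ∫⁻ r in Ico 0 1, F r = ∑' n, ∫⁻ r in Ico (dyad n) (dyad (n + 1)), F r := by
  rw [iUnion_dyad]
  exact lintegral_iUnion (fun n => measurableSet_Ico) dyad_mono.pairwise_disjoint_on_Ico_succ F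

theorem lintegral_dyad_block (F : ℝ → ENNReal) (n k : ℕ) :
    ∫⁻ r in Ico (dyad n) (dyad (n + k)), F r ≤
      ∑ j ∈ Finset.range k, ∫⁻ r in Ico (dyad (n + j)) (dyad (n + j + 1)), F r := by
  induction k with
  | zero => simp
  | succ k ih =>
    rw [Finset.sum_range_succ]
    calc ∫⁻ r in Ico (dyad n) (dyad (n + (k + 1))), F r
        ≤ ∫⁻ r in Ico (dyad n) (dyad (n + k)) ∪ Ico (dyad (n + k)) (dyad (n + k + 1)), F r :=
          lintegral_mono_set (by rw [← add_assoc]; exact Ico_subset_Ico_union_Ico)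
      _ ≤ _ := lintegral_union_le _ _ _
      _ ≤ _ := by gcongr

/-- A positive decreasing sequence that loses a fixed factor every `k` steps decays fast enough
to absorb some geometric growth `lam ^ m` with `lam > 1`. -/
theorem geometric_absorb {a : ℕ → ℝ} (ha : Antitone a) (hpos : ∀ n, 0 < a n) {C : ℝ} (hC : 1 < C)
    {k : ℕ} (hk : 0 < k) (h : ∀ n, C * a (n + k) ≤ a n) :
    ∃ lam C' : ℝ, 1 < lam ∧ 0 < C' ∧ ∀ n, ∑' m, ENNReal.ofReal (lam ^ m) * ENNReal.ofReal (a (n + m))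
      ≤ ENNReal.ofReal C' * ENNReal.ofReal (a n) := by
  have hC0 : 0 < C := by linarith
  set lam : ℝ := C ^ ((1:ℝ) / ((2 * k : ℕ):ℝ)) with hlam
  have hl1 : 1 < lam := Real.one_lt_rpow hC (by positivity)
  have hl0 : 0 < lam := by linarith
  have hpow : lam ^ (2 * k) = C := by
    rw [hlam, ← Real.rpow_natCast, ← Real.rpow_mul hC0.le, one_div_mul_cancel, Real.rpow_one]
    positivity
  have hstep : ∀ j n, C ^ j * a (n + j * k) ≤ a n := by
    intro j
    induction j with
    | zero => intro n; simp
    | succ j ih =>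
      intro n
      have h1 := ih n
      have h2 := h (n + j * k)
      have h3 : (0:ℝ) < C ^ j := by positivity
      have h4 : n + (j + 1) * k = n + j * k + k := by ring
      rw [h4, pow_succ]
      nlinarith [mul_le_mul_of_nonneg_left h2 h3.le]
  have hmain : ∀ m n, lam ^ (2 * m) * a (n + m) ≤ C * a n := by
    intro m n
    have h1 := hstep (m / k) n
    have h2 : a (n + m) ≤ a (n + m / k * k) := ha (by have := Nat.div_mul_le_self m k; omega)
    have h3 : lam ^ (2 * m) ≤ C ^ (m / k) * C := by
      rw [← pow_succ, ← hpow, ← pow_mul]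
      refine pow_le_pow_right₀ hl1.le ?_
      have := Nat.lt_mul_div_succ m hk
      nlinarith
    calc lam ^ (2 * m) * a (n + m) ≤ (C ^ (m / k) * C) * a (n + m / k * k) :=
          mul_le_mul h3 h2 (hpos _).le (by positivity)
      _ = C * (C ^ (m / k) * a (n + m / k * k)) := by ring
      _ ≤ C * a n := by gcongr
  have hinv : lam⁻¹ < 1 := inv_lt_one_of_one_lt₀ hl1
  refine ⟨lam, C * (1 - lam⁻¹)⁻¹, hl1, mul_pos hC0 (inv_pos.2 (by linarith)), fun n => ?_⟩
  have hterm : ∀ m, ENNReal.ofReal (lam ^ m) * ENNReal.ofReal (a (n + m)) ≤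
      ENNReal.ofReal (C * a n) * ENNReal.ofReal (lam⁻¹ ^ m) := by
    intro m
    rw [← ENNReal.ofReal_mul (by positivity), ← ENNReal.ofReal_mul (mul_pos hC0 (hpos n)).le]
    refine ENNReal.ofReal_le_ofReal ?_
    rw [inv_pow, ← div_eq_mul_inv, le_div_iff₀ (by positivity)]
    have := hmain m n
    calc _ = lam ^ (2 * m) * a (n + m) := by ring
      _ ≤ _ := this
  refine (ENNReal.tsum_le_tsum hterm).trans (le_of_eq ?_)
  rw [ENNReal.tsum_mul_left, ← ENNReal.ofReal_tsum_of_nonneg (fun m => by positivity)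
    (summable_geometric_of_lt_one (by positivity) hinv), tsum_geometric_of_lt_one (by positivity) hinv,
    ← ENNReal.ofReal_mul (mul_pos hC0 (hpos n)).le, ← ENNReal.ofReal_mul
      (mul_pos hC0 (inv_pos.2 (by linarith))).le]
  congr 1; ring

/-- The weight `W` on `[0,1)` with finite positive tails `T`, in the class `D`. -/
structure TailData (W : ℝ → ENNReal) (T : ℝ → ℝ) : Prop where
  meas : Measurable W
  tail : ∀ r ∈ Ico (0:ℝ) 1, ENNReal.ofReal (T r) = ∫⁻ s in Ico r 1, W s
  pos : ∀ r ∈ Ico (0:ℝ) 1, 0 < T r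
  dhat : ∃ C : ℝ, 1 ≤ C ∧ ∀ r ∈ Ico (0:ℝ) 1, T r ≤ C * T ((1 + r) / 2)
  dcheck : ∃ K C : ℝ, 1 < K ∧ 1 < C ∧ ∀ r ∈ Ico (0:ℝ) 1, C * T (1 - (1 - r) / K) ≤ T r

namespace TailData
variable {W : ℝ → ENNReal} {T : ℝ → ℝ}

theorem anti (h : TailData W T) {r s : ℝ} (hr : 0 ≤ r) (hrs : r ≤ s) (hs : s < 1) : T s ≤ T r := by
  refine (ENNReal.ofReal_le_ofReal_iff (h.pos r ⟨hr, hrs.trans_lt hs⟩).le).1 ?_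
  rw [h.tail s ⟨hr.trans hrs, hs⟩, h.tail r ⟨hr, hrs.trans_lt hs⟩]
  exact lintegral_mono_set (Ico_subset_Ico_left hrs)

theorem dyad_mem (n : ℕ) : dyad n ∈ Ico (0:ℝ) 1 := ⟨dyad_nonneg n, dyad_lt_one n⟩

theorem seq_anti (h : TailData W T) : Antitone fun n => T (dyad n) :=
  fun _ _ hmn => h.anti (dyad_nonneg _) (dyad_mono hmn) (dyad_lt_one _)

/-- `D̂` along the dyadic radii. -/
theorem seq_doubling (h : TailData W T) :
    ∃ C : ℝ, 1 ≤ C ∧ ∀ n, T (dyad n) ≤ C * T (dyad (n + 1)) := by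
  obtain ⟨C, hC, hd⟩ := h.dhat
  exact ⟨C, hC, fun n => by simpa only [dyad_succ] using hd (dyad n) (dyad_mem n)⟩

/-- `Ď` along the dyadic radii. -/
theorem seq_decay (h : TailData W T) :
    ∃ (C : ℝ) (k : ℕ), 1 < C ∧ 0 < k ∧ ∀ n, C * T (dyad (n + k)) ≤ T (dyad n) := by
  obtain ⟨K, C, hK, hC, hd⟩ := h.dcheck
  obtain ⟨k, hk⟩ := pow_unbounded_of_one_lt K (by norm_num : (1:ℝ) < 2)
  have hk0 : 0 < k := by
    rcases Nat.eq_zero_or_pos k with rfl | h0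
    · simp at hk; linarith
    · exact h0
  refine ⟨C, k, hC, hk0, fun n => ?_⟩
  refine le_trans ?_ (hd (dyad n) (dyad_mem n))
  have hlt : (1 - dyad n) / K > 0 := div_pos (sub_pos.2 (dyad_lt_one n)) (by linarith)
  have hle : (1 - dyad n) / K ≤ 1 - dyad n :=
    div_le_self (sub_pos.2 (dyad_lt_one n)).le hK.le
  refine mul_le_mul_of_nonneg_left (h.anti ?_ ?_ (dyad_lt_one _)) (by linarith)
  · linarith [dyad_nonneg n]
  · have : ((1:ℝ) / 2) ^ (n + k) ≤ (1 / 2) ^ n / K := by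
      rw [le_div_iff₀ (by linarith), pow_add, mul_assoc]
      refine mul_le_of_le_one_right (by positivity) ?_
      rw [one_div, inv_pow, inv_mul_le_iff₀ (by positivity)]
      linarith
    simp only [dyad, sub_sub_cancel]
    linarith

theorem block_le (h : TailData W T) (n : ℕ) :
    ∫⁻ r in Ico (dyad n) (dyad (n + 1)), W r ≤ ENNReal.ofReal (T (dyad n)) := by
  rw [h.tail _ (dyad_mem n)]
  exact lintegral_mono_set (Ico_subset_Ico_right (dyad_lt_one _).le)

/-- Dyadic upper bound for the integral against `ω` of a function bounded on each dyadic block. -/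
theorem upper (h : TailData W T) {F : ℝ → ENNReal} {b : ℕ → ENNReal}
    (hF : ∀ n, ∀ r ∈ Ico (dyad n) (dyad (n + 1)), F r ≤ b n) :
    ∫⁻ r in Ico 0 1, F r * W r ≤ ∑' n, b n * ENNReal.ofReal (T (dyad n)) := by
  rw [lintegral_dyad]
  refine ENNReal.tsum_le_tsum fun n => ?_
  calc _ ≤ ∫⁻ r in Ico (dyad n) (dyad (n + 1)), b n * W r :=
        setLIntegral_mono' measurableSet_Ico fun r hr => mul_le_mul_left (hF n r hr) _
    _ = b n * ∫⁻ r in Ico (dyad n) (dyad (n + 1)), W r := lintegral_const_mul _ h.meas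
    _ ≤ _ := mul_le_mul_right (h.block_le n) _

/-- By `Ď` the block `[dyad n, dyad (n + k))` carries a fixed proportion of the tail mass, and these
blocks overlap at most `k` times. -/
theorem lower (h : TailData W T) : ∃ C : ℝ, 0 < C ∧ ∀ (F : ℝ → ENNReal) (b : ℕ → ENNReal),
    (∀ n, ∀ r ∈ Ico (dyad n) 1, b n ≤ F r) →
    ∑' n, b n * ENNReal.ofReal (T (dyad n)) ≤
      ENNReal.ofReal C * ∫⁻ r in Ico 0 1, F r * W r := by
  obtain ⟨C, k, hC, hk, hd⟩ := h.seq_decay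
  have hC0 : 0 < C := by linarith
  have hC1 : 0 < 1 - C⁻¹ := sub_pos.2 (inv_lt_one_of_one_lt₀ hC)
  have hmass : ∀ n, ENNReal.ofReal (T (dyad n)) ≤ ENNReal.ofReal (1 - C⁻¹)⁻¹ *
      ∫⁻ r in Ico (dyad n) (dyad (n + k)), W r := by
    intro n
    have h1 : ENNReal.ofReal (T (dyad n)) ≤ (∫⁻ r in Ico (dyad n) (dyad (n + k)), W r) +
        ENNReal.ofReal (T (dyad (n + k))) := by
      rw [h.tail _ (dyad_mem n), h.tail _ (dyad_mem (n + k))]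
      exact (lintegral_mono_set Ico_subset_Ico_union_Ico).trans (lintegral_union_le _ _ _)
    have h2 : ENNReal.ofReal (T (dyad n) - T (dyad (n + k))) ≤
        ∫⁻ r in Ico (dyad n) (dyad (n + k)), W r := by
      rw [ENNReal.ofReal_sub _ (h.pos _ (dyad_mem _)).le]
      exact tsub_le_iff_right.2 h1
    refine le_trans ?_ (mul_le_mul_right h2 _)
    rw [← ENNReal.ofReal_mul (inv_pos.2 hC1).le]
    refine ENNReal.ofReal_le_ofReal ?_
    rw [le_inv_mul_iff₀ hC1]
    have h3 : T (dyad (n + k)) ≤ C⁻¹ * T (dyad n) := by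
      rw [le_inv_mul_iff₀ hC0]; exact hd n
    nlinarith
  refine ⟨(1 - C⁻¹)⁻¹ * k, mul_pos (inv_pos.2 hC1) (by exact_mod_cast hk), fun F b hF => ?_⟩
  set J : ℕ → ENNReal := fun n => ∫⁻ r in Ico (dyad n) (dyad (n + 1)), F r * W r with hJ
  have hterm : ∀ n, b n * ENNReal.ofReal (T (dyad n)) ≤
      ENNReal.ofReal (1 - C⁻¹)⁻¹ * ∑ j ∈ Finset.range k, J (n + j) := by
    intro n
    calc b n * ENNReal.ofReal (T (dyad n)) ≤ b n * (ENNReal.ofReal (1 - C⁻¹)⁻¹ *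
          ∫⁻ r in Ico (dyad n) (dyad (n + k)), W r) := mul_le_mul_right (hmass n) _
      _ = ENNReal.ofReal (1 - C⁻¹)⁻¹ * ∫⁻ r in Ico (dyad n) (dyad (n + k)), b n * W r := by
          rw [lintegral_const_mul _ h.meas]; ring
      _ ≤ ENNReal.ofReal (1 - C⁻¹)⁻¹ * ∫⁻ r in Ico (dyad n) (dyad (n + k)), F r * W r := by
          refine mul_le_mul_right (setLIntegral_mono' measurableSet_Ico fun r hr => ?_) _
          exact mul_le_mul_left (hF n r ⟨hr.1, hr.2.trans (dyad_lt_one _)⟩) _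
      _ ≤ _ := mul_le_mul_right (lintegral_dyad_block _ n k) _
  calc _ ≤ ∑' n, ENNReal.ofReal (1 - C⁻¹)⁻¹ * ∑ j ∈ Finset.range k, J (n + j) :=
        ENNReal.tsum_le_tsum hterm
    _ = ENNReal.ofReal (1 - C⁻¹)⁻¹ * ∑ j ∈ Finset.range k, ∑' n, J (n + j) := by
        rw [ENNReal.tsum_mul_left, Summable.tsum_finsetSum fun _ _ => ENNReal.summable]
    _ ≤ ENNReal.ofReal (1 - C⁻¹)⁻¹ * ∑ j ∈ Finset.range k, ∑' n, J n := by
        refine mul_le_mul_right (Finset.sum_le_sum fun j _ => ?_) _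
        exact ENNReal.tsum_comp_le_tsum_of_injective (add_left_injective j) J
    _ = _ := by
        rw [Finset.sum_const, Finset.card_range, ENNReal.ofReal_mul (inv_pos.2 hC1).le,
          ENNReal.ofReal_natCast, lintegral_dyad, nsmul_eq_mul, mul_assoc]

/-- The discretised quantity `∑ sup_{s < dyad n} ∫ |Re f(s e^{iθ})|^p dθ · T (dyad n)` to which all
three quantities are compared. -/
noncomputable def discr (p : ℝ) (f : ℂ → ℂ) (T : ℝ → ℝ) : ENNReal :=
  ∑' n, supCirc p f (dyad n) * ENNReal.ofReal (T (dyad n))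

theorem supCirc_dyad_zero (p : ℝ) (f : ℂ → ℂ) : supCirc p f (dyad 0) = 0 := by
  simp [supCirc, dyad_zero]

/-- By `D̂` the dyadic index may be shifted. -/
theorem shift_le (h : TailData W T) (j : ℕ) : ∃ C : ℝ, 0 < C ∧ ∀ p f,
    ∑' n, supCirc p f (dyad (n + j)) * ENNReal.ofReal (T (dyad n)) ≤
      ENNReal.ofReal C * discr p f T := by
  obtain ⟨C, hC, hd⟩ := h.seq_doubling
  have hC0 : 0 < C := by linarith
  have hit : ∀ j n, T (dyad n) ≤ C ^ j * T (dyad (n + j)) := by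
    intro j
    induction j with
    | zero => intro n; simp
    | succ j ih =>
      intro n
      refine (ih n).trans ?_
      rw [pow_succ, mul_assoc]
      exact mul_le_mul_of_nonneg_left (hd _) (by positivity)
  refine ⟨C ^ j, by positivity, fun p f => ?_⟩
  calc _ ≤ ∑' n, ENNReal.ofReal (C ^ j) *
        (supCirc p f (dyad (n + j)) * ENNReal.ofReal (T (dyad (n + j)))) := by
        refine ENNReal.tsum_le_tsum fun n => ?_
        rw [mul_left_comm, ← ENNReal.ofReal_mul (by positivity)]
        exact mul_le_mul_right (ENNReal.ofReal_le_ofReal (hit j n)) _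
    _ ≤ _ := by
        rw [ENNReal.tsum_mul_left]
        exact mul_le_mul_right (ENNReal.tsum_comp_le_tsum_of_injective (add_left_injective j)
          fun n => supCirc p f (dyad n) * ENNReal.ofReal (T (dyad n))) _

theorem supW_le (h : TailData W T) : ∃ C : ℝ, 0 < C ∧ ∀ p f,
    ∫⁻ r in Ico 0 1, supCirc p f r * W r ≤ ENNReal.ofReal C * discr p f T := by
  obtain ⟨C, hC, hs⟩ := h.shift_le 1
  exact ⟨C, hC, fun p f => (h.upper fun n r hr => supCirc_mono p f hr.2.le).trans (hs p f)⟩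

theorem le_supW (h : TailData W T) : ∃ C : ℝ, 0 < C ∧ ∀ p f,
    discr p f T ≤ ENNReal.ofReal C * ∫⁻ r in Ico 0 1, supCirc p f r * W r := by
  obtain ⟨C, hC, hs⟩ := h.lower
  exact ⟨C, hC, fun p f => hs _ _ fun n r hr => supCirc_mono p f hr.1⟩

theorem volume_block (n : ℕ) : volume (Ico (dyad n) (dyad (n + 1))) =
    ENNReal.ofReal ((1 / 2) ^ (n + 1)) := by
  rw [Real.volume_Ico]; congr 1; simp only [dyad, pow_succ]; ring

theorem assoc_block_le (h : TailData W T) {n : ℕ} {r : ℝ} (hr : r ∈ Ico (dyad n) (dyad (n + 1))) :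
    T r / (1 - r) ≤ 2 ^ (n + 1) * T (dyad n) := by
  have h1 := dyad_lt_one (n + 1)
  have h2 := h.anti (dyad_nonneg n) hr.1 (hr.2.trans h1)
  have h3 : (1 / 2 : ℝ) ^ (n + 1) ≤ 1 - r := by
    have := hr.2; simp only [dyad] at this; linarith
  have h4 := h.pos _ (dyad_mem n)
  have h5 : (0:ℝ) < (1 / 2) ^ (n + 1) := by positivity
  calc T r / (1 - r) ≤ T (dyad n) / (1 / 2) ^ (n + 1) := div_le_div₀ h4.le h2 h5 h3
    _ = _ := by rw [one_div, inv_pow, div_inv_eq_mul, mul_comm]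

theorem le_assoc_block (h : TailData W T) {n : ℕ} {r : ℝ} (hr : r ∈ Ico (dyad n) (dyad (n + 1))) :
    2 ^ n * T (dyad (n + 1)) ≤ T r / (1 - r) := by
  have h1 := dyad_lt_one (n + 1)
  have h2 := h.anti ((dyad_nonneg n).trans hr.1) hr.2.le h1
  have h3 : 1 - r ≤ (1 / 2 : ℝ) ^ n := by
    have := hr.1; simp only [dyad] at this; linarith
  have h4 := h.pos _ (dyad_mem (n + 1))
  have h5 : 0 < 1 - r := by linarith [hr.2]
  rw [le_div_iff₀ h5]
  have h6 : (2:ℝ) ^ n * (1 / 2) ^ n = 1 := by rw [← mul_pow]; norm_num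
  calc 2 ^ n * T (dyad (n + 1)) * (1 - r) ≤ 2 ^ n * T (dyad (n + 1)) * (1 / 2) ^ n := by
        gcongr
    _ = (2 ^ n * (1 / 2) ^ n) * T (dyad (n + 1)) := by ring
    _ ≤ T r := by rw [h6, one_mul]; exact h2

/-- Dyadic upper bound for the integral against `ω̃` of a function bounded on each dyadic block. -/
theorem assoc_upper (h : TailData W T) {F : ℝ → ENNReal} {b : ℕ → ENNReal}
    (hF : ∀ n, ∀ r ∈ Ico (dyad n) (dyad (n + 1)), F r ≤ b n) :
    ∫⁻ r in Ico 0 1, F r * ENNReal.ofReal (T r / (1 - r)) ≤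
      ∑' n, b n * ENNReal.ofReal (T (dyad n)) := by
  rw [lintegral_dyad]
  refine ENNReal.tsum_le_tsum fun n => ?_
  calc _ ≤ ∫⁻ r in Ico (dyad n) (dyad (n + 1)), b n * ENNReal.ofReal (2 ^ (n + 1) * T (dyad n)) :=
        setLIntegral_mono' measurableSet_Ico fun r hr =>
          mul_le_mul' (hF n r hr) (ENNReal.ofReal_le_ofReal (h.assoc_block_le hr))
    _ = _ := by
        rw [setLIntegral_const, volume_block, mul_assoc, ← ENNReal.ofReal_mul
          (mul_pos (by positivity) (h.pos _ (dyad_mem n))).le]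
        congr 2
        rw [mul_right_comm, ← mul_pow]; norm_num

theorem supAssoc_le (h : TailData W T) : ∃ C : ℝ, 0 < C ∧ ∀ p f,
    ∫⁻ r in Ico 0 1, supCirc p f r * ENNReal.ofReal (T r / (1 - r)) ≤
      ENNReal.ofReal C * discr p f T := by
  obtain ⟨C, hC, hs⟩ := h.shift_le 1
  exact ⟨C, hC, fun p f => (h.assoc_upper fun n r hr => supCirc_mono p f hr.2.le).trans (hs p f)⟩

theorem le_supAssoc (h : TailData W T) : ∃ C : ℝ, 0 < C ∧ ∀ p f,
    discr p f T ≤ ENNReal.ofReal C *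
      ∫⁻ r in Ico 0 1, supCirc p f r * ENNReal.ofReal (T r / (1 - r)) := by
  obtain ⟨C, hC, hd⟩ := h.seq_doubling
  have hC0 : 0 < C := by linarith
  refine ⟨2 * C, by positivity, fun p f => ?_⟩
  rw [lintegral_dyad, ← ENNReal.tsum_mul_left]
  refine ENNReal.tsum_le_tsum fun n => ?_
  have h1 : supCirc p f (dyad n) * ENNReal.ofReal (2⁻¹ * T (dyad (n + 1))) ≤
      ∫⁻ r in Ico (dyad n) (dyad (n + 1)), supCirc p f r * ENNReal.ofReal (T r / (1 - r)) := by
    calc _ = ∫⁻ r in Ico (dyad n) (dyad (n + 1)),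
          supCirc p f (dyad n) * ENNReal.ofReal (2 ^ n * T (dyad (n + 1))) := by
          rw [setLIntegral_const, volume_block, mul_assoc, ← ENNReal.ofReal_mul
            (mul_pos (by positivity) (h.pos _ (dyad_mem _))).le]
          congr 2
          rw [mul_right_comm, pow_succ, ← mul_assoc, ← mul_pow]; norm_num
      _ ≤ _ := setLIntegral_mono' measurableSet_Ico fun r hr =>
          mul_le_mul' (supCirc_mono p f hr.1) (ENNReal.ofReal_le_ofReal (h.le_assoc_block hr))
  refine le_trans ?_ (mul_le_mul_right h1 _)
  rw [mul_left_comm, ← ENNReal.ofReal_mul (by positivity)]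
  refine mul_le_mul_right (ENNReal.ofReal_le_ofReal ?_) _
  linarith [hd n]

theorem le_bergman (h : TailData W T) {p : ℝ} (hp : 0 < p) : ∃ C : ℝ, 0 < C ∧ ∀ f : ℂ → ℂ,
    DifferentiableOn ℂ f (Metric.ball 0 1) →
    discr p f T ≤ ENNReal.ofReal C *
      ∫⁻ r in Ico 0 1, (ENNReal.ofReal r * circLInt (normPow p f) r) * W r := by
  obtain ⟨C, hC, hs⟩ := h.lower
  refine ⟨2 * C, by positivity, fun f hf => ?_⟩
  have h1 := hs (fun r => 2 * (ENNReal.ofReal r * circLInt (normPow p f) r))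
    (fun n => supCirc p f (dyad n)) (by
      intro n r hr
      rcases Nat.eq_zero_or_pos n with rfl | hn
      · simp [supCirc_dyad_zero]
      have hr2 : 1 / 2 ≤ r := by
        refine le_trans ?_ hr.1
        refine le_trans ?_ (dyad_mono (show 1 ≤ n from hn))
        norm_num [dyad]
      have h2 : supCirc p f (dyad n) ≤ circLInt (normPow p f) r := by
        refine iSup₂_le fun s hs => ?_
        refine le_trans (lintegral_mono fun θ => ?_)
          (circLInt_normPow_mono hp hf hs.1.le (hs.2.le.trans hr.1) hr.2)
        refine ENNReal.ofReal_le_ofReal (Real.rpow_le_rpow (abs_nonneg _) ?_ hp.le)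
        exact Complex.abs_re_le_norm _
      refine h2.trans ?_
      rw [← mul_assoc]
      refine le_mul_of_one_le_left' ?_
      rw [← ENNReal.ofReal_ofNat 2, ← ENNReal.ofReal_mul (by norm_num), ENNReal.one_le_ofReal]
      linarith)
  refine h1.trans (le_of_eq ?_)
  simp_rw [mul_assoc (2:ENNReal)]
  rw [lintegral_const_mul' _ _ (by simp), ENNReal.ofReal_mul (by norm_num), ENNReal.ofReal_ofNat]
  ring

/-- The norm is bounded by the dyadic sum: `circLInt_normPow_le` is used with the `lam` provided by
`geometric_absorb`, so that `Ď` absorbs the growth. -/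
theorem bergman_le (h : TailData W T) {p : ℝ} (hp : 0 < p) : ∃ C : ℝ, 0 < C ∧ ∀ f : ℂ → ℂ,
    Measurable f → DifferentiableOn ℂ f (Metric.ball 0 1) → (f 0).im = 0 →
    ∫⁻ r in Ico 0 1, (ENNReal.ofReal r * circLInt (normPow p f) r) * W r ≤
      ENNReal.ofReal C * discr p f T := by
  obtain ⟨C, k, hC, hk, hd⟩ := h.seq_decay
  obtain ⟨lam, C', hl, hC', habs⟩ := geometric_absorb h.seq_anti
    (fun n => h.pos _ (dyad_mem n)) hC hk hd
  obtain ⟨K, hK, hb⟩ := circLInt_normPow_le hp hl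
  obtain ⟨C2, hC2, hs⟩ := h.shift_le 2
  refine ⟨K * C' * C2, by positivity, fun f hfm hf hf0 => ?_⟩
  have h1 : ∀ n, ∀ r ∈ Ico (dyad n) (dyad (n + 1)),
      ENNReal.ofReal r * circLInt (normPow p f) r ≤ circLInt (normPow p f) (dyad (n + 1)) := by
    intro n r hr
    refine (mul_le_of_le_one_left' ?_).trans (circLInt_normPow_mono hp hf
      ((dyad_nonneg n).trans hr.1) hr.2.le (dyad_lt_one _))
    rw [ENNReal.ofReal_le_one]
    exact (hr.2.trans (dyad_lt_one _)).le
  set a : ℕ → ENNReal := fun n => ENNReal.ofReal (T (dyad n)) with ha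
  set H : ℕ → ENNReal := fun n => supCirc p f (dyad (n + 2)) with hH
  set L : ℕ → ENNReal := fun m => ENNReal.ofReal (lam ^ m) with hL
  calc _ ≤ ∑' N, circLInt (normPow p f) (dyad (N + 1)) * a N := h.upper h1
    _ ≤ ∑' N, ENNReal.ofReal K * ((∑ n ∈ Finset.range (N + 1), L (N - n) * H n) * a N) := by
        refine ENNReal.tsum_le_tsum fun N => ?_
        rw [← mul_assoc]
        exact mul_le_mul_left (hb f hfm hf hf0 N) _
    _ = ENNReal.ofReal K * ∑' N, ∑' n, if n ≤ N then L (N - n) * H n * a N else 0 := by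
        rw [ENNReal.tsum_mul_left]
        congr 2; funext N
        rw [Finset.sum_mul, tsum_eq_sum (s := Finset.range (N + 1))]
        · refine Finset.sum_congr rfl fun n hn => ?_
          rw [if_pos (by simpa [Nat.lt_succ_iff] using hn)]
        · intro n hn
          rw [if_neg (by simpa [Nat.lt_succ_iff] using hn)]
    _ = ENNReal.ofReal K * ∑' n, ∑' m, L m * H n * a (n + m) := by
        rw [ENNReal.tsum_comm]
        congr 2; funext n
        rw [← ENNReal.summable.sum_add_tsum_nat_add' (k := n)]
        rw [Finset.sum_eq_zero, zero_add]
        · congr 1; funext m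
          rw [if_pos (by omega), Nat.add_sub_cancel, add_comm m n]
        · intro i hi
          rw [if_neg (by simpa using hi)]
    _ ≤ ENNReal.ofReal K * ∑' n, ENNReal.ofReal C' * (H n * a n) := by
        refine mul_le_mul_right (ENNReal.tsum_le_tsum fun n => ?_) _
        calc ∑' m, L m * H n * a (n + m) = H n * ∑' m, L m * a (n + m) := by
              rw [← ENNReal.tsum_mul_left]; congr 1; funext m; ring
          _ ≤ H n * (ENNReal.ofReal C' * a n) := mul_le_mul_right (habs n) _
          _ = _ := by ring
    _ ≤ ENNReal.ofReal K * (ENNReal.ofReal C' * (ENNReal.ofReal C2 * discr p f T)) := by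
        rw [ENNReal.tsum_mul_left]
        exact mul_le_mul_right (mul_le_mul_right (hs p f) _) _
    _ = _ := by
        rw [ENNReal.ofReal_mul (by positivity), ENNReal.ofReal_mul (by positivity)]; ring

/-- Since `∑ T (dyad n)` converges geometrically, `T r / (1 - r)` is integrable. -/
theorem assoc_lt_top (h : TailData W T) :
    ∫⁻ r in Ico 0 1, ENNReal.ofReal (T r / (1 - r)) < ⊤ := by
  obtain ⟨C, k, hC, hk, hd⟩ := h.seq_decay
  obtain ⟨lam, C', hl, hC', habs⟩ := geometric_absorb h.seq_anti
    (fun n => h.pos _ (dyad_mem n)) hC hk hd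
  have h1 := h.assoc_upper (F := fun _ => 1) (b := fun _ => 1) fun _ _ _ => le_rfl
  simp only [one_mul] at h1
  refine h1.trans_lt (lt_of_le_of_lt ?_ (ENNReal.mul_lt_top (ENNReal.ofReal_lt_top (r := C'))
    (ENNReal.ofReal_lt_top (r := T (dyad 0)))))
  refine le_trans (ENNReal.tsum_le_tsum fun m => ?_) (habs 0)
  rw [zero_add]
  exact le_mul_of_one_le_left' (ENNReal.one_le_ofReal.2 (one_le_pow₀ hl.le))

end TailData

/-! ### Sufficiency -/

/-- A property true for almost every radius holds almost everywhere on the disc, by polar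
coordinates. -/
theorem ae_ball_norm {P : ℝ → Prop} (h : ∀ᵐ t ∂volume.restrict (Ico (0:ℝ) 1), P t) :
    ∀ᵐ z ∂volume.restrict (Metric.ball (0:ℂ) 1), P ‖z‖ := by
  rw [ae_iff] at h
  set N := toMeasurable (volume.restrict (Ico (0:ℝ) 1)) {t | ¬ P t} with hN
  have hNm : MeasurableSet N := measurableSet_toMeasurable _ _
  have hN0 : volume.restrict (Ico (0:ℝ) 1) N = 0 := by rw [hN, measure_toMeasurable, h]
  have hsub : {t | ¬ P t} ⊆ N := subset_toMeasurable _ _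
  rw [ae_iff]
  refine measure_mono_null (t := (fun z : ℂ => ‖z‖) ⁻¹' N) (fun z hz => hsub hz) ?_
  have hm : MeasurableSet ((fun z : ℂ => ‖z‖) ⁻¹' N) := measurable_norm hNm
  rw [← lintegral_indicator_one hm]
  rw [lintegral_ball_polar (measurable_one.indicator hm)]
  have h1 : ∀ᵐ t ∂volume.restrict (Ioo (0:ℝ) 1), t ∉ N := by
    have : ∀ᵐ t ∂volume.restrict (Ico (0:ℝ) 1), t ∉ N := by
      rw [ae_iff]; simpa using hN0
    exact ae_restrict_of_ae_restrict_of_subset Ioo_subset_Ico_self this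
  refine (lintegral_eq_zero_of_ae_eq_zero ?_)
  filter_upwards [h1, ae_restrict_mem measurableSet_Ioo] with t ht htm
  have : circLInt (((fun z : ℂ => ‖z‖) ⁻¹' N).indicator 1) t = 0 := by
    rw [circLInt]
    refine (lintegral_congr fun θ => ?_).trans lintegral_zero
    rw [indicator_of_notMem]
    simpa [abs_of_pos htm.1] using ht
  rw [this, mul_zero]; rfl

theorem ofReal_tailInt {ω : ℝ → ℝ} (hω : RadialWeight ω) {r : ℝ} (hr : r ∈ Ico (0:ℝ) 1) :
    ENNReal.ofReal (tailInt ω r) = ∫⁻ s in Ico r 1, ENNReal.ofReal (ω s) := by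
  rw [tailInt, intervalIntegral.integral_of_le hr.2.le, ← integral_Ico_eq_integral_Ioc]
  refine ofReal_integral_eq_lintegral_ofReal (hω.2.1.mono_set (Ico_subset_Ico_left hr.1)) ?_
  filter_upwards [ae_restrict_mem measurableSet_Ico] with t ht
  exact hω.1 t ⟨hr.1.trans ht.1, ht.2⟩

/-- A measurable representative of `ω` on `[0,1)`, with values in `[0, ∞]`. -/
noncomputable def repW {ω : ℝ → ℝ} (hω : RadialWeight ω) : ℝ → ENNReal :=
  (hω.2.1.aestronglyMeasurable.aemeasurable.ennreal_ofReal).mk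

theorem repW_ae {ω : ℝ → ℝ} (hω : RadialWeight ω) :
    ∀ᵐ t ∂volume.restrict (Ico (0:ℝ) 1), ENNReal.ofReal (ω t) = repW hω t :=
  (hω.2.1.aestronglyMeasurable.aemeasurable.ennreal_ofReal).ae_eq_mk

theorem repW_meas {ω : ℝ → ℝ} (hω : RadialWeight ω) : Measurable (repW hω) :=
  (hω.2.1.aestronglyMeasurable.aemeasurable.ennreal_ofReal).measurable_mk

theorem tailData_of_D {ω : ℝ → ℝ} (hω : RadialWeight ω) (h1 : Dhat ω) (h2 : Dcheck ω) :
    TailData (repW hω) (tailInt ω) where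
  meas := repW_meas hω
  tail := by
    intro r hr
    rw [ofReal_tailInt hω hr]
    exact lintegral_congr_ae (ae_restrict_of_ae_restrict_of_subset (Ico_subset_Ico_left hr.1)
      (repW_ae hω))
  pos := hω.2.2
  dhat := h1
  dcheck := h2

theorem tailInt_anti {ω : ℝ → ℝ} (hω : RadialWeight ω) : AntitoneOn (tailInt ω) (Ico 0 1) := by
  intro r hr s hs hrs
  refine (ENNReal.ofReal_le_ofReal_iff (hω.2.2 r hr).le).1 ?_
  rw [ofReal_tailInt hω hr, ofReal_tailInt hω hs]
  exact lintegral_mono_set (Ico_subset_Ico_left hrs)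

theorem assocW_nonneg {ω : ℝ → ℝ} (hω : RadialWeight ω) {r : ℝ} (hr : r ∈ Ico (0:ℝ) 1) :
    0 ≤ assocW ω r := div_nonneg (hω.2.2 r hr).le (sub_nonneg.2 hr.2.le)

theorem assocW_aemeas {ω : ℝ → ℝ} (hω : RadialWeight ω) :
    AEMeasurable (assocW ω) (volume.restrict (Ico 0 1)) :=
  (aemeasurable_restrict_of_antitoneOn measurableSet_Ico (tailInt_anti hω)).div
    (measurable_const.sub measurable_id).aemeasurable

section means
variable {p : ℝ} {f : ℂ → ℂ}

theorem circLInt_normPow_lt_top (hp : 0 < p) (hf : DifferentiableOn ℂ f (Metric.ball 0 1)) {s : ℝ}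
    (hs : 0 ≤ s) (hs1 : s < 1) : circLInt (normPow p f) s < ⊤ := by
  have hc : ContinuousOn (fun z => ‖f z‖ ^ p) (Metric.closedBall (0:ℂ) s) :=
    ContinuousOn.rpow_const (hf.continuousOn.mono (Metric.closedBall_subset_ball hs1)).norm
      fun x _ => Or.inr hp.le
  obtain ⟨M, hM⟩ := (isCompact_closedBall (0:ℂ) s).bddAbove_image hc
  calc circLInt (normPow p f) s ≤ ∫⁻ θ in Ioc 0 (2 * Real.pi), ENNReal.ofReal M := by
        refine lintegral_mono fun θ => ENNReal.ofReal_le_ofReal (hM ⟨_, ?_, rfl⟩)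
        simp [abs_of_nonneg hs]
    _ < ⊤ := by
        rw [setLIntegral_const, Real.volume_Ioc]
        exact ENNReal.mul_lt_top ENNReal.ofReal_lt_top ENNReal.ofReal_lt_top

theorem circLInt_re_le_norm (hp : 0 < p) (s : ℝ) :
    circLInt (rePow p f) s ≤ circLInt (normPow p f) s :=
  lintegral_mono fun _ => ENNReal.ofReal_le_ofReal
    (Real.rpow_le_rpow (abs_nonneg _) (Complex.abs_re_le_norm _) hp.le)

theorem supCirc_lt_top (hp : 0 < p) (hf : DifferentiableOn ℂ f (Metric.ball 0 1)) {r : ℝ}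
    (hr : 0 ≤ r) (hr1 : r < 1) : supCirc p f r < ⊤ := by
  refine lt_of_le_of_lt (iSup₂_le fun s hs => ?_) (circLInt_normPow_lt_top hp hf hr hr1)
  exact (circLInt_re_le_norm hp s).trans (circLInt_normPow_mono hp hf hs.1.le hs.2.le hr1)

theorem Mpp_eq (hfm : Measurable f) (s : ℝ) :
    Mpp p f s = (ENNReal.ofReal (2 * Real.pi)⁻¹ * circLInt (rePow p f) s).toReal := by
  rw [Mpp, ENNReal.toReal_mul, ENNReal.toReal_ofReal (by positivity),
    intervalIntegral.integral_of_le (by positivity), integral_eq_lintegral_of_nonneg_ae]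
  · simp only [circLInt, rePow, circleMap, zero_add]
  · exact ae_of_all _ fun θ => by positivity
  · have h1 : Measurable fun θ : ℝ => f ((s : ℂ) * Complex.exp ((θ : ℂ) * Complex.I)) :=
      hfm.comp (by fun_prop)
    have h2 : Measurable fun θ : ℝ =>
        |(f ((s : ℂ) * Complex.exp ((θ : ℂ) * Complex.I))).re| ^ p :=
      ((Complex.measurable_re.comp h1).abs).pow_const p
    exact h2.aestronglyMeasurable

theorem supMpp_eq (hp : 0 < p) (hfm : Measurable f) (hf : DifferentiableOn ℂ f (Metric.ball 0 1))
    {r : ℝ} (hr : r ≤ 1) :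
    supMpp p f r = (ENNReal.ofReal (2 * Real.pi)⁻¹ * supCirc p f r).toReal := by
  have h1 : supCirc p f r = sSup (circLInt (rePow p f) '' Ioo 0 r) := by
    rw [sSup_image]; rfl
  have h2 : ENNReal.ofReal (2 * Real.pi)⁻¹ * supCirc p f r =
      sSup ((fun s => ENNReal.ofReal (2 * Real.pi)⁻¹ * circLInt (rePow p f) s) '' Ioo 0 r) := by
    rw [sSup_image, supCirc]
    simp_rw [ENNReal.mul_iSup]
  rw [h2, ENNReal.toReal_sSup]
  · rw [supMpp, image_image]
    simp_rw [Mpp_eq hfm]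
  · rintro _ ⟨s, hs, rfl⟩
    exact (ENNReal.mul_lt_top ENNReal.ofReal_lt_top ((circLInt_re_le_norm hp s).trans_lt
      (circLInt_normPow_lt_top hp hf hs.1.le (hs.2.trans_le hr)))).ne

theorem ofReal_supMpp (hp : 0 < p) (hfm : Measurable f)
    (hf : DifferentiableOn ℂ f (Metric.ball 0 1)) {r : ℝ} (hr : r ∈ Ico (0:ℝ) 1) :
    ENNReal.ofReal (supMpp p f r) = ENNReal.ofReal (2 * Real.pi)⁻¹ * supCirc p f r := by
  rw [supMpp_eq hp hfm hf hr.2.le, ENNReal.ofReal_toReal]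
  exact (ENNReal.mul_lt_top ENNReal.ofReal_lt_top (supCirc_lt_top hp hf hr.1 hr.2)).ne

/-- The Bochner integral as the `toReal` of a lower integral; both sides are `0` when that is infinite. -/
theorem integral_supMpp_mul (hp : 0 < p) (hfm : Measurable f)
    (hf : DifferentiableOn ℂ f (Metric.ball 0 1)) {v : ℝ → ℝ} {V : ℝ → ENNReal}
    (hv : AEMeasurable v (volume.restrict (Ico 0 1))) (hv0 : ∀ r ∈ Ico (0:ℝ) 1, 0 ≤ v r)
    (hV : ∀ᵐ t ∂volume.restrict (Ico (0:ℝ) 1), ENNReal.ofReal (v t) = V t) :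
    ∫ r in (0:ℝ)..1, supMpp p f r * v r =
      (ENNReal.ofReal (2 * Real.pi)⁻¹ * ∫⁻ r in Ico 0 1, supCirc p f r * V r).toReal := by
  have hae : ∀ᵐ r ∂volume.restrict (Ico (0:ℝ) 1), supMpp p f r =
      (ENNReal.ofReal (2 * Real.pi)⁻¹ * supCirc p f r).toReal := by
    filter_upwards [ae_restrict_mem measurableSet_Ico] with r hr
    exact supMpp_eq hp hfm hf hr.2.le
  have hmeas : AEMeasurable (supMpp p f) (volume.restrict (Ico 0 1)) := by
    refine AEMeasurable.congr (Measurable.aemeasurable ?_) (Filter.EventuallyEq.symm hae)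
    exact ((supCirc_mono p f).measurable.const_mul _).ennreal_toReal
  rw [intervalIntegral.integral_of_le zero_le_one, ← integral_Ico_eq_integral_Ioc,
    integral_eq_lintegral_of_nonneg_ae]
  rotate_left
  · filter_upwards [hae, ae_restrict_mem measurableSet_Ico] with r h1 hr
    rw [h1]
    exact mul_nonneg ENNReal.toReal_nonneg (hv0 r hr)
  · exact (hmeas.mul hv).aestronglyMeasurable
  · congr 1
    rw [← lintegral_const_mul' _ _ ENNReal.ofReal_ne_top]
    refine lintegral_congr_ae ?_
    filter_upwards [hV, ae_restrict_mem measurableSet_Ico] with r h1 hr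
    rw [ENNReal.ofReal_mul' (hv0 r hr), ofReal_supMpp hp hfm hf hr, h1, mul_assoc]

/-- The norm as the `toReal` of a lower integral; both sides are `0` when that is infinite. -/
theorem ApNorm_eq {ω : ℝ → ℝ} (hω : RadialWeight ω) (hfm : Measurable f) :
    ApNorm p ω f = (ENNReal.ofReal Real.pi⁻¹ *
      ∫⁻ r in Ico 0 1, (ENNReal.ofReal r * circLInt (normPow p f) r) * repW hω r).toReal := by
  have hW := repW_meas hω
  have hae := ae_ball_norm (repW_ae hω)
  have hmem : ∀ᵐ z ∂volume.restrict (Metric.ball (0:ℂ) 1), z ∈ Metric.ball (0:ℂ) 1 :=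
    ae_restrict_mem Metric.isOpen_ball.measurableSet
  have hnn : ∀ z ∈ Metric.ball (0:ℂ) 1, 0 ≤ ω ‖z‖ := fun z hz =>
    hω.1 _ ⟨norm_nonneg z, by simpa using hz⟩
  have hpm : Measurable fun z => ‖f z‖ ^ p := hfm.norm.pow_const p
  rw [ApNorm, ENNReal.toReal_mul, ENNReal.toReal_ofReal (by positivity),
    integral_eq_lintegral_of_nonneg_ae]
  · congr 2
    have h1 : ∫⁻ z in Metric.ball (0:ℂ) 1, ENNReal.ofReal (‖f z‖ ^ p * ω ‖z‖) =
        ∫⁻ z in Metric.ball (0:ℂ) 1, normPow p f z * repW hω ‖z‖ := by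
      refine lintegral_congr_ae ?_
      filter_upwards [hae, hmem] with z h1 hz
      rw [ENNReal.ofReal_mul' (hnn z hz), h1, normPow]
    have hFm : Measurable fun z => normPow p f z * repW hω ‖z‖ :=
      (hpm.ennreal_ofReal).mul (hW.comp measurable_norm)
    rw [h1, lintegral_ball_polar hFm]
    rw [setLIntegral_congr (Ioo_ae_eq_Ico (μ := volume) (a := (0:ℝ)) (b := 1))]
    refine setLIntegral_congr_fun measurableSet_Ico fun r hr => ?_
    simp only [mul_assoc]
    congr 1
    have : ∀ θ, repW hω ‖circleMap 0 r θ‖ = repW hω r := by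
      intro θ; simp [abs_of_nonneg hr.1]
    simp only [circLInt, this]
    refine lintegral_mul_const _ ?_
    exact (hpm.ennreal_ofReal).comp (continuous_circleMap 0 r).measurable
  · filter_upwards [hmem] with z hz
    exact mul_nonneg (by positivity) (hnn z hz)
  · refine AEMeasurable.aestronglyMeasurable (hpm.aemeasurable.mul ?_)
    refine AEMeasurable.congr (f := fun z => (repW hω ‖z‖).toReal)
      (hW.comp measurable_norm).ennreal_toReal.aemeasurable ?_
    filter_upwards [hae, hmem] with z h1 hz
    rw [← h1, ENNReal.toReal_ofReal (hnn z hz)]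

end means

/-- Two-sided comparability in `[0, ∞]` passes to `toReal`: both sides are infinite together, and
then both `toReal`s vanish. -/
theorem toReal_le_of_comparable {X Y : ENNReal} {K : ℝ} (hK : 0 < K)
    (h1 : X ≤ ENNReal.ofReal K * Y) (h2 : Y ≤ ENNReal.ofReal K * X) :
    X.toReal ≤ K * Y.toReal := by
  by_cases hY : Y = ⊤
  · have hX : X = ⊤ := by
      by_contra hX
      rw [hY, top_le_iff] at h2
      exact ENNReal.mul_ne_top ENNReal.ofReal_ne_top hX h2
    simp [hX, hY]
  · have := ENNReal.toReal_mono (ENNReal.mul_ne_top ENNReal.ofReal_ne_top hY) h1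
    rwa [ENNReal.toReal_mul, ENNReal.toReal_ofReal hK.le] at this

/-- `X` and `S` are comparable with constant `C`. -/
def Comp (C : ℝ) (X S : ENNReal) : Prop :=
  X ≤ ENNReal.ofReal C * S ∧ S ≤ ENNReal.ofReal C * X

theorem Comp.toReal_le {C : ℝ} (hC : 0 < C) {X Y S : ENNReal} (h1 : Comp C X S) (h2 : Comp C Y S) :
    X.toReal ≤ C ^ 2 * Y.toReal := by
  have key : ∀ {X Y : ENNReal}, Comp C X S → Comp C Y S → X ≤ ENNReal.ofReal (C ^ 2) * Y := by
    intro X Y h1 h2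
    rw [pow_two, ENNReal.ofReal_mul hC.le, mul_assoc]
    exact h1.1.trans (mul_le_mul_right h2.2 _)
  exact toReal_le_of_comparable (by positivity) (key h1 h2) (key h2 h1)

theorem Comp.of_bounds {a b c C : ℝ} (ha : 0 < a) {X S : ENNReal}
    (h1 : X ≤ ENNReal.ofReal b * S) (h2 : S ≤ ENNReal.ofReal c * X)
    (hb : a * b ≤ C) (hc : a⁻¹ * c ≤ C) : Comp C (ENNReal.ofReal a * X) S := by
  constructor
  · calc ENNReal.ofReal a * X ≤ ENNReal.ofReal a * (ENNReal.ofReal b * S) := mul_le_mul_right h1 _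
      _ = ENNReal.ofReal (a * b) * S := by rw [ENNReal.ofReal_mul ha.le, mul_assoc]
      _ ≤ _ := mul_le_mul_left (ENNReal.ofReal_le_ofReal hb) _
  · calc S ≤ ENNReal.ofReal c * X := h2
      _ = ENNReal.ofReal (a⁻¹ * c) * (ENNReal.ofReal a * X) := by
          rw [← mul_assoc, ← ENNReal.ofReal_mul' ha.le]
          congr 2; field_simp
      _ ≤ _ := mul_le_mul_left (ENNReal.ofReal_le_ofReal hc) _

theorem integrable_assocW_of_D {ω : ℝ → ℝ} (hω : RadialWeight ω) (h1 : Dhat ω) (h2 : Dcheck ω) :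
    IntegrableOn (assocW ω) (Ico 0 1) := by
  refine ⟨(assocW_aemeas hω).aestronglyMeasurable, ?_⟩
  rw [hasFiniteIntegral_iff_ofReal]
  · exact (tailData_of_D hω h1 h2).assoc_lt_top
  · filter_upwards [ae_restrict_mem measurableSet_Ico] with r hr
    exact assocW_nonneg hω hr

theorem comparable_of_D {p : ℝ} (hp : 0 < p) {ω : ℝ → ℝ} (hω : RadialWeight ω) (h1 : Dhat ω)
    (h2 : Dcheck ω) : ∃ C : ℝ, 1 ≤ C ∧ ∀ f : ℂ → ℂ, Measurable f →
      DifferentiableOn ℂ f (Metric.ball (0:ℂ) 1) → (f 0).im = 0 →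
        (ApNorm p ω f ≤ C * ∫ r in (0:ℝ)..1, supMpp p f r * assocW ω r) ∧
        ((∫ r in (0:ℝ)..1, supMpp p f r * assocW ω r) ≤ C * ApNorm p ω f) ∧
        (ApNorm p ω f ≤ C * ∫ r in (0:ℝ)..1, supMpp p f r * ω r) ∧
        ((∫ r in (0:ℝ)..1, supMpp p f r * ω r) ≤ C * ApNorm p ω f) ∧
        ((∫ r in (0:ℝ)..1, supMpp p f r * assocW ω r) ≤
            C * ∫ r in (0:ℝ)..1, supMpp p f r * ω r) ∧
        ((∫ r in (0:ℝ)..1, supMpp p f r * ω r) ≤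
            C * ∫ r in (0:ℝ)..1, supMpp p f r * assocW ω r) := by
  have hT := tailData_of_D hω h1 h2
  obtain ⟨a1, ha1, hA1⟩ := hT.bergman_le hp
  obtain ⟨a2, ha2, hA2⟩ := hT.le_bergman hp
  obtain ⟨b1, hb1, hB1⟩ := hT.supAssoc_le
  obtain ⟨b2, hb2, hB2⟩ := hT.le_supAssoc
  obtain ⟨e1, he1, hE1⟩ := hT.supW_le
  obtain ⟨e2, he2, hE2⟩ := hT.le_supW
  have hpi := Real.pi_pos
  set u := Real.pi⁻¹ with hu
  set v := (2 * Real.pi)⁻¹ with hv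
  have hu0 : 0 < u := by positivity
  have hv0 : 0 < v := by positivity
  set C : ℝ := 1 + u * a1 + u⁻¹ * a2 + v * b1 + v⁻¹ * b2 + v * e1 + v⁻¹ * e2 with hC
  have q1 : 0 < u * a1 := by positivity
  have q2 : 0 < u⁻¹ * a2 := by positivity
  have q3 : 0 < v * b1 := by positivity
  have q4 : 0 < v⁻¹ * b2 := by positivity
  have q5 : 0 < v * e1 := by positivity
  have q6 : 0 < v⁻¹ * e2 := by positivity
  have hC1 : 1 ≤ C := by linarith
  have hC0 : 0 < C := by linarith
  refine ⟨C ^ 2, one_le_pow₀ hC1, fun f hfm hf hf0 => ?_⟩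
  have cA := Comp.of_bounds (C := C) hu0 (hA1 f hfm hf hf0) (hA2 f hf) (by linarith) (by linarith)
  have cB := Comp.of_bounds (C := C) hv0 (hB1 p f) (hB2 p f) (by linarith) (by linarith)
  have cE := Comp.of_bounds (C := C) hv0 (hE1 p f) (hE2 p f) (by linarith) (by linarith)
  have eA := ApNorm_eq (p := p) hω hfm
  have eB := integral_supMpp_mul (V := fun r => ENNReal.ofReal (tailInt ω r / (1 - r))) hp hfm hf
    (assocW_aemeas hω) (fun r hr => assocW_nonneg hω hr) (ae_of_all _ fun _ => rfl)
  have eE := integral_supMpp_mul hp hfm hf hω.2.1.aestronglyMeasurable.aemeasurable hω.1 (repW_ae hω)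
  rw [eA, eB, eE]
  exact ⟨cA.toReal_le hC0 cB, cB.toReal_le hC0 cA, cA.toReal_le hC0 cE, cE.toReal_le hC0 cA,
    cB.toReal_le hC0 cE, cE.toReal_le hC0 cB⟩

section indicator
variable (p : ℝ) (ω : ℝ → ℝ) (f : ℂ → ℂ)

theorem ApNorm_indicator :
    ApNorm p ω ((Metric.ball (0:ℂ) 1).indicator f) = ApNorm p ω f := by
  rw [ApNorm, ApNorm]
  congr 1
  refine setIntegral_congr_fun Metric.isOpen_ball.measurableSet fun z hz => ?_
  simp only [indicator_of_mem hz]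

theorem supMpp_indicator {r : ℝ} (hr : r ≤ 1) :
    supMpp p ((Metric.ball (0:ℂ) 1).indicator f) r = supMpp p f r := by
  rw [supMpp, supMpp]
  congr 1
  refine image_congr fun s hs => ?_
  rw [Mpp, Mpp]
  congr 2
  funext θ
  rw [indicator_of_mem]
  rw [mem_ball_zero_iff, norm_mul, Complex.norm_exp_ofReal_mul_I, mul_one, Complex.norm_real,
    Real.norm_eq_abs, abs_of_pos hs.1]
  exact hs.2.trans_le hr

theorem integral_supMpp_indicator (v : ℝ → ℝ) :
    ∫ r in (0:ℝ)..1, supMpp p ((Metric.ball (0:ℂ) 1).indicator f) r * v r =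
      ∫ r in (0:ℝ)..1, supMpp p f r * v r := by
  refine intervalIntegral.integral_congr fun r hr => ?_
  rw [uIcc_of_le zero_le_one] at hr
  simp only [supMpp_indicator p f hr.2]

end indicator

theorem measurable_indicator_of_differentiableOn {f : ℂ → ℂ}
    (hf : DifferentiableOn ℂ f (Metric.ball (0:ℂ) 1)) :
    Measurable ((Metric.ball (0:ℂ) 1).indicator f) := by
  classical
  have h := hf.continuousOn
  have := h.measurable_piecewise (g := fun _ => (0:ℂ)) continuousOn_const
    Metric.isOpen_ball.measurableSet
  rwa [← piecewise_eq_indicator]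

/-- As `f` is arbitrary outside the disc, it is replaced by its extension by zero, which is
measurable. -/
theorem sufficiency {p : ℝ} (hp : 0 < p) {ω : ℝ → ℝ} (hω : RadialWeight ω) (h1 : Dhat ω)
    (h2 : Dcheck ω) : ∃ C : ℝ, 1 ≤ C ∧ ∀ f : ℂ → ℂ,
      DifferentiableOn ℂ f (Metric.ball (0:ℂ) 1) → (f 0).im = 0 →
        (ApNorm p ω f ≤ C * ∫ r in (0:ℝ)..1, supMpp p f r * assocW ω r) ∧
        ((∫ r in (0:ℝ)..1, supMpp p f r * assocW ω r) ≤ C * ApNorm p ω f) ∧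
        (ApNorm p ω f ≤ C * ∫ r in (0:ℝ)..1, supMpp p f r * ω r) ∧
        ((∫ r in (0:ℝ)..1, supMpp p f r * ω r) ≤ C * ApNorm p ω f) ∧
        ((∫ r in (0:ℝ)..1, supMpp p f r * assocW ω r) ≤
            C * ∫ r in (0:ℝ)..1, supMpp p f r * ω r) ∧
        ((∫ r in (0:ℝ)..1, supMpp p f r * ω r) ≤
            C * ∫ r in (0:ℝ)..1, supMpp p f r * assocW ω r) := by
  obtain ⟨C, hC, h⟩ := comparable_of_D hp hω h1 h2
  refine ⟨C, hC, fun f hf hf0 => ?_⟩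
  have := h ((Metric.ball (0:ℂ) 1).indicator f) (measurable_indicator_of_differentiableOn hf)
    (hf.congr fun z hz => indicator_of_mem hz f) (by
      rw [indicator_of_mem (Metric.mem_ball_self one_pos)]; exact hf0)
  rwa [ApNorm_indicator, integral_supMpp_indicator, integral_supMpp_indicator] at this

/-! ### Moments and monomials -/

section monomials
variable {p : ℝ} {n : ℕ}

/-- `∫_0^{2π} |cos nθ|^p dθ`. -/
noncomputable def cosMean (p : ℝ) (n : ℕ) : ENNReal :=
  ∫⁻ θ in Ioc 0 (2 * Real.pi), ENNReal.ofReal (|Real.cos (n * θ)| ^ p)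

theorem cosMean_ne_top (hp : 0 < p) : cosMean p n ≠ ⊤ := by
  refine ne_top_of_le_ne_top (b := ∫⁻ θ in Ioc 0 (2 * Real.pi), 1)
    (by rw [setLIntegral_one, Real.volume_Ioc]; exact ENNReal.ofReal_ne_top) ?_
  refine lintegral_mono fun θ => ENNReal.ofReal_le_one.2 ?_
  exact Real.rpow_le_one (abs_nonneg _) (Real.abs_cos_le_one _) hp.le

theorem cosMean_ne_zero (hp : 0 < p) : cosMean p n ≠ 0 := by
  have hc : Continuous fun θ : ℝ => |Real.cos (n * θ)| ^ p :=
    (Real.continuous_cos.comp (continuous_const.mul continuous_id)).abs.rpow_const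
      fun _ => Or.inr hp.le
  have hpos : 0 < ∫ θ in (0:ℝ)..(2 * Real.pi), |Real.cos (n * θ)| ^ p :=
    intervalIntegral.integral_pos (by positivity) hc.continuousOn (fun θ _ => by positivity)
      ⟨0, ⟨le_rfl, by positivity⟩, by simp⟩
  rw [intervalIntegral.integral_of_le (by positivity)] at hpos
  rw [cosMean, ← ofReal_integral_eq_lintegral_ofReal hc.integrableOn_Ioc
    (ae_of_all _ fun θ => by positivity)]
  exact (ENNReal.ofReal_pos.2 hpos).ne'

theorem circLInt_monomial {s : ℝ} (hs : 0 ≤ s) :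
    circLInt (rePow p fun z => z ^ n) s = ENNReal.ofReal (s ^ (n * p)) * cosMean p n := by
  rw [circLInt, cosMean, ← lintegral_const_mul' _ _ ENNReal.ofReal_ne_top]
  refine lintegral_congr fun θ => ?_
  have h1 : (circleMap 0 s θ ^ n).re = s ^ n * Real.cos (n * θ) := by
    rw [circleMap, zero_add, mul_pow, ← Complex.exp_nat_mul, ← mul_assoc, ← Complex.ofReal_pow,
      Complex.re_ofReal_mul]
    congr 1
    rw [← Complex.ofReal_natCast, ← Complex.ofReal_mul, Complex.exp_ofReal_mul_I_re]
  rw [rePow, h1, abs_mul, abs_of_nonneg (by positivity), Real.mul_rpow (by positivity)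
    (abs_nonneg _), ← Real.rpow_natCast_mul hs, ENNReal.ofReal_mul (by positivity)]

theorem supCirc_monomial (hp : 0 < p) (hn : 0 < n) {r : ℝ} (hr : 0 ≤ r) :
    supCirc p (fun z => z ^ n) r = ENNReal.ofReal (r ^ (n * p)) * cosMean p n := by
  have hx : 0 < (n:ℝ) * p := by positivity
  apply le_antisymm
  · refine iSup₂_le fun s hs => ?_
    rw [circLInt_monomial hs.1.le]
    exact mul_le_mul_left (ENNReal.ofReal_le_ofReal
      (Real.rpow_le_rpow hs.1.le hs.2.le hx.le)) _
  · rcases hr.eq_or_lt with rfl | hr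
    · simp [Real.zero_rpow hx.ne']
    have ht : Filter.Tendsto (fun s : ℝ => ENNReal.ofReal (s ^ (n * p)) * cosMean p n)
        (nhdsWithin r (Iio r)) (nhds (ENNReal.ofReal (r ^ (n * p)) * cosMean p n)) := by
      refine ENNReal.Tendsto.mul_const ?_ (Or.inr (cosMean_ne_top hp))
      refine (ENNReal.tendsto_ofReal ?_).mono_left nhdsWithin_le_nhds
      exact (Real.continuous_rpow_const hx.le).tendsto r
    refine le_of_tendsto ht ?_
    filter_upwards [Ioo_mem_nhdsLT hr] with s hs
    rw [← circLInt_monomial hs.1.le]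
    exact le_iSup₂ (f := fun s (_ : s ∈ Ioo (0:ℝ) r) => circLInt (rePow p fun z => z ^ n) s) s hs

end monomials

/-- The moment `∫_0^1 r^x V(r) dr`. -/
noncomputable def moment (V : ℝ → ENNReal) (x : ℝ) : ENNReal :=
  ∫⁻ r in Ico 0 1, ENNReal.ofReal (r ^ x) * V r

theorem rpow_le_one_of_mem {r x : ℝ} (hr : r ∈ Ico (0:ℝ) 1) (hx : 0 ≤ x) :
    ENNReal.ofReal (r ^ x) ≤ 1 :=
  ENNReal.ofReal_le_one.2 (Real.rpow_le_one hr.1 hr.2.le hx)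

theorem moment_lt_top {v : ℝ → ℝ} {V : ℝ → ENNReal} (hv : IntegrableOn v (Ico 0 1))
    (hV : ∀ᵐ t ∂volume.restrict (Ico (0:ℝ) 1), ENNReal.ofReal (v t) = V t) {x : ℝ} (hx : 0 ≤ x) :
    moment V x < ⊤ := by
  calc moment V x ≤ ∫⁻ r in Ico 0 1, V r :=
        setLIntegral_mono' measurableSet_Ico fun r hr =>
          mul_le_of_le_one_left' (rpow_le_one_of_mem hr hx)
    _ = ∫⁻ r in Ico 0 1, ENNReal.ofReal (v r) := (lintegral_congr_ae hV).symm
    _ ≤ ∫⁻ r in Ico 0 1, ‖v r‖ₑ := lintegral_mono fun r => Real.ofReal_le_enorm _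
    _ < ⊤ := hv.2

/-- On the test functions `z ^ n` the integrals are moments at `n p`. -/
theorem integral_monomial {p : ℝ} (hp : 0 < p) {n : ℕ} (hn : 0 < n) {v : ℝ → ℝ} {V : ℝ → ENNReal}
    (hv : AEMeasurable v (volume.restrict (Ico 0 1))) (hv0 : ∀ r ∈ Ico (0:ℝ) 1, 0 ≤ v r)
    (hV : ∀ᵐ t ∂volume.restrict (Ico (0:ℝ) 1), ENNReal.ofReal (v t) = V t) :
    ∫ r in (0:ℝ)..1, supMpp p (fun z => z ^ n) r * v r =
      (2 * Real.pi)⁻¹ * (cosMean p n).toReal * (moment V (n * p)).toReal := by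
  rw [integral_supMpp_mul hp (by fun_prop) (by fun_prop) hv hv0 hV, ENNReal.toReal_mul,
    ENNReal.toReal_ofReal (by positivity), mul_assoc, ← ENNReal.toReal_mul, moment,
    ← lintegral_const_mul' _ _ (cosMean_ne_top hp)]
  congr 2
  refine setLIntegral_congr_fun measurableSet_Ico fun r hr => ?_
  simp only [supCirc_monomial hp hn hr.1]
  ring

/-- `x ∫ r^x T(r) dr ≤ ∫ r^x W(r) dr` for the tail `T` of `W`, by Tonelli. -/
theorem tonelli_tail {W : ℝ → ENNReal} (hW : Measurable W) {T : ℝ → ℝ}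
    (hT : ∀ r ∈ Ico (0:ℝ) 1, ENNReal.ofReal (T r) = ∫⁻ s in Ico r 1, W s) {x : ℝ} (hx : 0 < x) :
    ENNReal.ofReal x * moment (fun r => ENNReal.ofReal (T r)) x ≤ moment W x := by
  have h1 : moment (fun r => ENNReal.ofReal (T r)) x = ∫⁻ r in Ico (0:ℝ) 1, ∫⁻ s in Ico (0:ℝ) 1,
      (Iic s).indicator (fun r => ENNReal.ofReal (r ^ x)) r * W s := by
    refine setLIntegral_congr_fun measurableSet_Ico fun r hr => ?_
    simp only [hT r hr]
    rw [← lintegral_const_mul _ hW]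
    have h2 : Ico r 1 = Ico (0:ℝ) 1 ∩ Ici r := by
      ext t; simp only [mem_Ico, mem_inter_iff, mem_Ici]
      exact ⟨fun h => ⟨⟨hr.1.trans h.1, h.2⟩, h.1⟩, fun h => ⟨h.2, h.1.2⟩⟩
    rw [h2, inter_comm, ← Measure.restrict_restrict measurableSet_Ici,
      ← lintegral_indicator measurableSet_Ici]
    refine lintegral_congr fun s => ?_
    by_cases hs : r ≤ s
    · rw [indicator_of_mem (mem_Ici.2 hs), indicator_of_mem (mem_Iic.2 hs)]
    · rw [indicator_of_notMem (by simpa using hs), indicator_of_notMem (by simpa using hs), zero_mul]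
  have hmeas : Measurable (Function.uncurry fun r s : ℝ =>
      (Iic s).indicator (fun r => ENNReal.ofReal (r ^ x)) r * W s) := by
    refine Measurable.mul ?_ (hW.comp measurable_snd)
    have : (fun q : ℝ × ℝ => (Iic q.2).indicator (fun r => ENNReal.ofReal (r ^ x)) q.1) =
        {q : ℝ × ℝ | q.1 ≤ q.2}.indicator fun q => ENNReal.ofReal (q.1 ^ x) := by
      funext q
      simp only [indicator, mem_Iic, mem_ofPred_eq]
    rw [this]
    exact ((measurable_fst.pow_const x).ennreal_ofReal).indicator
      (measurableSet_le measurable_fst measurable_snd)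
  rw [h1, lintegral_lintegral_swap hmeas.aemeasurable, ← lintegral_const_mul' _ _
    ENNReal.ofReal_ne_top]
  refine setLIntegral_mono' measurableSet_Ico fun s hs => ?_
  have h3 : Measurable fun r : ℝ => (Iic s).indicator (fun r => ENNReal.ofReal (r ^ x)) r :=
    ((measurable_id.pow_const x).ennreal_ofReal).indicator measurableSet_Iic
  rw [lintegral_mul_const _ h3, ← mul_assoc]
  refine mul_le_mul_left ?_ _
  have h4 : ∫⁻ r in Ico (0:ℝ) 1, (Iic s).indicator (fun r => ENNReal.ofReal (r ^ x)) r ≤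
      ENNReal.ofReal (s ^ (x + 1) / (x + 1)) := by
    rw [lintegral_indicator measurableSet_Iic, Measure.restrict_restrict measurableSet_Iic]
    calc _ ≤ ∫⁻ r in Icc 0 s, ENNReal.ofReal (r ^ x) :=
          lintegral_mono_set fun r hr => ⟨hr.2.1, hr.1⟩
      _ = ENNReal.ofReal (∫ r in Icc 0 s, r ^ x) := by
          rw [ofReal_integral_eq_lintegral_ofReal]
          · exact (Real.continuous_rpow_const hx.le).integrableOn_Icc
          · filter_upwards [ae_restrict_mem measurableSet_Icc] with r hr
            exact Real.rpow_nonneg hr.1 x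
      _ = _ := by
          rw [integral_Icc_eq_integral_Ioc, ← intervalIntegral.integral_of_le hs.1,
            integral_rpow (Or.inl (by linarith)), Real.zero_rpow (by linarith), sub_zero]
  refine (mul_le_mul_right h4 _).trans ?_
  rw [← ENNReal.ofReal_mul hx.le]
  refine ENNReal.ofReal_le_ofReal ?_
  have h5 : s ^ (x + 1) ≤ s ^ x := by
    rcases hs.1.eq_or_lt with h0 | h0
    · rw [← h0, Real.zero_rpow (by linarith), Real.zero_rpow hx.ne']
    · exact Real.rpow_le_rpow_of_exponent_ge h0 hs.2.le (by linarith)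
  have h6 : 0 ≤ s ^ x := Real.rpow_nonneg hs.1 x
  rw [mul_div_assoc', div_le_iff₀ (by linarith)]
  nlinarith

/-- Raising the exponent from `x` to `x + a` costs little in the moments of `T r / (1 - r)`:
by Bernoulli `1 - r^a ≤ a (1 - r)`. -/
theorem moment_assoc_step {W : ℝ → ENNReal} (hW : Measurable W) {T : ℝ → ℝ}
    (hT : ∀ r ∈ Ico (0:ℝ) 1, ENNReal.ofReal (T r) = ∫⁻ s in Ico r 1, W s)
    (hTpos : ∀ r ∈ Ico (0:ℝ) 1, 0 < T r) (hTm : AEMeasurable T (volume.restrict (Ico 0 1)))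
    {x a : ℝ} (hx : 0 < x) (ha : 1 ≤ a) :
    moment (fun r => ENNReal.ofReal (T r / (1 - r))) x ≤
      moment (fun r => ENNReal.ofReal (T r / (1 - r))) (x + a) +
        ENNReal.ofReal (a / x) * moment W x := by
  have ha0 : 0 < a := by linarith
  have h1 : moment (fun r => ENNReal.ofReal (T r / (1 - r))) x ≤
      moment (fun r => ENNReal.ofReal (T r / (1 - r))) (x + a) +
        ENNReal.ofReal a * moment (fun r => ENNReal.ofReal (T r)) x := by
    have hm : AEMeasurable (fun r => ENNReal.ofReal a * (ENNReal.ofReal (r ^ x) *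
        ENNReal.ofReal (T r))) (volume.restrict (Ico 0 1)) :=
      (((measurable_id.pow_const x).ennreal_ofReal.aemeasurable).mul hTm.ennreal_ofReal).const_mul _
    rw [moment, moment, moment, ← lintegral_const_mul' _ _ ENNReal.ofReal_ne_top,
      ← lintegral_add_right' _ hm]
    refine setLIntegral_mono' measurableSet_Ico fun r hr => ?_
    have hTr := hTpos r hr
    have h1r : 0 < 1 - r := sub_pos.2 hr.2
    have hrx : 0 ≤ r ^ x := Real.rpow_nonneg hr.1 x
    have hrxa : 0 ≤ r ^ (x + a) := Real.rpow_nonneg hr.1 _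
    rw [← ENNReal.ofReal_mul hrx, ← ENNReal.ofReal_mul hrxa, ← ENNReal.ofReal_mul hrx,
      ← ENNReal.ofReal_mul ha0.le, ← ENNReal.ofReal_add (by positivity) (by positivity)]
    refine ENNReal.ofReal_le_ofReal ?_
    have hb : 1 - a * (1 - r) ≤ r ^ a := by
      have := one_add_mul_self_le_rpow_one_add (s := r - 1) (by linarith [hr.1]) ha
      rw [show 1 + (r - 1) = r by ring] at this
      linarith
    rw [Real.rpow_add_of_nonneg hr.1 hx.le ha0.le]
    have h2 : r ^ x * (T r / (1 - r)) * (1 - r ^ a) ≤ r ^ x * (T r / (1 - r)) * (a * (1 - r)) :=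
      mul_le_mul_of_nonneg_left (by linarith) (by positivity)
    have h3 : r ^ x * (T r / (1 - r)) * (a * (1 - r)) = a * (r ^ x * T r) := by field_simp
    nlinarith
  refine h1.trans (add_le_add le_rfl ?_)
  calc ENNReal.ofReal a * moment (fun r => ENNReal.ofReal (T r)) x
      = ENNReal.ofReal (a / x) * (ENNReal.ofReal x * moment (fun r => ENNReal.ofReal (T r)) x) := by
        rw [← mul_assoc, ← ENNReal.ofReal_mul (by positivity), div_mul_cancel₀ _ hx.ne']
    _ ≤ _ := mul_le_mul_right (tonelli_tail hW hT hx) _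

/-- The integral is split at `ρ`; below `ρ` one has `r ^ (y - x) ≤ exp (-(y - x) (1 - ρ))`. -/
theorem moment_split {W : ℝ → ENNReal} {T : ℝ → ℝ}
    (hT : ∀ r ∈ Ico (0:ℝ) 1, ENNReal.ofReal (T r) = ∫⁻ s in Ico r 1, W s) {x y ρ : ℝ}
    (hx : 0 < x) (hxy : x ≤ y) (hρ : ρ ∈ Ico (0:ℝ) 1) :
    moment W y ≤ ENNReal.ofReal (T ρ) + ENNReal.ofReal (Real.exp (-((y - x) * (1 - ρ)))) *
      moment W x := by
  have hsub : Ico (0:ℝ) 1 ⊆ Ico ρ 1 ∪ Ico 0 ρ := by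
    rw [union_comm]; exact Ico_subset_Ico_union_Ico
  refine (lintegral_mono_set hsub).trans ((lintegral_union_le _ _ _).trans (add_le_add ?_ ?_))
  · rw [hT ρ hρ]
    exact setLIntegral_mono' measurableSet_Ico fun r hr =>
      mul_le_of_le_one_left' (rpow_le_one_of_mem ⟨hρ.1.trans hr.1, hr.2⟩ (by linarith))
  · rw [moment, ← lintegral_const_mul' _ _ ENNReal.ofReal_ne_top]
    refine le_trans (setLIntegral_mono' measurableSet_Ico fun r hr => ?_)
      (lintegral_mono_set (Ico_subset_Ico_right hρ.2.le))
    rw [← mul_assoc, ← ENNReal.ofReal_mul (Real.exp_pos _).le]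
    refine mul_le_mul_left (ENNReal.ofReal_le_ofReal ?_) _
    have h1 : r ^ y = r ^ (y - x) * r ^ x := by
      rw [← Real.rpow_add_of_nonneg hr.1 (by linarith) hx.le, sub_add_cancel]
    rw [h1]
    refine mul_le_mul_of_nonneg_right ?_ (Real.rpow_nonneg hr.1 x)
    have h2 : r ≤ Real.exp (-(1 - ρ)) := by
      have := Real.add_one_le_exp (-(1 - ρ))
      linarith [hr.2]
    calc r ^ (y - x) ≤ Real.exp (-(1 - ρ)) ^ (y - x) :=
          Real.rpow_le_rpow hr.1 h2 (by linarith)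
      _ = _ := by rw [← Real.exp_mul]; congr 1; ring

theorem exp_le_rpow {r x : ℝ} (hr : 1 / 2 ≤ r) (hr1 : r < 1) (hx : 0 ≤ x) :
    Real.exp (-(2 * ((1 - r) * x))) ≤ r ^ x := by
  have hr0 : 0 < r := by linarith
  have h1 := Real.one_sub_inv_le_log_of_pos hr0
  have h2 : -(2 * (1 - r)) ≤ 1 - r⁻¹ := by
    have h3 : r⁻¹ * r = 1 := inv_mul_cancel₀ hr0.ne'
    have h4 : r⁻¹ ≤ 2 := by rw [inv_le_comm₀ hr0 two_pos]; linarith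
    nlinarith
  rw [Real.rpow_def_of_pos hr0]
  refine Real.exp_le_exp.2 ?_
  nlinarith

/-- Converse to `moment_le_tail`, from `r ^ x ≥ exp (-2 (1 - r) x)` for `r ≥ 1/2`. -/
theorem tail_le_moment {W : ℝ → ENNReal} {T : ℝ → ℝ}
    (hT : ∀ r ∈ Ico (0:ℝ) 1, ENNReal.ofReal (T r) = ∫⁻ s in Ico r 1, W s) {x r : ℝ}
    (hx : 0 ≤ x) (hr : 1 / 2 ≤ r) (hr1 : r < 1) :
    ENNReal.ofReal (T r) ≤ ENNReal.ofReal (Real.exp (2 * ((1 - r) * x))) * moment W x := by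
  rw [hT r ⟨by linarith, hr1⟩, moment, ← lintegral_const_mul' _ _ ENNReal.ofReal_ne_top]
  refine le_trans (setLIntegral_mono' measurableSet_Ico fun s hs => ?_)
    (lintegral_mono_set (Ico_subset_Ico_left (by linarith)))
  rw [← mul_assoc, ← ENNReal.ofReal_mul (Real.exp_pos _).le]
  refine le_mul_of_one_le_left' (ENNReal.one_le_ofReal.2 ?_)
  have h1 := exp_le_rpow (hr.trans hs.1) hs.2 hx
  calc (1:ℝ) ≤ Real.exp (2 * ((1 - r) * x)) * Real.exp (-(2 * ((1 - s) * x))) := by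
        rw [← Real.exp_add]
        refine Real.one_le_exp ?_
        nlinarith [mul_le_mul_of_nonneg_right hs.1 hx]
    _ ≤ _ := mul_le_mul_of_nonneg_left h1 (Real.exp_pos _).le

theorem lintegral_one_div {a b : ℝ} (hab : a ≤ b) (hb : b < 1) :
    ∫⁻ r in Ico a b, ENNReal.ofReal (1 / (1 - r)) = ENNReal.ofReal (Real.log ((1 - a) / (1 - b))) := by
  have hc : ContinuousOn (fun r : ℝ => 1 / (1 - r)) (Icc a b) := by
    refine continuousOn_const.div (continuousOn_const.sub continuousOn_id) fun r hr => ?_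
    have := hr.2
    exact (show (0:ℝ) < 1 - r by linarith).ne'
  rw [← ofReal_integral_eq_lintegral_ofReal]
  · rw [integral_Ico_eq_integral_Ioc, ← intervalIntegral.integral_of_le hab,
      intervalIntegral.integral_comp_sub_left (fun u => 1 / u) 1,
      integral_one_div_of_pos (by linarith) (by linarith)]
  · exact hc.integrableOn_Icc.mono_set Ico_subset_Icc_self
  · filter_upwards [ae_restrict_mem measurableSet_Ico] with r hr
    have : 0 < 1 - r := by linarith [hr.2]
    positivity

/-- The interval `[1 - 1/x, 1 - 1/(xL))` contributes `log L` to the moment of `T r / (1 - r)`. -/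
theorem log_le_moment {T : ℝ → ℝ} (hTa : AntitoneOn T (Ico 0 1))
    (hTpos : ∀ r ∈ Ico (0:ℝ) 1, 0 < T r) {x L : ℝ} (hx : 2 ≤ x) (hL : 1 ≤ L) :
    ENNReal.ofReal (Real.exp (-2) * Real.log L * T (1 - 1 / (x * L))) ≤
      moment (fun r => ENNReal.ofReal (T r / (1 - r))) x := by
  have hx0 : 0 < x := by linarith
  have hL0 : 0 < L := by linarith
  have h1 : 0 < 1 / (x * L) := by positivity
  have h2 : 1 / (x * L) ≤ 1 / x := one_div_le_one_div_of_le hx0 (by nlinarith)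
  have h3 : 1 / x ≤ 1 / 2 := one_div_le_one_div_of_le two_pos hx
  have hbm : 1 - 1 / (x * L) ∈ Ico (0:ℝ) 1 := ⟨by linarith, by linarith⟩
  have hTb := hTpos _ hbm
  have hlog : Real.log L = Real.log ((1 - (1 - 1 / x)) / (1 - (1 - 1 / (x * L)))) := by
    congr 1; field_simp; ring
  calc ENNReal.ofReal (Real.exp (-2) * Real.log L * T (1 - 1 / (x * L)))
      = ENNReal.ofReal (Real.exp (-2) * T (1 - 1 / (x * L))) *
        ∫⁻ r in Ico (1 - 1 / x) (1 - 1 / (x * L)), ENNReal.ofReal (1 / (1 - r)) := by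
        rw [lintegral_one_div (by linarith) (by linarith), ← hlog,
          ← ENNReal.ofReal_mul (by positivity)]
        congr 1; ring
    _ = ∫⁻ r in Ico (1 - 1 / x) (1 - 1 / (x * L)),
        ENNReal.ofReal (Real.exp (-2) * T (1 - 1 / (x * L))) * ENNReal.ofReal (1 / (1 - r)) :=
        (lintegral_const_mul' _ _ ENNReal.ofReal_ne_top).symm
    _ ≤ ∫⁻ r in Ico (1 - 1 / x) (1 - 1 / (x * L)),
        ENNReal.ofReal (r ^ x) * ENNReal.ofReal (T r / (1 - r)) := by
        refine setLIntegral_mono' measurableSet_Ico fun r hr => ?_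
        have hr0 : 1 / 2 ≤ r := by linarith [hr.1]
        have hr1 : r < 1 := by linarith [hr.2]
        have h1r : 0 < 1 - r := by linarith
        rw [← ENNReal.ofReal_mul (by positivity), ← ENNReal.ofReal_mul (by positivity)]
        refine ENNReal.ofReal_le_ofReal ?_
        rw [mul_assoc, mul_one_div]
        have h4 : Real.exp (-2) ≤ r ^ x := by
          refine le_trans (Real.exp_le_exp.2 ?_) (exp_le_rpow hr0 hr1 hx0.le)
          have : (1 - r) * x ≤ 1 := by
            rw [← le_div_iff₀ hx0]; linarith [hr.1]
          linarith
        refine mul_le_mul h4 (div_le_div_of_nonneg_right (hTa ⟨by linarith, hr1⟩ hbm hr.2.le)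
          h1r.le) (by positivity) (by positivity)
    _ ≤ _ := lintegral_mono_set (Ico_subset_Ico (by linarith) (by linarith))

/-! ### Necessity -/

/-- Exponential beats polynomial: an exponent `j` for which `D ^ j * exp (-(q ^ j - 1)) ≤ 1 / 2`. -/
theorem exists_absorb {D q : ℝ} (hD : 1 ≤ D) (hq : 1 < q) :
    ∃ j : ℕ, D ^ j * Real.exp (-(q ^ j - 1)) ≤ 1 / 2 := by
  have hl : 0 ≤ Real.log D := Real.log_nonneg hD
  have h1 := tendsto_pow_const_div_const_pow_of_one_lt 1 hq
  have h2 : ∀ᶠ j : ℕ in Filter.atTop, (j:ℝ) ^ 1 / q ^ j < 1 / (2 * (Real.log D + 1)) :=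
    h1.eventually_lt_const (by positivity)
  have h3 := (tendsto_pow_atTop_atTop_of_one_lt hq).eventually_ge_atTop 4
  obtain ⟨j, hj, hj4⟩ := (h2.and h3).exists
  refine ⟨j, ?_⟩
  have hq0 : 0 < q ^ j := by linarith
  rw [pow_one, div_lt_div_iff₀ hq0 (by positivity)] at hj
  have h5 : D ^ j = Real.exp (j * Real.log D) := by
    rw [Real.exp_nat_mul, Real.exp_log (by linarith)]
  rw [h5, ← Real.exp_add]
  have hj0 : (0:ℝ) ≤ j := by positivity
  have h6 : j * Real.log D + -(q ^ j - 1) ≤ -1 := by nlinarith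
  refine (Real.exp_le_exp.2 h6).trans ?_
  rw [Real.exp_neg, one_div]
  have := Real.add_one_le_exp (1:ℝ)
  exact inv_anti₀ two_pos (by linarith)

section necessity
variable {W : ℝ → ENNReal} {T : ℝ → ℝ} {p C : ℝ}

/-- The moment comparison at the exponents `n p` forces `∫ r^{np} W` to be controlled by the tail
of `W` at `1 - 1/(np)`. -/
theorem moment_le_tail (hW : Measurable W)
    (hT : ∀ r ∈ Ico (0:ℝ) 1, ENNReal.ofReal (T r) = ∫⁻ s in Ico r 1, W s)
    (hTpos : ∀ r ∈ Ico (0:ℝ) 1, 0 < T r) (hTm : AEMeasurable T (volume.restrict (Ico 0 1)))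
    (hp : 0 < p) (hC : 1 ≤ C)
    (hfin : ∀ x, 0 ≤ x → moment W x < ⊤)
    (hfin' : ∀ x, 0 ≤ x → moment (fun r => ENNReal.ofReal (T r / (1 - r))) x < ⊤)
    (hVW : ∀ n : ℕ, 0 < n → (moment (fun r => ENNReal.ofReal (T r / (1 - r))) (n * p)).toReal ≤
      C * (moment W (n * p)).toReal)
    (hWV : ∀ n : ℕ, 0 < n → (moment W (n * p)).toReal ≤
      C * (moment (fun r => ENNReal.ofReal (T r / (1 - r))) (n * p)).toReal) :
    ∃ X A : ℝ, 0 < X ∧ 0 < A ∧ ∀ n : ℕ, X ≤ n * p →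
      (moment W (n * p)).toReal ≤ A * T (1 - 1 / (n * p)) := by
  have hC0 : 0 < C := by linarith
  set w : ℕ → ℝ := fun n => (moment W (n * p)).toReal with hw
  have hw0 : ∀ n, 0 ≤ w n := fun n => ENNReal.toReal_nonneg
  have hstep : ∀ n m : ℕ, 1 ≤ m * p → 2 * C * m ≤ n → w n ≤ 2 * C ^ 2 * w (n + m) := by
    intro n m hm hmn
    have hm0 : (0:ℝ) < m := by
      by_contra! h
      have : (m:ℝ) * p ≤ 0 := mul_nonpos_of_nonpos_of_nonneg h hp.le
      linarith
    have hn0 : (0:ℝ) < n := lt_of_lt_of_le (by positivity) hmn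
    have hn : 0 < n := by exact_mod_cast hn0
    have hx : 0 < (n:ℝ) * p := by positivity
    have h1 := moment_assoc_step hW hT hTpos hTm hx hm
    have h2 : (n:ℝ) * p + m * p = ((n + m : ℕ):ℝ) * p := by push_cast; ring
    rw [h2] at h1
    have hy : 0 ≤ ((n + m : ℕ):ℝ) * p := by positivity
    have h3 := ENNReal.toReal_mono (ENNReal.add_lt_top.2 ⟨hfin' _ hy,
      ENNReal.mul_lt_top ENNReal.ofReal_lt_top (hfin _ hx.le)⟩).ne h1
    rw [ENNReal.toReal_add (hfin' _ hy).ne (ENNReal.mul_lt_top ENNReal.ofReal_lt_top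
      (hfin _ hx.le)).ne, ENNReal.toReal_mul, ENNReal.toReal_ofReal (by positivity)] at h3
    have h4 := hWV n hn
    have h5 := hVW (n + m) (by omega)
    have h6 : C * ((m:ℝ) * p / (n * p)) ≤ 1 / 2 := by
      rw [mul_div_mul_right _ _ hp.ne', mul_div_assoc', div_le_iff₀ hn0]
      linarith
    have h7 : C * ((m:ℝ) * p / (n * p) * w n) ≤ 1 / 2 * w n := by
      rw [← mul_assoc]
      exact mul_le_mul_of_nonneg_right h6 (hw0 n)
    have h8 : w n ≤ C * (C * w (n + m) + (m:ℝ) * p / (n * p) * w n) :=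
      h4.trans (mul_le_mul_of_nonneg_left (h3.trans (add_le_add h5 le_rfl)) hC0.le)
    nlinarith
  set D : ℝ := 2 * C ^ 2 with hD
  have hD1 : 1 ≤ D := by nlinarith
  set q : ℝ := 1 + 1 / (4 * C) with hq
  have hq1 : 1 < q := by
    have : 0 < 1 / (4 * C) := by positivity
    linarith
  set N : ℝ := 4 * C * (1 + 1 / p) with hN
  have hone : ∀ n : ℕ, N ≤ n → ∃ n' : ℕ, q * n ≤ n' ∧ w n ≤ D * w n' := by
    intro n hn
    have hf := Nat.lt_floor_add_one ((n:ℝ) / (2 * C))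
    have hf2 := Nat.floor_le (show 0 ≤ (n:ℝ) / (2 * C) by positivity)
    set m := ⌊(n:ℝ) / (2 * C)⌋₊ with hm
    have h1 : (n:ℝ) / (2 * C) = 2 * (n / (4 * C)) := by field_simp; ring
    have h2 : 1 + 1 / p ≤ n / (4 * C) := by
      rw [le_div_iff₀ (by positivity)]; linarith
    have h3 : 0 < 1 / p := by positivity
    have h4 : (n:ℝ) / (4 * C) ≤ m := by linarith
    refine ⟨n + m, ?_, hstep n m ?_ ?_⟩
    · push_cast
      rw [hq, add_mul, one_mul, one_div_mul_eq_div]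
      linarith
    · have : 1 / p ≤ m := by linarith
      rwa [div_le_iff₀ hp] at this
    · rw [le_div_iff₀ (by positivity)] at hf2
      linarith
  have hiter : ∀ j n : ℕ, N ≤ n → ∃ n' : ℕ, q ^ j * n ≤ n' ∧ w n ≤ D ^ j * w n' := by
    intro j
    induction j with
    | zero => intro n _; exact ⟨n, by simp, by simp⟩
    | succ j ih =>
      intro n hn
      obtain ⟨n₁, h1, h2⟩ := ih n hn
      have hge : (n:ℝ) ≤ n₁ :=
        le_trans (le_mul_of_one_le_left (by positivity) (one_le_pow₀ hq1.le)) h1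
      obtain ⟨n₂, h3, h4⟩ := hone n₁ (hn.trans hge)
      refine ⟨n₂, ?_, ?_⟩
      · calc q ^ (j + 1) * n = q * (q ^ j * n) := by ring
          _ ≤ q * n₁ := by gcongr
          _ ≤ n₂ := h3
      · calc w n ≤ D ^ j * w n₁ := h2
          _ ≤ D ^ j * (D * w n₂) := by gcongr
          _ = _ := by ring
  obtain ⟨j, hj⟩ := exists_absorb hD1 hq1
  have hN0 : 0 < N := by positivity
  refine ⟨N * p + 1, 2 * D ^ j, by positivity, by positivity, fun n hn => ?_⟩
  have hnN : N ≤ n := by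
    by_contra! h
    have := mul_lt_mul_of_pos_right h hp
    linarith
  have hn0 : (0:ℝ) < n := lt_of_lt_of_le hN0 hnN
  obtain ⟨n', h1, h2⟩ := hiter j n hnN
  have hx : 0 < (n:ℝ) * p := by positivity
  have hx1 : 1 ≤ (n:ℝ) * p := by
    have : 0 < N * p := by positivity
    linarith
  have hqj : 1 ≤ q ^ j := one_le_pow₀ hq1.le
  have hnn : (n:ℝ) ≤ n' := le_trans (le_mul_of_one_le_left hn0.le hqj) h1
  have hρ : 1 - 1 / ((n:ℝ) * p) ∈ Ico (0:ℝ) 1 := by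
    have h3 : 1 / ((n:ℝ) * p) ≤ 1 := by rw [div_le_one hx]; exact hx1
    have h4 : 0 < 1 / ((n:ℝ) * p) := by positivity
    exact ⟨by linarith, by linarith⟩
  have h3 := moment_split hT hx (mul_le_mul_of_nonneg_right hnn hp.le) hρ
  have hTρ := hTpos _ hρ
  have h4 := ENNReal.toReal_mono (ENNReal.add_lt_top.2 ⟨ENNReal.ofReal_lt_top,
    ENNReal.mul_lt_top ENNReal.ofReal_lt_top (hfin _ hx.le)⟩).ne h3
  rw [ENNReal.toReal_add ENNReal.ofReal_ne_top (ENNReal.mul_lt_top ENNReal.ofReal_lt_top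
    (hfin _ hx.le)).ne, ENNReal.toReal_mul, ENNReal.toReal_ofReal hTρ.le,
    ENNReal.toReal_ofReal (Real.exp_pos _).le] at h4
  have h5 : Real.exp (-(((n':ℝ) * p - n * p) * (1 - (1 - 1 / ((n:ℝ) * p))))) ≤
      Real.exp (-(q ^ j - 1)) := by
    refine Real.exp_le_exp.2 (neg_le_neg ?_)
    have : ((n':ℝ) * p - n * p) * (1 - (1 - 1 / ((n:ℝ) * p))) = n' / n - 1 := by
      field_simp; ring
    rw [this]
    have : q ^ j ≤ n' / n := by rwa [le_div_iff₀ hn0]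
    linarith
  have h6 : w n ≤ D ^ j * (T (1 - 1 / ((n:ℝ) * p)) + Real.exp (-(q ^ j - 1)) * w n) :=
    h2.trans (mul_le_mul_of_nonneg_left (h4.trans (add_le_add le_rfl
      (mul_le_mul_of_nonneg_right h5 (hw0 n)))) (by positivity))
  have h7 := mul_le_mul_of_nonneg_right hj (hw0 n)
  show w n ≤ _
  nlinarith

/-- An exponent `n p` comparable to `a / (1 - r)`. -/
theorem exists_multiple (hp : 0 < p) {a r : ℝ} (ha : 0 < a) (hr : r ∈ Ico (0:ℝ) 1) :
    ∃ n : ℕ, 0 < n ∧ a ≤ (1 - r) * (n * p) ∧ (1 - r) * (n * p) ≤ a + p ∧ a ≤ n * p := by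
  have h1 : 0 < 1 - r := sub_pos.2 hr.2
  refine ⟨⌈a / ((1 - r) * p)⌉₊, Nat.ceil_pos.2 (by positivity), ?_, ?_, ?_⟩
  · have := Nat.le_ceil (a / ((1 - r) * p))
    rw [div_le_iff₀ (by positivity)] at this
    linarith
  · have := Nat.ceil_lt_add_one (show 0 ≤ a / ((1 - r) * p) by positivity)
    have h2 : a / ((1 - r) * p) * ((1 - r) * p) = a := div_mul_cancel₀ _ (by positivity)
    have h3 : (1 - r) * p ≤ p := by nlinarith [hr.1]
    have h4 : 0 < (1 - r) * p := by positivity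
    nlinarith
  · have := Nat.le_ceil (a / ((1 - r) * p))
    rw [div_le_iff₀ (by positivity)] at this
    have h2 : (0:ℝ) ≤ (⌈a / ((1 - r) * p)⌉₊ : ℝ) * p := by positivity
    nlinarith [hr.1]

end necessity

/-- Only the comparison of the two integrals of the real part on monomials is used: `moment_le_tail`
and `tail_le_moment` give `D̂`, and `log_le_moment` then gives `Ď`. -/
theorem necessity {p : ℝ} (hp : 0 < p) {ω : ℝ → ℝ} (hω : RadialWeight ω)
    (hinteg : IntegrableOn (assocW ω) (Ico 0 1)) {C : ℝ} (hC : 1 ≤ C)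
    (hVW : ∀ n : ℕ, 0 < n → (∫ r in (0:ℝ)..1, supMpp p (fun z => z ^ n) r * assocW ω r) ≤
            C * ∫ r in (0:ℝ)..1, supMpp p (fun z => z ^ n) r * ω r)
    (hWV : ∀ n : ℕ, 0 < n → (∫ r in (0:ℝ)..1, supMpp p (fun z => z ^ n) r * ω r) ≤
            C * ∫ r in (0:ℝ)..1, supMpp p (fun z => z ^ n) r * assocW ω r) :
    Dhat ω ∧ Dcheck ω := by
  set T := tailInt ω with hTdef
  set W := repW hω with hWdef
  have hW : Measurable W := repW_meas hω
  have hTa : AntitoneOn T (Ico 0 1) := tailInt_anti hω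
  have hTpos : ∀ r ∈ Ico (0:ℝ) 1, 0 < T r := hω.2.2
  have hT : ∀ r ∈ Ico (0:ℝ) 1, ENNReal.ofReal (T r) = ∫⁻ s in Ico r 1, W s := by
    intro r hr
    rw [hTdef, ofReal_tailInt hω hr]
    exact lintegral_congr_ae (ae_restrict_of_ae_restrict_of_subset (Ico_subset_Ico_left hr.1)
      (repW_ae hω))
  have hTm := aemeasurable_restrict_of_antitoneOn (μ := volume) measurableSet_Ico hTa
  set V : ℝ → ENNReal := fun r => ENNReal.ofReal (T r / (1 - r)) with hV
  have hVae : ∀ᵐ t ∂volume.restrict (Ico (0:ℝ) 1), ENNReal.ofReal (assocW ω t) = V t :=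
    ae_of_all _ fun _ => rfl
  have hfin : ∀ x, 0 ≤ x → moment W x < ⊤ := fun x hx => moment_lt_top hω.2.1 (repW_ae hω) hx
  have hfin' : ∀ x, 0 ≤ x → moment V x < ⊤ := fun x hx => moment_lt_top hinteg hVae hx
  have eV : ∀ n : ℕ, 0 < n → _ := fun n hn => integral_monomial hp hn (assocW_aemeas hω)
    (fun r hr => assocW_nonneg hω hr) hVae
  have eW : ∀ n : ℕ, 0 < n → _ := fun n hn => integral_monomial hp hn
    hω.2.1.aestronglyMeasurable.aemeasurable hω.1 (repW_ae hω)
  have hc : ∀ n, 0 < (2 * Real.pi)⁻¹ * (cosMean p n).toReal := fun n =>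
    mul_pos (by positivity) (ENNReal.toReal_pos (cosMean_ne_zero hp) (cosMean_ne_top hp))
  have hVW' : ∀ n : ℕ, 0 < n → (moment V (n * p)).toReal ≤ C * (moment W (n * p)).toReal := by
    intro n hn
    have := hVW n hn
    rw [eV n hn, eW n hn, mul_left_comm] at this
    exact le_of_mul_le_mul_left this (hc n)
  have hWV' : ∀ n : ℕ, 0 < n → (moment W (n * p)).toReal ≤ C * (moment V (n * p)).toReal := by
    intro n hn
    have := hWV n hn
    rw [eV n hn, eW n hn, mul_left_comm] at this
    exact le_of_mul_le_mul_left this (hc n)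
  obtain ⟨X, A, hX, hA, hmain⟩ :=
    moment_le_tail hW hT hTpos hTm hp hC hfin hfin' hVW' hWV'
  set a : ℝ := X + 2 with ha
  have ha0 : 0 < a := by positivity
  constructor
  · set B : ℝ := Real.exp (2 * (a + p)) * A with hB
    have h34 : (3 / 4 : ℝ) ∈ Ico (0:ℝ) 1 := by constructor <;> norm_num
    have h00 : (0 : ℝ) ∈ Ico (0:ℝ) 1 := by constructor <;> norm_num
    have hq0 : 0 < T 0 / T (3 / 4) := div_pos (hTpos _ h00) (hTpos _ h34)
    have hB0 : 0 < B := by positivity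
    refine ⟨1 + B + T 0 / T (3 / 4), by linarith, fun r hr => ?_⟩
    have hrm : (1 + r) / 2 ∈ Ico (0:ℝ) 1 := ⟨by linarith [hr.1], by linarith [hr.2]⟩
    have hTr := hTpos _ hrm
    show T r ≤ _ * T ((1 + r) / 2)
    rcases le_or_gt (1 / 2) r with hr2 | hr2
    · obtain ⟨n, hn, h1, h2, h3⟩ := exists_multiple hp ha0 hr
      have hx : 0 < (n:ℝ) * p := by positivity
      have h4 := tail_le_moment hT hx.le hr2 hr.2
      have h5 := ENNReal.toReal_mono (ENNReal.mul_lt_top ENNReal.ofReal_lt_top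
        (hfin _ hx.le)).ne h4
      rw [ENNReal.toReal_mul, ENNReal.toReal_ofReal (hTpos r hr).le,
        ENNReal.toReal_ofReal (Real.exp_pos _).le] at h5
      have h6 := hmain n (by linarith)
      have h7 : 1 / ((n:ℝ) * p) ≤ (1 - r) / 2 := by
        rw [div_le_iff₀ hx]; linarith
      have h8 : 0 < 1 / ((n:ℝ) * p) := by positivity
      have h9 : T (1 - 1 / (n * p)) ≤ T ((1 + r) / 2) :=
        hTa hrm ⟨by linarith [hr.1], by linarith⟩ (by linarith)
      calc T r ≤ Real.exp (2 * ((1 - r) * (n * p))) * (moment W (n * p)).toReal := h5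
        _ ≤ Real.exp (2 * (a + p)) * (A * T ((1 + r) / 2)) := by
            refine mul_le_mul (Real.exp_le_exp.2 (by linarith)) ?_ ENNReal.toReal_nonneg
              (Real.exp_pos _).le
            exact h6.trans (mul_le_mul_of_nonneg_left h9 hA.le)
        _ = B * T ((1 + r) / 2) := by rw [hB]; ring
        _ ≤ _ := mul_le_mul_of_nonneg_right (by linarith) hTr.le
    · have h1 : T (3 / 4) ≤ T ((1 + r) / 2) := hTa hrm h34 (by linarith)
      have h2 : T r ≤ T 0 := hTa h00 hr hr.1
      calc T r ≤ T 0 / T (3 / 4) * T (3 / 4) := by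
            rw [div_mul_cancel₀ _ (hTpos _ h34).ne']; exact h2
        _ ≤ _ := mul_le_mul (by linarith) h1 (hTpos _ h34).le (by positivity)
  · set L : ℝ := Real.exp (2 * (C * A) * Real.exp 2) with hL
    have hL1 : 1 ≤ L := Real.one_le_exp (by positivity)
    have hlogL : Real.log L = 2 * (C * A) * Real.exp 2 := Real.log_exp _
    have hK : 1 < (a + p) * L := by nlinarith
    refine ⟨(a + p) * L, 2, hK, one_lt_two, fun r hr => ?_⟩
    show 2 * T (1 - (1 - r) / ((a + p) * L)) ≤ T r
    obtain ⟨n, hn, h1, h2, h3⟩ := exists_multiple hp ha0 hr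
    have hx : 0 < (n:ℝ) * p := by positivity
    have h1r : 0 < 1 - r := sub_pos.2 hr.2
    have h4 := log_le_moment hTa hTpos (x := n * p) (by linarith) hL1
    have hsm : 1 / ((n:ℝ) * p * L) ≤ 1 / (n * p) :=
      one_div_le_one_div_of_le hx (by nlinarith)
    have hle : 1 / ((n:ℝ) * p) ≤ 1 - r := by
      rw [div_le_iff₀ hx]; linarith
    have hpos1 : 0 < 1 / ((n:ℝ) * p) := by positivity
    have hpos2 : 0 < 1 / ((n:ℝ) * p * L) := by positivity
    have hm1 : 1 - 1 / ((n:ℝ) * p) ∈ Ico (0:ℝ) 1 := ⟨by linarith [hr.1], by linarith⟩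
    have hm2 : 1 - 1 / ((n:ℝ) * p * L) ∈ Ico (0:ℝ) 1 := ⟨by linarith [hr.1], by linarith⟩
    have hT2 := hTpos _ hm2
    have h5 := ENNReal.toReal_mono (hfin' _ hx.le).ne h4
    have hlog0 : 0 ≤ Real.log L := Real.log_nonneg hL1
    rw [ENNReal.toReal_ofReal (by positivity)] at h5
    have h6 : Real.exp (-2) * Real.log L = 2 * (C * A) := by
      rw [hlogL, mul_comm (Real.exp (-2)), mul_assoc, ← Real.exp_add]; simp
    rw [h6] at h5
    have h7 : 2 * (C * A) * T (1 - 1 / (n * p * L)) ≤ C * (A * T (1 - 1 / (n * p))) :=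
      h5.trans ((hVW' n hn).trans (mul_le_mul_of_nonneg_left (hmain n (by linarith)) (by linarith)))
    have h8 : 2 * T (1 - 1 / (n * p * L)) ≤ T (1 - 1 / (n * p)) := by
      have : 0 < C * A := by positivity
      refine le_of_mul_le_mul_left ?_ this
      linarith
    have h9 : T (1 - 1 / (n * p)) ≤ T r := hTa hr hm1 (by linarith)
    have h10 : (1 - r) / ((a + p) * L) ≤ 1 / ((n:ℝ) * p * L) := by
      rw [div_le_div_iff₀ (by positivity) (by positivity)]
      nlinarith
    have h11 : 0 < (1 - r) / ((a + p) * L) := by positivity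
    have h12 : T (1 - (1 - r) / ((a + p) * L)) ≤ T (1 - 1 / (n * p * L)) :=
      hTa hm2 ⟨by linarith [hm2.1], by linarith⟩ (by linarith)
    linarith

/-- For `0 < p < ∞` and a radial weight `ω`, the following holds iff
`ω ∈ D = D̂ ∩ Ď`: `ω̃` is a weight and there is `C ≥ 1` such that, for every analytic `f`
on `𝔻` with `Im f(0) = 0`, the three quantities `‖f‖_{A^p_ω}^p`,
`∫_0^1 (sup_{0<s<r} M_p^p(s,Re f)) ω̃(r) dr` and `∫_0^1 (sup_{0<s<r} M_p^p(s,Re f)) ω(r) dr`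
are pairwise comparable with constant `C`. -/
theorem statement8 (p : ℝ) (hp : 0 < p) (ω : ℝ → ℝ) (hω : RadialWeight ω) :
    (MeasureTheory.IntegrableOn (assocW ω) (Set.Ico 0 1) ∧
      ∃ C : ℝ, 1 ≤ C ∧ ∀ f : ℂ → ℂ, DifferentiableOn ℂ f (Metric.ball (0:ℂ) 1) →
        (f 0).im = 0 →
        (ApNorm p ω f ≤ C * ∫ r in (0:ℝ)..1, supMpp p f r * assocW ω r) ∧
        ((∫ r in (0:ℝ)..1, supMpp p f r * assocW ω r) ≤ C * ApNorm p ω f) ∧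
        (ApNorm p ω f ≤ C * ∫ r in (0:ℝ)..1, supMpp p f r * ω r) ∧
        ((∫ r in (0:ℝ)..1, supMpp p f r * ω r) ≤ C * ApNorm p ω f) ∧
        ((∫ r in (0:ℝ)..1, supMpp p f r * assocW ω r) ≤
            C * ∫ r in (0:ℝ)..1, supMpp p f r * ω r) ∧
        ((∫ r in (0:ℝ)..1, supMpp p f r * ω r) ≤
            C * ∫ r in (0:ℝ)..1, supMpp p f r * assocW ω r)) ↔
      (Dhat ω ∧ Dcheck ω) := by
  constructor
  · rintro ⟨hinteg, C, hC, h⟩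
    have key := fun (n : ℕ) (hn : 0 < n) => h (fun z => z ^ n) (by fun_prop) (by simp [hn.ne'])
    exact necessity hp hω hinteg hC (fun n hn => (key n hn).2.2.2.2.1)
      fun n hn => (key n hn).2.2.2.2.2
  · rintro ⟨h1, h2⟩
    exact ⟨integrable_assocW_of_D hω h1 h2, sufficiency hp hω h1 h2⟩
end

section
/- Define φ : {n ∈ ℕ : n ≥ 2} → ℝ by φ(n) = n^{−3} if n is not of the form 2^{2^j} for some j ∈ ℕ, and φ(n) = (log₂ log₂ n)/n² + n^{−3} if n = 2^{2^j} for some j ∈ ℕ. Then: (a) 0 < φ(n) < 1/2 for all n ≥ 2 and Σ_{n=2}^∞ φ(n) < ∞; (b) limsup_{n→∞} ( Σ_{k=n+1}^∞ φ(k) ) / φ(n) = ∞; (c) there is a constant c > 0 such that Σ_{n=k}^∞ φ(n) ≤ c Σ_{n=k}^∞ Σ_{j=n+1}^∞ φ(j) for all k ≥ 4; and (d) there is a constant c' > 0 such that φ(k) ≤ c' Σ_{n=k+1}^∞ Σ_{j=n+1}^∞ φ(j) for all k ≥ 4. -/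
/-!
The proof rests on one summability fact: `∑ n φ(n)` converges, since it splits into `∑ n⁻²` and
`∑ j / 2^{2^j}` (`summable_mul_phiW`). Writing `C` for its sum, this gives
`∑_{n ≥ k} φ(n) ≤ C / k` (`tail_le`), and, because `∑_{n ≥ m} ∑_{j ≥ n} φ(j)` counts each `φ(m + i)`
exactly `i + 1` times, the convergence of the double series (`summable_tail`).
In the other direction `φ(n) ≥ n⁻³` forces the double tail starting at `m` to be at least
`1 / (32 m)` (`le_double_tail`): keep only `m` terms of each of the two sums. Hence (c) and (d),
whose left-hand sides are both at most `C / k`, hold.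

For (b), take `n = 2^{2^j} - 1`: then `φ(n) = n⁻³`, while the tail after `n` contains
`φ(n + 1) ≥ j / (n + 1)²`, so that the ratio is at least `j / 4`.
-/

open Filter

/-- The sequence `φ(n) = n⁻³` for `n` not of the form `2^{2^j}`, and
`φ(n) = (log₂ log₂ n)/n² + n⁻³` for `n = 2^{2^j}`. -/
noncomputable def phiW (n : ℕ) : ℝ :=
  letI := Classical.propDecidable (∃ j : ℕ, n = 2 ^ 2 ^ j)
  if ∃ j : ℕ, n = 2 ^ 2 ^ j then
    Real.logb 2 (Real.logb 2 (n : ℝ)) / (n : ℝ) ^ 2 + 1 / (n : ℝ) ^ 3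
  else 1 / (n : ℝ) ^ 3

lemma phiW_pow (j : ℕ) :
    phiW (2 ^ 2 ^ j) = (j : ℝ) / ((2 : ℝ) ^ 2 ^ j) ^ 2 + 1 / ((2 : ℝ) ^ 2 ^ j) ^ 3 := by
  have h : ∃ i : ℕ, 2 ^ 2 ^ j = 2 ^ 2 ^ i := ⟨j, rfl⟩
  have h1 : Real.logb 2 ((2 : ℝ) ^ 2 ^ j) = (2 : ℝ) ^ j := by
    rw [Real.logb_pow]; simp
  have h2 : Real.logb 2 ((2 : ℝ) ^ j) = (j : ℝ) := by
    rw [Real.logb_pow]; simp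
  rw [phiW, if_pos h]
  push_cast
  rw [h1, h2]

lemma phiW_of_not {n : ℕ} (h : ¬ ∃ j : ℕ, n = 2 ^ 2 ^ j) : phiW n = 1 / (n : ℝ) ^ 3 := by
  rw [phiW, if_neg h]

lemma le_phiW (n : ℕ) : 1 / (n : ℝ) ^ 3 ≤ phiW n := by
  by_cases h : ∃ j : ℕ, n = 2 ^ 2 ^ j
  · obtain ⟨j, rfl⟩ := h
    rw [phiW_pow]
    push_cast
    have : (0 : ℝ) ≤ (j : ℝ) / ((2 : ℝ) ^ 2 ^ j) ^ 2 := by positivity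
    linarith
  · rw [phiW_of_not h]

lemma phiW_nonneg (n : ℕ) : 0 ≤ phiW n := le_trans (by positivity) (le_phiW n)

lemma phiW_pos {n : ℕ} (hn : 2 ≤ n) : 0 < phiW n := by
  have : (0 : ℝ) < n := by exact_mod_cast (by omega : 0 < n)
  exact lt_of_lt_of_le (by positivity) (le_phiW n)

lemma phiW_lt_half {n : ℕ} (hn : 2 ≤ n) : phiW n < 1 / 2 := by
  by_cases h : ∃ j : ℕ, n = 2 ^ 2 ^ j
  · obtain ⟨j, rfl⟩ := h
    rw [phiW_pow]
    have h1 : j + 1 ≤ 2 ^ 2 ^ j :=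
      (Nat.lt_two_pow_self (n := j)).trans (Nat.lt_two_pow_self (n := 2 ^ j))
    have h1' : (j : ℝ) + 1 ≤ (2 : ℝ) ^ 2 ^ j := by exact_mod_cast h1
    have h2' : (2 : ℝ) ≤ (2 : ℝ) ^ 2 ^ j := by exact_mod_cast hn
    generalize (2 : ℝ) ^ 2 ^ j = N at *
    have hN : 0 < N := by linarith
    rw [div_add_div _ _ (by positivity) (by positivity), div_lt_div_iff₀ (by positivity) (by norm_num)]
    -- After cancelling `N²` this is `2 (j N + 1) < N³`, which follows from `j ≤ N - 1` and `2 ≤ N`.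
    have key : (j * N + 1) * 2 < N ^ 3 := by
      nlinarith [mul_le_mul_of_nonneg_right h1' hN.le, mul_nonneg (sq_nonneg N) (sub_nonneg.2 h2')]
    nlinarith [mul_lt_mul_of_pos_left key (by positivity : 0 < N ^ 2)]
  · rw [phiW_of_not h]
    have : (2 : ℝ) ≤ n := by exact_mod_cast hn
    have h8 : (2 : ℝ) ^ 3 ≤ (n : ℝ) ^ 3 := by gcongr
    rw [div_lt_div_iff₀ (by positivity) (by norm_num)]
    linarith

/-- The contribution of the exceptional indices `2^{2^j}` is `∑ j / 2^{2^j}`, dominated by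
`∑ j / 2^j`; the rest is `∑ n⁻²`. -/
lemma summable_mul_phiW : Summable fun n : ℕ => (n : ℝ) * phiW n := by
  have h1 : Summable fun n : ℕ => 1 / (n : ℝ) ^ 2 :=
    Real.summable_one_div_nat_pow.2 (by norm_num)
  have hinj : Function.Injective fun j : ℕ => 2 ^ 2 ^ j := fun a b hab =>
    Nat.pow_right_injective le_rfl (Nat.pow_right_injective le_rfl hab)
  have h2 : Summable fun n : ℕ => (n : ℝ) * (phiW n - 1 / (n : ℝ) ^ 3) := by
    rw [← hinj.summable_iff]
    · have hg : Summable fun j : ℕ => (j : ℝ) ^ 1 * (1 / 2 : ℝ) ^ j :=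
        summable_pow_mul_geometric_of_norm_lt_one 1 (by norm_num)
      refine Summable.of_nonneg_of_le (fun j => ?_) (fun j => ?_) hg
      · exact mul_nonneg (Nat.cast_nonneg _) (sub_nonneg.2 (le_phiW _))
      · have e : (2 : ℝ) ^ j ≤ (2 : ℝ) ^ 2 ^ j :=
          pow_le_pow_right₀ (by norm_num) (Nat.lt_two_pow_self (n := j)).le
        simp only [Function.comp_apply, phiW_pow]
        push_cast
        calc (2 : ℝ) ^ 2 ^ j * ((j : ℝ) / ((2 : ℝ) ^ 2 ^ j) ^ 2 + 1 / ((2 : ℝ) ^ 2 ^ j) ^ 3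
              - 1 / ((2 : ℝ) ^ 2 ^ j) ^ 3) = (j : ℝ) / (2 : ℝ) ^ 2 ^ j := by
              field_simp
              ring
          _ ≤ (j : ℝ) / (2 : ℝ) ^ j := by gcongr
          _ = (j : ℝ) ^ 1 * (1 / 2 : ℝ) ^ j := by
              rw [pow_one, one_div, inv_pow, div_eq_mul_inv]
    · intro n hn
      have : ¬ ∃ j : ℕ, n = 2 ^ 2 ^ j := fun ⟨j, hj⟩ => hn ⟨j, hj.symm⟩
      rw [phiW_of_not this]
      simp
  refine (h1.add h2).congr fun n => ?_
  rcases Nat.eq_zero_or_pos n with rfl | hn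
  · simp
  · have : (0 : ℝ) < n := by exact_mod_cast hn
    field_simp
    ring

lemma phiW_zero : phiW 0 = 0 := by
  rw [phiW_of_not]
  · simp
  · rintro ⟨j, hj⟩
    exact (pow_ne_zero _ two_ne_zero) hj.symm

lemma summable_phiW : Summable phiW := by
  refine Summable.of_nonneg_of_le phiW_nonneg (fun n => ?_) summable_mul_phiW
  rcases Nat.eq_zero_or_pos n with rfl | hn
  · simp [phiW_zero]
  · exact le_mul_of_one_le_left (phiW_nonneg n) (by exact_mod_cast hn)

lemma summable_phiW_add (m : ℕ) : Summable fun n => phiW (m + n) :=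
  summable_phiW.comp_injective (add_right_injective m)

/-- The value `φ(m + i)` occurs `i + 1` times in the double series, once for each point of the
antidiagonal of `i`, and `(i + 1) φ(m + i) ≤ (m + i) φ(m + i)` as soon as `m ≥ 1`. -/
lemma summable_tail {m : ℕ} (hm : 1 ≤ m) : Summable fun n => ∑' j, phiW (m + n + j) := by
  have h : Summable fun p : ℕ × ℕ => phiW (m + p.1 + p.2) := by
    rw [← Finset.HasAntidiagonal.sigmaAntidiagonalEquivProd.summable_iff]
    refine (summable_sigma_of_nonneg fun _ => phiW_nonneg _).2
      ⟨fun n => (hasSum_fintype _).summable, ?_⟩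
    refine Summable.of_nonneg_of_le (fun n => tsum_nonneg fun _ => phiW_nonneg _) (fun n => ?_)
      (summable_mul_phiW.comp_injective (add_right_injective m))
    have e : ∀ p : Finset.HasAntidiagonal.antidiagonal n,
        ((fun p : ℕ × ℕ => phiW (m + p.1 + p.2)) ∘
          Finset.HasAntidiagonal.sigmaAntidiagonalEquivProd) ⟨n, p⟩ = phiW (m + n) := by
      rintro ⟨⟨a, b⟩, hp⟩
      have hp' : a + b = n := by simpa using hp
      simp [← hp', add_assoc]
    refine (tsum_congr e).trans_le ?_
    rw [tsum_fintype]
    simp only [Finset.sum_const, Finset.card_univ, Fintype.card_coe,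
      Finset.Nat.card_antidiagonal, nsmul_eq_mul, Function.comp_apply]
    refine mul_le_mul_of_nonneg_right ?_ (phiW_nonneg _)
    exact_mod_cast (by omega : n + 1 ≤ m + n)
  exact h.prod

lemma tail_le {k : ℕ} (hk : 1 ≤ k) :
    ∑' n, phiW (k + n) ≤ (∑' n : ℕ, (n : ℝ) * phiW n) / k := by
  have hk' : (0 : ℝ) < k := by exact_mod_cast hk
  rw [le_div_iff₀ hk', mul_comm, ← tsum_mul_left]
  have hs := summable_mul_phiW.comp_injective (add_right_injective k)
  refine le_trans (((summable_phiW_add k).mul_left (k : ℝ)).tsum_le_tsum (fun n => ?_) hs)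
    (tsum_comp_le_tsum_of_inj summable_mul_phiW
      (fun n => mul_nonneg (Nat.cast_nonneg n) (phiW_nonneg n)) (add_right_injective k))
  refine mul_le_mul_of_nonneg_right ?_ (phiW_nonneg _)
  exact_mod_cast Nat.le_add_right k n

/-- The first `m` terms of the tail are each at least `(2m)⁻³`. -/
lemma le_tail {m : ℕ} (hm : 1 ≤ m) : 1 / (8 * (m : ℝ) ^ 2) ≤ ∑' j, phiW (m + j) := by
  have hm' : (0 : ℝ) < m := by exact_mod_cast hm
  refine le_trans ?_ ((summable_phiW_add m).sum_le_tsum (Finset.range m)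
    fun _ _ => phiW_nonneg _)
  have := Finset.card_nsmul_le_sum (Finset.range m) (fun j => phiW (m + j))
    (1 / (2 * (m : ℝ)) ^ 3) (fun j hj => ?_)
  · refine le_trans (le_of_eq ?_) this
    rw [Finset.card_range, nsmul_eq_mul]
    field_simp
    norm_num
  · refine le_trans ?_ (le_phiW _)
    have hj' : ((m + j : ℕ) : ℝ) ≤ 2 * m := by
      have := Finset.mem_range.1 hj
      exact_mod_cast (by omega : m + j ≤ 2 * m)
    have : (0 : ℝ) < ((m + j : ℕ) : ℝ) := by exact_mod_cast (by omega : 0 < m + j)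
    gcongr

lemma le_double_tail {m : ℕ} (hm : 1 ≤ m) :
    1 / (32 * (m : ℝ)) ≤ ∑' n, ∑' j, phiW (m + n + j) := by
  have hm' : (0 : ℝ) < m := by exact_mod_cast hm
  refine le_trans ?_ ((summable_tail hm).sum_le_tsum (Finset.range m)
    fun _ _ => tsum_nonneg fun _ => phiW_nonneg _)
  have := Finset.card_nsmul_le_sum (Finset.range m) (fun n => ∑' j, phiW (m + n + j))
    (1 / (8 * (2 * (m : ℝ)) ^ 2)) (fun n hn => ?_)
  · refine le_trans (le_of_eq ?_) this
    rw [Finset.card_range, nsmul_eq_mul]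
    field_simp
    norm_num
  · refine le_trans ?_ (le_tail (by omega))
    have hn' : ((m + n : ℕ) : ℝ) ≤ 2 * m := by
      have := Finset.mem_range.1 hn
      exact_mod_cast (by omega : m + n ≤ 2 * m)
    have : (0 : ℝ) < ((m + n : ℕ) : ℝ) := by exact_mod_cast (by omega : 0 < m + n)
    gcongr

/-- Any quantity at most `C / k` is controlled by the double tail starting at some `m ≤ 2k`. -/
lemma div_le_double_tail {C : ℝ} (hC : 0 ≤ C) {k m : ℕ} (hk : 1 ≤ k) (hm : 1 ≤ m)
    (hmk : m ≤ 2 * k) : C / k ≤ (64 * C + 1) * ∑' n, ∑' j, phiW (m + n + j) := by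
  have hk' : (0 : ℝ) < k := by exact_mod_cast hk
  have hm' : (0 : ℝ) < m := by exact_mod_cast hm
  have hmk' : (m : ℝ) ≤ 2 * k := by exact_mod_cast hmk
  have h := le_double_tail hm
  have h2 : 1 / (64 * (k : ℝ)) ≤ 1 / (32 * (m : ℝ)) :=
    one_div_le_one_div_of_le (by positivity) (by linarith)
  calc C / k = 64 * C * (1 / (64 * (k : ℝ))) := by field_simp
    _ ≤ (64 * C + 1) * (1 / (64 * (k : ℝ))) := by gcongr; linarith
    _ ≤ _ := by gcongr; exact h2.trans h

/-- The numbers `2^{2^j} - 1` are odd, hence not of the form `2^{2^i}`. -/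
lemma pow_sub_one_not_pow {j n : ℕ} (hn : n + 1 = 2 ^ 2 ^ j) : ¬ ∃ i : ℕ, n = 2 ^ 2 ^ i := by
  rintro ⟨i, hi⟩
  have h1 : 2 ∣ n + 1 := hn ▸ dvd_pow_self 2 (by positivity)
  have h2 : 2 ∣ n := hi ▸ dvd_pow_self 2 (by positivity)
  omega

lemma ratio_ge {j n : ℕ} (hn : n + 1 = 2 ^ 2 ^ j) :
    (j : ℝ) / 4 ≤ (∑' k : ℕ, phiW (n + 1 + k)) / phiW n := by
  have hn1 : 1 ≤ n := by
    have : 2 ^ 1 ≤ 2 ^ 2 ^ j := Nat.pow_le_pow_right (by norm_num) Nat.one_le_two_pow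
    omega
  have hn1' : (1 : ℝ) ≤ n := by exact_mod_cast hn1
  have hcast : (2 : ℝ) ^ 2 ^ j = (n : ℝ) + 1 := by exact_mod_cast hn.symm
  have hφ : (j : ℝ) / ((n : ℝ) + 1) ^ 2 ≤ phiW (n + 1) := by
    rw [hn, phiW_pow, hcast]
    have : (0 : ℝ) ≤ 1 / ((n : ℝ) + 1) ^ 3 := by positivity
    linarith
  have hT : phiW (n + 1) ≤ ∑' k : ℕ, phiW (n + 1 + k) :=
    (summable_phiW_add (n + 1)).le_tsum 0 fun _ _ => phiW_nonneg _
  rw [phiW_of_not (pow_sub_one_not_pow hn), le_div_iff₀ (by positivity)]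
  refine le_trans ?_ (hφ.trans hT)
  rw [div_mul_div_comm, mul_one]
  have : ((n : ℝ) + 1) ^ 2 ≤ 4 * (n : ℝ) ^ 3 := by
    nlinarith [mul_nonneg (sq_nonneg (n : ℝ)) (sub_nonneg.2 hn1')]
  gcongr

/-- properties (a)–(d) of the sequence `φ`. -/
theorem statement19 :
    ((∀ n : ℕ, 2 ≤ n → 0 < phiW n ∧ phiW n < 1 / 2) ∧ Summable phiW) ∧
    (∀ M : ℝ, ∃ᶠ n in Filter.atTop, M < (∑' k : ℕ, phiW (n + 1 + k)) / phiW n) ∧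
    (∃ c : ℝ, 0 < c ∧ ∀ k : ℕ, 4 ≤ k →
      (∑' n : ℕ, phiW (k + n)) ≤ c * ∑' n : ℕ, ∑' j : ℕ, phiW (k + n + 1 + j)) ∧
    (∃ c' : ℝ, 0 < c' ∧ ∀ k : ℕ, 4 ≤ k →
      phiW k ≤ c' * ∑' n : ℕ, ∑' j : ℕ, phiW (k + 1 + n + 1 + j)) := by
  have hC : 0 ≤ ∑' n : ℕ, (n : ℝ) * phiW n :=
    tsum_nonneg fun n => mul_nonneg (Nat.cast_nonneg n) (phiW_nonneg n)
  refine ⟨⟨fun n hn => ⟨phiW_pos hn, phiW_lt_half hn⟩, summable_phiW⟩, fun M => ?_,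
    ⟨64 * (∑' n : ℕ, (n : ℝ) * phiW n) + 1, by positivity, fun k hk => ?_⟩,
    ⟨64 * (∑' n : ℕ, (n : ℝ) * phiW n) + 1, by positivity, fun k hk => ?_⟩⟩
  · rw [Filter.frequently_atTop]
    intro a
    obtain ⟨i, hi⟩ := exists_nat_gt (4 * M)
    -- `j ≥ i` makes the ratio exceed `M`, and `j ≥ a` makes `2^{2^j} - 1 ≥ a`.
    obtain ⟨j, hij, haj⟩ : ∃ j, i ≤ j ∧ a ≤ j := ⟨max i a, le_max_left _ _, le_max_right _ _⟩
    have hj : j + 1 ≤ 2 ^ 2 ^ j :=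
      (Nat.lt_two_pow_self (n := j)).trans (Nat.lt_two_pow_self (n := 2 ^ j))
    refine ⟨2 ^ 2 ^ j - 1, by omega, lt_of_lt_of_le ?_ (ratio_ge (j := j) (Nat.sub_add_cancel (by omega)))⟩
    have : (i : ℝ) ≤ j := by exact_mod_cast hij
    linarith
  · have h := div_le_double_tail hC (k := k) (m := k + 1) (by omega) (by omega) (by omega)
    simp only [Nat.add_right_comm k 1] at h
    exact (tail_le (by omega)).trans h
  · have h := div_le_double_tail hC (k := k) (m := k + 1 + 1) (by omega) (by omega) (by omega)
    simp only [Nat.add_right_comm (k + 1) 1] at h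
    have h0 : phiW k ≤ ∑' n, phiW (k + n) :=
      (summable_phiW_add k).le_tsum 0 fun _ _ => phiW_nonneg _
    exact (h0.trans (tail_le (by omega))).trans h
end
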